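/- arXiv:2110.10740 — 3 statements merged into one kernel-verified Lean document; each statement's English description precedes it below -/
import Mathlib

section
/- Let G = (V, E) be a simple connected graph on |V| = N ≥ 3 vertices, and let I(k) denote the number of spanning forests of G with k edges. Then I(N−2)² ≥ (3/2)·(1 + 1/(N−2))·I(N−3)·I(N−1), and equality holds if and only if G is a cycle on N vertices. -/
open scoped Classical BigOperators

noncomputable section

/-- The number of spanning forests with `k` edges of a simple graph `G`:
sets of `k` edges of `G` that contain no cycle. -/
def numForests (V : Type*) [Fintype V] [DecidableEq V] (G : SimpleGraph V) (k : ℕ) : ℕ :=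
  (Finset.univ.filter (fun F : Finset (Sym2 V) =>
    (F : Set (Sym2 V)) ⊆ G.edgeSet ∧ F.card = k ∧ (SimpleGraph.fromEdgeSet (F : Set (Sym2 V))).IsAcyclic)).card

open Matrix in
lemma gm_spectral {ι : Type*} [Fintype ι] [DecidableEq ι] (A : Matrix ι ι ℝ)
    (hs : A.IsSymm) (h0 : ∀ i j, 0 ≤ A i j)
    (hconn : ∀ f : ι → ℝ, (∀ i j, 0 < A i j → f i = f j) →
      ∀ i j, 0 < (A *ᵥ 1) i → 0 < (A *ᵥ 1) j → f i = f j)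
    (hq : ∀ y, y ⬝ᵥ A *ᵥ y ≤ ∑ i, ((A *ᵥ y) i) ^ 2 / (A *ᵥ 1) i)
    (z : ι → ℝ) (hz : (A *ᵥ 1) ⬝ᵥ z = 0) : z ⬝ᵥ A *ᵥ z ≤ 0 := by
  set d : ι → ℝ := A *ᵥ 1 with hd
  have hdi : ∀ i, d i = ∑ j, A i j := fun i => by simp [hd, mulVec, dotProduct]
  have hd0 : ∀ i, 0 ≤ d i := fun i => by rw [hdi]; exact Finset.sum_nonneg fun j _ => h0 i j
  have hAz : ∀ i j, d i = 0 → A i j = 0 := fun i j h => by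
    rw [hdi, Finset.sum_eq_zero_iff_of_nonneg (fun j _ => h0 i j)] at h
    exact h j (Finset.mem_univ _)
  have hAs : ∀ i j, A i j = A j i := fun i j => hs.apply j i
  set s : ι → ℝ := fun i => √(d i) with hsdef
  have hss : ∀ i, s i * s i = d i := fun i => Real.mul_self_sqrt (hd0 i)
  have hs0 : ∀ i, d i ≠ 0 → s i ≠ 0 := fun i h h' => h (by rw [← hss, h', zero_mul])
  set X : Matrix ι ι ℝ := Matrix.of fun i j => A i j / (s i * s j) with hX
  have hXs : X.IsHermitian := by
    ext i j
    simp [hX, hAs i j, mul_comm]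
  have hT := Matrix.isSymmetric_toEuclideanLin_iff.mpr hXs
  set T := X.toEuclideanLin with hTdef
  have hTa : ∀ (v : EuclideanSpace ℝ ι) i, (T v) i = ∑ j, X i j * v j := fun v i => by
    simp [hTdef, Matrix.toLpLin_apply, mulVec, dotProduct]
  set n := Module.finrank ℝ (EuclideanSpace ℝ ι) with hn
  set B := hT.eigenvectorBasis rfl with hB
  -- key
  have key : ∀ k, 0 < hT.eigenvalues rfl k → ∑ i, B k i * (s i * z i) = 0 := by
    intro k hk
    set l := hT.eigenvalues rfl k with hl
    set u := B k with hu
    have hTu : ∀ i, ∑ j, X i j * u j = l * u i := fun i => by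
      rw [← hTa, hu, hB, hT.apply_eigenvectorBasis]
      simp [hl]
    have hu0 : ∀ i, d i = 0 → u i = 0 := fun i h => by
      have := hTu i
      simp only [hX, Matrix.of_apply, hAz i _ h, zero_div, zero_mul, Finset.sum_const_zero] at this
      rcases mul_eq_zero.mp this.symm with h | h
      · exact absurd h hk.ne'
      · exact h
    have hunorm : ∑ i, u i ^ 2 = 1 := by
      have : ‖u‖ = 1 := B.orthonormal.1 k
      rw [EuclideanSpace.norm_eq] at this
      have h2 : (√(∑ i, ‖u i‖ ^ 2)) ^ 2 = 1 := by rw [this]; norm_num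
      rw [Real.sq_sqrt (by positivity)] at h2
      simpa using h2
    set y : ι → ℝ := fun i => u i / s i with hy
    have hAy : ∀ i, (A *ᵥ y) i = s i * (l * u i) := fun i => by
      rw [← hTu i]
      simp only [mulVec, dotProduct, hy, hX, Matrix.of_apply, Finset.mul_sum]
      refine Finset.sum_congr rfl fun j _ => ?_
      by_cases h : d i = 0
      · simp [hAz i j h]
      · have := hs0 i h
        by_cases h' : s j = 0
        · simp [h']
        · field_simp
    have hsy : ∀ i, s i * y i = u i := fun i => by
      by_cases h : d i = 0
      · simp [hy, hu0 i h]
      · have := hs0 i h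
        simp only [hy]; field_simp
    have hyAy : y ⬝ᵥ A *ᵥ y = l := by
      have : l = ∑ i, l * u i ^ 2 := by rw [← Finset.mul_sum, hunorm, mul_one]
      rw [this]
      simp only [dotProduct, hAy]
      refine Finset.sum_congr rfl fun i _ => ?_
      have := hsy i
      linear_combination (l * u i) * this
    have hr : ∑ i, ((A *ᵥ y) i) ^ 2 / d i = l ^ 2 := by
      rw [← mul_one (l ^ 2), ← hunorm, Finset.mul_sum]
      refine Finset.sum_congr rfl fun i _ => ?_
      rw [hAy]
      by_cases h : d i = 0
      · simp [hu0 i h]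
      · rw [← hss]
        have := hs0 i h
        field_simp
    have h1 : 1 ≤ l := by
      have := hq y
      rw [hyAy, hr] at this
      nlinarith
    have hlap : ∑ i, ∑ j, A i j * (y i - y j) ^ 2 = 2 * 1 - 2 * l := by
      have e1 : ∑ i, ∑ j, A i j * y i ^ 2 = 1 := by
        rw [← hunorm]
        refine Finset.sum_congr rfl fun i _ => ?_
        rw [← Finset.sum_mul, ← hdi, ← hss, ← hsy]; ring
      have e2 : ∑ i, ∑ j, A i j * y j ^ 2 = 1 := by
        rw [Finset.sum_comm, ← e1]
        refine Finset.sum_congr rfl fun i _ => Finset.sum_congr rfl fun j _ => ?_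
        rw [hAs]
      have e3 : ∑ i, ∑ j, y i * (A i j * y j) = l := by
        rw [← hyAy]
        simp only [dotProduct, mulVec, Finset.mul_sum]
      calc _ = ∑ i, ∑ j, A i j * y i ^ 2 + ∑ i, ∑ j, A i j * y j ^ 2
            - 2 * ∑ i, ∑ j, y i * (A i j * y j) := by
            rw [Finset.mul_sum, ← Finset.sum_add_distrib, ← Finset.sum_sub_distrib]
            refine Finset.sum_congr rfl fun i _ => ?_
            rw [Finset.mul_sum, ← Finset.sum_add_distrib, ← Finset.sum_sub_distrib]
            refine Finset.sum_congr rfl fun j _ => ?_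
            ring
        _ = _ := by rw [e1, e2, e3]; ring
    have hnn : ∀ i j, 0 ≤ A i j * (y i - y j) ^ 2 := fun i j => mul_nonneg (h0 i j) (sq_nonneg _)
    have hz0 : ∑ i, ∑ j, A i j * (y i - y j) ^ 2 = 0 :=
      le_antisymm (by rw [hlap]; linarith)
        (Finset.sum_nonneg fun i _ => Finset.sum_nonneg fun j _ => hnn i j)
    have hyc : ∀ i j, 0 < A i j → y i = y j := fun i j hij => by
      rw [Finset.sum_eq_zero_iff_of_nonneg
        (fun i _ => Finset.sum_nonneg fun j _ => hnn i j)] at hz0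
      have h2 := hz0 i (Finset.mem_univ _)
      rw [Finset.sum_eq_zero_iff_of_nonneg (fun j _ => hnn i j)] at h2
      have h3 := h2 j (Finset.mem_univ _)
      rcases mul_eq_zero.mp h3 with h | h
      · exact absurd h hij.ne'
      · have := pow_eq_zero_iff (two_ne_zero) |>.mp h
        linarith
    have hyc' := hconn y hyc
    by_cases hex : ∃ i0, 0 < d i0
    · obtain ⟨i0, hi0⟩ := hex
      have : ∑ i, u i * (s i * z i) = y i0 * ((d) ⬝ᵥ z) := by
        simp only [dotProduct, Finset.mul_sum]
        refine Finset.sum_congr rfl fun i _ => ?_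
        rcases (hd0 i).eq_or_lt with h | h
        · simp [← h, hu0 i h.symm]
        · rw [hyc' i0 i hi0 h, ← hsy i, ← hss i]; ring
      rw [this, hz, mul_zero]
    · refine Finset.sum_eq_zero fun i _ => ?_
      have : d i = 0 := le_antisymm (not_lt.mp fun h => hex ⟨i, h⟩) (hd0 i)
      rw [hu0 i this, zero_mul]
  let w : EuclideanSpace ℝ ι := WithLp.toLp 2 (fun i => s i * z i)
  have hw : ∀ i, w i = s i * z i := fun i => rfl
  have e1 : z ⬝ᵥ A *ᵥ z = inner ℝ w (T w) := by
    simp only [PiLp.inner_apply, RCLike.inner_apply, conj_trivial, dotProduct, mulVec]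
    refine Finset.sum_congr rfl fun i _ => ?_
    rw [hTa, Finset.mul_sum, Finset.sum_mul]
    refine Finset.sum_congr rfl fun j _ => ?_
    simp only [hw, hX, Matrix.of_apply]
    by_cases h : d i = 0
    · simp [hAz i j h]
    · by_cases h' : d j = 0
      · rw [hAs i j]; simp [hAz j i h']
      · have := hs0 i h
        have := hs0 j h'
        field_simp
  rw [e1, ← B.sum_inner_mul_inner]
  refine Finset.sum_nonpos fun k _ => ?_
  have e2 : inner ℝ (B k) (T w) = hT.eigenvalues rfl k * inner ℝ w (B k) := by
    rw [← hT (B k) w, hB, hT.apply_eigenvectorBasis, real_inner_comm, inner_smul_right]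
    simp
  rw [e2]
  by_cases hk : 0 < hT.eigenvalues rfl k
  · have : inner ℝ w (B k) = 0 := by
      rw [← key k hk]
      simp [PiLp.inner_apply, hw]
    rw [this]; simp
  · have := mul_self_nonneg (inner ℝ w (B k))
    nlinarith

open Matrix in
lemma gm_range {ι : Type*} [Fintype ι] [DecidableEq ι] (A : Matrix ι ι ℝ)
    (hs : A.IsSymm) (b : ι → ℝ) (hb : ∀ v, A *ᵥ v = 0 → b ⬝ᵥ v = 0) :
    ∃ v, A *ᵥ v = b := by
  have hh : A.IsHermitian := by
    ext i j
    simpa using (hs.apply i j)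
  have hT := Matrix.isSymmetric_toEuclideanLin_iff.mpr hh
  set T := A.toEuclideanLin with hTdef
  have h1 := hT.orthogonal_range
  have hmem : (WithLp.toLp 2 b : EuclideanSpace ℝ ι) ∈ T.range := by
    rw [← Submodule.orthogonal_orthogonal T.range, h1, Submodule.mem_orthogonal]
    intro u hu
    have h2 : A *ᵥ (WithLp.ofLp u) = 0 := by
      have : T u = 0 := hu
      rw [hTdef, Matrix.toLpLin_apply] at this
      simpa using this
    have := hb _ h2
    simpa [PiLp.inner_apply, dotProduct] using this
  obtain ⟨v, hv⟩ := hmem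
  refine ⟨WithLp.ofLp v, ?_⟩
  rw [hTdef, Matrix.toLpLin_apply] at hv
  have := congrArg WithLp.ofLp hv
  simpa using this

/-- the bordered quadratic form -/
def gmQ {ι : Type*} [Fintype ι] (h : ℝ) (b : ι → ℝ) (A : Matrix ι ι ℝ) (t : ℝ) (y : ι → ℝ) : ℝ :=
  h * t ^ 2 + 2 * t * (b ⬝ᵥ y) + y ⬝ᵥ Matrix.mulVec A y

/-- pairing with the all ones vector -/
def gmL {ι : Type*} [Fintype ι] (b : ι → ℝ) (A : Matrix ι ι ℝ) (t : ℝ) (y : ι → ℝ) : ℝ :=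
  t * ∑ i, b i + Matrix.mulVec A 1 ⬝ᵥ y

open Matrix in
lemma gm_symm_dot {ι : Type*} [Fintype ι] (A : Matrix ι ι ℝ) (hs : A.IsSymm) (x y : ι → ℝ) :
    x ⬝ᵥ A *ᵥ y = y ⬝ᵥ A *ᵥ x := by
  rw [dotProduct_mulVec, ← mulVec_transpose, hs.eq, dotProduct_comm]

open Matrix in
lemma gm_step {ι : Type*} [Fintype ι] [DecidableEq ι] (h : ℝ) (b : ι → ℝ) (A : Matrix ι ι ℝ)
    (hs : A.IsSymm) (h0 : ∀ i j, 0 ≤ A i j)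
    (hconn : ∀ f : ι → ℝ, (∀ i j, 0 < A i j → f i = f j) →
      ∀ i j, 0 < (A *ᵥ 1) i → 0 < (A *ᵥ 1) j → f i = f j)
    (hq : ∀ t y, gmQ h b A t y ≤ ∑ i, (t * b i + (A *ᵥ y) i) ^ 2 / (A *ᵥ 1) i)
    (t : ℝ) (y : ι → ℝ) :
    gmQ h b A t y * (∑ i, (A *ᵥ 1) i) ≤ gmL b A t y ^ 2 := by
  have hsp := gm_spectral A hs h0 hconn (fun y => by simpa [gmQ] using hq 0 y)
  have hb : ∀ v, A *ᵥ v = 0 → b ⬝ᵥ v = 0 := by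
    intro v hv
    by_contra hne
    set C := ∑ i, (1 * b i + (0 : ι → ℝ) i) ^ 2 / (A *ᵥ 1) i with hC
    have := hq 1 (((C - h + 1) / (2 * (b ⬝ᵥ v))) • v)
    rw [mulVec_smul, hv, smul_zero, ← hC] at this
    simp only [gmQ, mulVec_smul, hv, smul_zero, dotProduct_zero, dotProduct_smul,
      smul_eq_mul] at this
    field_simp at this
    linarith
  obtain ⟨v, hv⟩ := gm_range A hs b hb
  have hh : h ≤ v ⬝ᵥ A *ᵥ v := by
    have := hq 1 (-v)
    simp only [gmQ, mulVec_neg, hv, Pi.neg_apply, one_mul, add_neg_cancel] at this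
    simp [dotProduct_comm b v] at this
    rw [hv]; linarith
  set z := y + t • v with hz
  set p := ∑ i, (A *ᵥ 1) i with hp
  have hp1 : (1 : ι → ℝ) ⬝ᵥ A *ᵥ 1 = p := by simp [hp, dotProduct]
  have hp0 : 0 ≤ p := Finset.sum_nonneg fun i _ => by
    simp only [mulVec, dotProduct]; exact Finset.sum_nonneg fun j _ => by simpa using h0 i j
  have e1 : gmQ h b A t y ≤ z ⬝ᵥ A *ᵥ z := by
    have : z ⬝ᵥ A *ᵥ z = y ⬝ᵥ A *ᵥ y + 2 * t * (b ⬝ᵥ y) + t ^ 2 * (v ⬝ᵥ A *ᵥ v) := by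
      simp only [hz, mulVec_add, mulVec_smul, dotProduct_add, add_dotProduct, smul_dotProduct,
        dotProduct_smul, smul_eq_mul]
      rw [gm_symm_dot A hs v y, hv, dotProduct_comm y b]; ring
    rw [this, gmQ]
    nlinarith [mul_le_mul_of_nonneg_right hh (sq_nonneg t)]
  have e2 : gmL b A t y = A *ᵥ 1 ⬝ᵥ z := by
    simp only [hz, dotProduct_add, dotProduct_smul, gmL, smul_eq_mul]
    rw [dotProduct_comm _ v, gm_symm_dot A hs v 1, hv]
    simp [dotProduct]; ring
  refine (mul_le_mul_of_nonneg_right e1 hp0).trans ?_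
  rw [e2]
  rcases hp0.eq_or_lt with hp' | hp'
  · rw [← hp', mul_zero]; positivity
  · set l := A *ᵥ 1 ⬝ᵥ z with hl
    have hl' : (1 : ι → ℝ) ⬝ᵥ A *ᵥ z = l := by rw [gm_symm_dot A hs, dotProduct_comm]
    have hl'' : z ⬝ᵥ A *ᵥ 1 = l := by rw [dotProduct_comm]
    have := hsp (z - (l / p) • (1 : ι → ℝ)) (by
      simp only [dotProduct_sub, dotProduct_smul, ← hl, smul_eq_mul]
      rw [dotProduct_comm _ 1, hp1]; field_simp; ring)
    simp only [mulVec_sub, mulVec_smul, dotProduct_sub, sub_dotProduct, smul_dotProduct,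
      dotProduct_smul, smul_eq_mul, hl', hl'', hp1] at this
    field_simp at this
    nlinarith

/-- matroid data used in the argument: rank `r`, with rank two contractions having at most
three parallel classes -/
structure GMat {ι : Type*} [Fintype ι] [DecidableEq ι] (Ind : Finset ι → Prop) (r : ℕ) : Prop where
  two_le : 2 ≤ r
  down : ∀ S T, S ⊆ T → Ind T → Ind S
  aug : ∀ S T, Ind S → Ind T → S.card < T.card → ∃ e ∈ T, e ∉ S ∧ Ind (insert e S)
  basis : ∃ B, Ind B ∧ B.card = r
  tri : ∀ S, Ind S → S.card + 2 = r → ∃ c : ι → Fin 3, ∀ i j, i ∉ S → j ∉ S → i ≠ j →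
    Ind (insert i S) → Ind (insert j S) → (Ind (insert i (insert j S)) ↔ c i ≠ c j)

section GM

variable {ι : Type*} [Fintype ι] [DecidableEq ι] (Ind : Finset ι → Prop) (r : ℕ)

/-- number of independent `k`-sets containing `T` -/
def gmN (k : ℕ) (T : Finset ι) : ℝ :=
  ((Finset.univ.filter (fun B : Finset ι => Ind B ∧ B.card = k ∧ T ⊆ B)).card : ℝ)

def gmh (S : Finset ι) : ℝ := 3 / 2 * gmN Ind (r - 2) S

def gmb (S : Finset ι) (i : ι) : ℝ := if i ∈ S then 0 else gmN Ind (r - 1) (insert i S)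

def gmA (S : Finset ι) : Matrix ι ι ℝ := Matrix.of fun i j =>
  if i ∈ S ∨ j ∈ S ∨ i = j then 0 else gmN Ind r (insert i (insert j S))

lemma gmN_nonneg (k : ℕ) (T : Finset ι) : 0 ≤ gmN Ind k T := by simp [gmN]

lemma gmN_count (k : ℕ) (S : Finset ι) :
    ∑ i, (if i ∈ S then 0 else gmN Ind k (insert i S)) = ((k : ℝ) - S.card) * gmN Ind k S := by
  set P := Finset.univ.filter (fun B : Finset ι => Ind B ∧ B.card = k ∧ S ⊆ B) with hP
  have h1 : ∀ i, (if i ∈ S then 0 else gmN Ind k (insert i S)) =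
      ∑ B ∈ P, if i ∈ B \ S then (1 : ℝ) else 0 := by
    intro i
    split_ifs with hi
    · simp [hi]
    · rw [Finset.sum_boole, hP, Finset.filter_filter]
      refine congrArg Nat.cast (congrArg Finset.card ?_)
      ext B
      simp only [Finset.mem_filter, Finset.mem_univ, true_and, Finset.insert_subset_iff,
        Finset.mem_sdiff]
      tauto
  simp_rw [h1]
  rw [Finset.sum_comm]
  have h2 : ∀ B ∈ P, ∑ i, (if i ∈ B \ S then (1 : ℝ) else 0) = (k : ℝ) - S.card := by
    intro B hB
    simp only [hP, Finset.mem_filter, Finset.mem_univ, true_and] at hB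
    rw [Finset.sum_boole, Finset.filter_mem_eq_inter, Finset.univ_inter,
      Finset.card_sdiff_of_subset hB.2.2, Nat.cast_sub (Finset.card_le_card hB.2.2), hB.2.1]
  rw [Finset.sum_congr rfl h2, Finset.sum_const, nsmul_eq_mul, mul_comm]
  rfl

lemma gmN_zero (hd : ∀ S T : Finset ι, S ⊆ T → Ind T → Ind S) (k : ℕ) (T : Finset ι)
    (h : ¬ Ind T) : gmN Ind k T = 0 := by
  simp only [gmN, Nat.cast_eq_zero, Finset.card_eq_zero, Finset.filter_eq_empty_iff]
  rintro B - ⟨h1, -, h2⟩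
  exact h (hd _ _ h2 h1)

lemma gmN_self (T : Finset ι) : gmN Ind T.card T = if Ind T then 1 else 0 := by
  have : Finset.univ.filter (fun B : Finset ι => Ind B ∧ B.card = T.card ∧ T ⊆ B) =
      if Ind T then {T} else ∅ := by
    ext B
    split_ifs with h
    · simp only [Finset.mem_filter, Finset.mem_univ, true_and, Finset.mem_singleton]
      constructor
      · rintro ⟨-, h1, h2⟩
        exact (Finset.eq_of_subset_of_card_le h2 h1.le).symm
      · rintro rfl; exact ⟨h, rfl, subset_rfl⟩
    · simp only [Finset.mem_filter, Finset.mem_univ, true_and, Finset.notMem_empty, iff_false]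
      rintro ⟨h0, h1, h2⟩
      exact h (by rwa [Finset.eq_of_subset_of_card_le h2 h1.le])
  rw [gmN, this]
  split_ifs <;> simp

variable {Ind r}

lemma GMat.extend (M : GMat Ind r) (S : Finset ι) (hS : Ind S) (n : ℕ) (hn : S.card ≤ n)
    (hr : n ≤ r) : ∃ B, S ⊆ B ∧ Ind B ∧ B.card = n := by
  induction n, hn using Nat.le_induction with
  | base => exact ⟨S, subset_rfl, hS, rfl⟩
  | succ n hn ih =>
    obtain ⟨B, h1, h2, h3⟩ := ih (by omega)
    obtain ⟨C, hC, hCr⟩ := M.basis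
    obtain ⟨e, -, he, hi⟩ := M.aug B C h2 hC (by omega)
    exact ⟨insert e B, h1.trans (Finset.subset_insert _ _), hi, by
      rw [Finset.card_insert_of_notMem he, h3]⟩

lemma GMat.N_pos (M : GMat Ind r) (S : Finset ι) (hS : Ind S) (n : ℕ) (hn : S.card ≤ n)
    (hr : n ≤ r) : 0 < gmN Ind n S := by
  obtain ⟨B, h1, h2, h3⟩ := M.extend S hS n hn hr
  simp only [gmN, Nat.cast_pos, Finset.card_pos]
  exact ⟨B, by simp [h1, h2, h3]⟩

open Matrix

lemma gmA_symm (S : Finset ι) : (gmA Ind r S).IsSymm := by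
  ext i j
  simp only [gmA, transpose_apply, of_apply, Finset.insert_comm j i]
  congr 1
  simp only [eq_iff_iff]
  constructor <;> (rintro (h | h | h) <;> simp [h])

lemma gmA_nonneg (S : Finset ι) (i j : ι) : 0 ≤ gmA Ind r S i j := by
  simp only [gmA, of_apply]
  split_ifs
  · exact le_rfl
  · exact gmN_nonneg _ _ _

lemma gmA_row (S : Finset ι) (i : ι) : (gmA Ind r S *ᵥ 1) i =
    if i ∈ S then 0 else ((r : ℝ) - (S.card + 1)) * gmN Ind r (insert i S) := by
  have e : (gmA Ind r S *ᵥ 1) i = ∑ j, gmA Ind r S i j := by simp [mulVec, dotProduct]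
  rw [e]
  split_ifs with hi
  · simp [gmA, hi]
  · have := gmN_count Ind r (insert i S)
    rw [Finset.card_insert_of_notMem hi] at this
    push_cast at this
    rw [← this]
    refine Finset.sum_congr rfl fun j _ => ?_
    simp only [gmA, of_apply, hi, false_or, Finset.mem_insert, Finset.insert_comm i j,
      eq_comm (a := i) (b := j), or_comm]

lemma gmb_sum (hr : 2 ≤ r) (S : Finset ι) : ∑ i, gmb Ind r S i =
    ((r : ℝ) - 1 - S.card) * gmN Ind (r - 1) S := by
  have := gmN_count Ind (r - 1) S
  rw [Nat.cast_sub (by omega)] at this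
  simpa [gmb] using this

lemma gmA_total (S : Finset ι) : ∑ i, (gmA Ind r S *ᵥ 1) i =
    ((r : ℝ) - (S.card + 1)) * (((r : ℝ) - S.card) * gmN Ind r S) := by
  simp_rw [gmA_row]
  rw [← gmN_count, Finset.mul_sum]
  refine Finset.sum_congr rfl fun j _ => ?_
  split_ifs <;> simp

/-- sum of the contracted values -/
lemma gmh_sum (hr : 2 ≤ r) (S : Finset ι) :
    ∑ i, (if i ∈ S then 0 else gmh Ind r (insert i S)) =
    ((r : ℝ) - 2 - S.card) * gmh Ind r S := by
  have := gmN_count Ind (r - 2) S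
  rw [Nat.cast_sub (by omega)] at this
  push_cast at this
  simp only [gmh]
  rw [mul_left_comm, ← this, Finset.mul_sum]
  refine Finset.sum_congr rfl fun j _ => ?_
  split_ifs <;> simp

lemma gmb_sum' (hr : 2 ≤ r) (S : Finset ι) (j : ι) :
    ∑ i, (if i ∈ S then 0 else gmb Ind r (insert i S) j) =
    ((r : ℝ) - 2 - S.card) * gmb Ind r S j := by
  by_cases hj : j ∈ S
  · simp [gmb, hj]
  · have := gmN_count Ind (r - 1) (insert j S)
    rw [Nat.cast_sub (by omega), Finset.card_insert_of_notMem hj] at this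
    push_cast at this
    simp only [gmb, hj, if_false]
    rw [show (r : ℝ) - 2 - S.card = r - 1 - (S.card + 1) by ring, ← this]
    refine Finset.sum_congr rfl fun i _ => ?_
    rw [Finset.insert_comm i j]
    by_cases h1 : i ∈ S <;> by_cases h2 : i = j <;> simp [h1, h2, hj, eq_comm (a := j)]

lemma gmA_sum' (S : Finset ι) (j k : ι) :
    ∑ i, (if i ∈ S then 0 else gmA Ind r (insert i S) j k) =
    ((r : ℝ) - 2 - S.card) * gmA Ind r S j k := by
  by_cases hj : j ∈ S ∨ k ∈ S ∨ j = k
  · have : ∀ i, gmA Ind r (insert i S) j k = 0 := fun i => by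
      simp only [gmA, of_apply, Finset.mem_insert]
      rw [if_pos (by tauto)]
    simp [this]
    right
    simp [gmA, hj]
  · push Not at hj
    have := gmN_count Ind r (insert j (insert k S))
    rw [Finset.card_insert_of_notMem (by simp [hj]), Finset.card_insert_of_notMem hj.2.1] at this
    push_cast at this
    simp only [gmA, hj, or_self, if_false, of_apply]
    rw [show (r : ℝ) - 2 - S.card = r - (S.card + 1 + 1) by ring, ← this]
    refine Finset.sum_congr rfl fun i _ => ?_
    rw [Finset.insert_comm i j, Finset.insert_comm i k]
    by_cases h1 : i ∈ S <;> by_cases h2 : i = j <;> by_cases h3 : i = k <;>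
      simp [h1, h2, h3, hj, eq_comm (a := j), eq_comm (a := k)]

lemma gmA_contr (S : Finset ι) (i : ι) (hi : i ∉ S) :
    gmA Ind r (insert i S) *ᵥ 1 = fun k => ((r : ℝ) - 2 - S.card) * gmA Ind r S i k := by
  ext k
  rw [gmA_row, Finset.card_insert_of_notMem hi]
  simp only [gmA, of_apply, Finset.mem_insert, hi, false_or]
  rw [Finset.insert_comm i k]
  by_cases h1 : k ∈ S <;> by_cases h2 : k = i <;> simp [h1, h2, hi, eq_comm (a := i)]
  left; ring

lemma gmb_contr (hr : 2 ≤ r) (S : Finset ι) (i : ι) (hi : i ∉ S) :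
    ∑ j, gmb Ind r (insert i S) j = ((r : ℝ) - 2 - S.card) * gmb Ind r S i := by
  rw [gmb_sum hr, Finset.card_insert_of_notMem hi]
  simp only [gmb, hi, if_false]
  push_cast; ring

/-- quadratic form of S -/
abbrev gmQS (Ind : Finset ι → Prop) (r : ℕ) (S : Finset ι) (t : ℝ) (y : ι → ℝ) : ℝ :=
  gmQ (gmh Ind r S) (gmb Ind r S) (gmA Ind r S) t y

abbrev gmLS (Ind : Finset ι → Prop) (r : ℕ) (S : Finset ι) (t : ℝ) (y : ι → ℝ) : ℝ :=
  gmL (gmb Ind r S) (gmA Ind r S) t y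

lemma gmQS_sum (hr : 2 ≤ r) (S : Finset ι) (t : ℝ) (y : ι → ℝ) :
    ∑ i, (if i ∈ S then 0 else gmQS Ind r (insert i S) t y) =
    ((r : ℝ) - 2 - S.card) * gmQS Ind r S t y := by
  set κ := (r : ℝ) - 2 - S.card
  have e1 : ∀ i, (if i ∈ S then 0 else gmQS Ind r (insert i S) t y) =
      (if i ∈ S then 0 else gmh Ind r (insert i S)) * t ^ 2 +
      2 * t * ∑ j, (if i ∈ S then 0 else gmb Ind r (insert i S) j) * y j +
      ∑ j, ∑ k, y j * ((if i ∈ S then 0 else gmA Ind r (insert i S) j k) * y k) := fun i => by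
    split_ifs
    · simp
    · simp only [gmQS, gmQ, dotProduct, mulVec, Finset.mul_sum]
  simp_rw [e1]
  rw [Finset.sum_add_distrib, Finset.sum_add_distrib, ← Finset.sum_mul, gmh_sum hr,
    ← Finset.mul_sum, Finset.sum_comm]
  have e2 : ∑ j, ∑ i, (if i ∈ S then 0 else gmb Ind r (insert i S) j) * y j =
      κ * (gmb Ind r S ⬝ᵥ y) := by
    simp only [dotProduct, Finset.mul_sum]
    refine Finset.sum_congr rfl fun j _ => ?_
    rw [← Finset.sum_mul, gmb_sum' hr]; ring
  have e3 : ∑ i, ∑ j, ∑ k, y j * ((if i ∈ S then 0 else gmA Ind r (insert i S) j k) * y k) =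
      κ * (y ⬝ᵥ gmA Ind r S *ᵥ y) := by
    simp only [dotProduct, mulVec, Finset.mul_sum]
    rw [Finset.sum_comm]
    refine Finset.sum_congr rfl fun j _ => ?_
    rw [Finset.sum_comm]
    refine Finset.sum_congr rfl fun k _ => ?_
    rw [← Finset.mul_sum, ← Finset.sum_mul, gmA_sum']; ring
  rw [e2, e3]
  simp only [gmQS, gmQ]; ring

lemma gmLS_contr (hr : 2 ≤ r) (S : Finset ι) (i : ι) (hi : i ∉ S) (t : ℝ) (y : ι → ℝ) :
    gmLS Ind r (insert i S) t y =
      ((r : ℝ) - 2 - S.card) * (t * gmb Ind r S i + (gmA Ind r S *ᵥ y) i) := by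
  simp only [gmLS, gmL]
  rw [gmb_contr hr S i hi, gmA_contr S i hi]
  simp only [dotProduct, mulVec, mul_add, Finset.mul_sum]
  congr 1
  · ring
  · exact Finset.sum_congr rfl fun j _ => by ring

lemma gmP_contr (S : Finset ι) (i : ι) (hi : i ∉ S) :
    ∑ j, (gmA Ind r (insert i S) *ᵥ 1) j =
      ((r : ℝ) - 2 - S.card) * (gmA Ind r S *ᵥ 1) i := by
  rw [gmA_contr S i hi, ← Finset.mul_sum]
  simp [mulVec, dotProduct]

lemma gmQS_zero (M : GMat Ind r) (S : Finset ι) (hS : ¬ Ind S) (t : ℝ) (y : ι → ℝ) :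
    gmQS Ind r S t y = 0 := by
  have h1 : gmh Ind r S = 0 := by simp [gmh, gmN_zero Ind M.down _ S hS]
  have hins : ∀ T, S ⊆ T → ∀ k, gmN Ind k T = 0 := fun T hT k =>
    gmN_zero Ind M.down k T fun h => hS (M.down _ _ hT h)
  have h2 : gmb Ind r S = 0 := by
    ext i; simp [gmb, hins _ (Finset.subset_insert i S)]
  have h3 : gmA Ind r S = 0 := by
    ext i j
    simp [gmA, hins _ ((Finset.subset_insert j S).trans (Finset.subset_insert i _))]
  simp [gmQS, gmQ, h1, h2, h3]

lemma gm_conn (M : GMat Ind r) (S : Finset ι) (hc : S.card + 3 ≤ r) (f : ι → ℝ)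
    (hf : ∀ i j, 0 < gmA Ind r S i j → f i = f j) (i j : ι)
    (hi : 0 < (gmA Ind r S *ᵥ 1) i) (hj : 0 < (gmA Ind r S *ᵥ 1) j) : f i = f j := by
  have aux : ∀ i, 0 < (gmA Ind r S *ᵥ 1) i → i ∉ S ∧ Ind (insert i S) := by
    intro i hi
    rw [gmA_row] at hi
    split_ifs at hi with h
    · exact absurd hi (lt_irrefl _)
    · refine ⟨h, by_contra fun h' => ?_⟩
      rw [gmN_zero Ind M.down _ _ h', mul_zero] at hi
      exact lt_irrefl _ hi
  have adj : ∀ i j, i ∉ S → j ∉ S → i ≠ j → Ind (insert i (insert j S)) → f i = f j := by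
    intro i j h1 h2 h3 h4
    refine hf i j ?_
    simp only [gmA, of_apply, h1, h2, h3, or_self, if_false]
    refine M.N_pos _ h4 r ?_ le_rfl
    rw [Finset.card_insert_of_notMem (by simp [h1, h3]), Finset.card_insert_of_notMem h2]
    omega
  obtain ⟨hiS, hiI⟩ := aux i hi
  obtain ⟨hjS, hjI⟩ := aux j hj
  by_cases hij : i = j
  · rw [hij]
  by_cases hI : Ind (insert i (insert j S))
  · exact adj i j hiS hjS hij hI
  · obtain ⟨B, hB1, hB2, hB3⟩ := M.extend _ hiI (S.card + 2)
      (by rw [Finset.card_insert_of_notMem hiS]; omega) (by omega)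
    obtain ⟨e, heB, he, heI⟩ := M.aug _ _ hjI hB2
      (by rw [Finset.card_insert_of_notMem hjS]; omega)
    simp only [Finset.mem_insert, not_or] at he
    have hei : e ≠ i := by rintro rfl; exact hI heI
    have h1 : Ind (insert e (insert i S)) :=
      M.down _ _ (Finset.insert_subset heB hB1) hB2
    rw [← adj e i he.2 hiS hei h1, ← adj e j he.2 hjS he.1 heI]

/-- class sums -/
lemma gm_base_form (M : GMat Ind r) (S : Finset ι) (hS : Ind S) (hc : S.card + 2 = r)
    (c : ι → Fin 3) (hcl : ∀ i j, i ∉ S → j ∉ S → i ≠ j →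
    Ind (insert i S) → Ind (insert j S) → (Ind (insert i (insert j S)) ↔ c i ≠ c j))
    (Y : (ι → ℝ) → Fin 3 → ℝ)
    (hY : ∀ y k, Y y k = ∑ i, if i ∉ S ∧ Ind (insert i S) ∧ c i = k then y i else 0) :
    gmh Ind r S = 3 / 2 ∧ (∀ y, gmb Ind r S ⬝ᵥ y = Y y 0 + Y y 1 + Y y 2) ∧
    (∀ y z, y ⬝ᵥ gmA Ind r S *ᵥ z = (Y y 0 + Y y 1 + Y y 2) * (Y z 0 + Y z 1 + Y z 2) -
      (Y y 0 * Y z 0 + Y y 1 * Y z 1 + Y y 2 * Y z 2)) := by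
  set n : ι → ℝ := fun i => if i ∉ S ∧ Ind (insert i S) then 1 else 0 with hn
  have hb : ∀ i, gmb Ind r S i = n i := fun i => by
    by_cases h : i ∈ S
    · simp [gmb, hn, h]
    · have := gmN_self Ind (insert i S)
      rw [Finset.card_insert_of_notMem h] at this
      simp only [gmb, hn, h, if_false, not_false_eq_true, true_and]
      rw [← this]; congr 1; omega
  have hA : ∀ i j, gmA Ind r S i j = n i * n j * (if c i = c j then 0 else 1) := fun i j => by
    by_cases h1 : i ∈ S
    · simp [gmA, hn, h1]
    by_cases h2 : j ∈ S
    · simp [gmA, hn, h2]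
    by_cases h3 : i = j
    · simp [gmA, h3]
    have h4 := gmN_self Ind (insert i (insert j S))
    rw [Finset.card_insert_of_notMem (by simp [h1, h3]), Finset.card_insert_of_notMem h2,
      show S.card + 1 + 1 = r by omega] at h4
    simp only [gmA, of_apply, hn, h1, h2, h3, or_self, if_false, not_false_eq_true, true_and, h4]
    by_cases h5 : Ind (insert i S)
    · by_cases h6 : Ind (insert j S)
      · have := hcl i j h1 h2 h3 h5 h6
        by_cases h7 : c i = c j <;> simp_all
      · have : ¬ Ind (insert i (insert j S)) := fun h =>
          h6 (M.down _ _ (Finset.subset_insert _ _) h)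
        simp [this, h6]
    · have : ¬ Ind (insert i (insert j S)) := fun h =>
        h5 (M.down _ _ (Finset.insert_subset_insert _ (Finset.subset_insert _ _)) h)
      simp [this, h5]
  have hY' : ∀ y k, Y y k = ∑ i, n i * (if c i = k then 1 else 0) * y i := fun y k => by
    rw [hY]
    refine Finset.sum_congr rfl fun i _ => ?_
    simp only [hn]
    by_cases h1 : i ∉ S ∧ Ind (insert i S) <;> by_cases h2 : c i = k <;>
      simp [h1, h2]
  have hYs : ∀ y, Y y 0 + Y y 1 + Y y 2 = ∑ i, n i * y i := fun y => by
    simp only [hY', ← Finset.sum_add_distrib]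
    refine Finset.sum_congr rfl fun i _ => ?_
    generalize c i = k
    fin_cases k <;> simp
  refine ⟨?_, ?_, ?_⟩
  · have := gmN_self Ind S
    rw [if_pos hS, show S.card = r - 2 by omega] at this
    simp [gmh, this]
  · intro y
    rw [hYs]
    simp [dotProduct, hb]
  · intro y z
    rw [hYs, hYs]
    have e : y ⬝ᵥ gmA Ind r S *ᵥ z = ∑ i, ∑ j, y i * (gmA Ind r S i j * z j) := by
      simp [dotProduct, mulVec, Finset.mul_sum]
    rw [e]
    simp only [hY', Finset.sum_mul_sum]
    rw [← Finset.sum_add_distrib, ← Finset.sum_add_distrib, ← Finset.sum_sub_distrib]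
    refine Finset.sum_congr rfl fun i _ => ?_
    rw [← Finset.sum_add_distrib, ← Finset.sum_add_distrib, ← Finset.sum_sub_distrib]
    refine Finset.sum_congr rfl fun j _ => ?_
    rw [hA]
    generalize c i = k
    generalize c j = l
    fin_cases k <;> fin_cases l <;> simp <;> ring

lemma gm_three (t a b c x y z : ℝ) (hx : 0 ≤ x) (hy : 0 ≤ y) (hz : 0 ≤ z) :
    (3 / 2 * t ^ 2 + 2 * t * (a + b + c) + ((a + b + c) * (a + b + c) -
      (a * a + b * b + c * c))) * ((x + y + z) * (x + y + z) - (x * x + y * y + z * z)) ≤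
    (t * (x + y + z) + ((x + y + z) * (a + b + c) - (x * a + y * b + z * c))) ^ 2 := by
  rcases (show 0 ≤ x + y + z by positivity).eq_or_lt with hm | hm
  · have h1 : x = 0 := by linarith
    have h2 : y = 0 := by linarith
    have h3 : z = 0 := by linarith
    simp [h1, h2, h3]
  obtain ⟨l, hl⟩ : ∃ l, l = (3 * t + 2 * (a + b + c)) / (2 * (x + y + z)) := ⟨_, rfl⟩
  rw [eq_div_iff (by positivity)] at hl
  obtain ⟨a', ha⟩ : ∃ a', a = a' + l * x := ⟨a - l * x, by ring⟩
  obtain ⟨b', hb⟩ : ∃ a', b = a' + l * y := ⟨b - l * y, by ring⟩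
  obtain ⟨c', hc⟩ : ∃ a', c = a' + l * z := ⟨c - l * z, by ring⟩
  have ht : t = -2 / 3 * (a' + b' + c') := by
    rw [ha, hb, hc] at hl; linarith
  have hq : 0 ≤ 2 * (x * y + y * z + x * z) := by positivity
  have hz' : 0 ≤ (a' * a' + b' * b' + c' * c') - (a' + b' + c') ^ 2 / 3 := by
    nlinarith [sq_nonneg (a' - b'), sq_nonneg (b' - c'), sq_nonneg (a' - c')]
  have hfin := mul_nonneg hz' hq
  have hsq := sq_nonneg (t * (x + y + z) + ((x + y + z) * (a' + b' + c') -
    (x * a' + y * b' + z * c')))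
  subst ha hb hc
  rw [ht] at hsq ⊢
  nlinarith [hfin, hsq]

lemma gm_hyp_base (M : GMat Ind r) (S : Finset ι) (hS : Ind S) (hc : S.card + 2 = r)
    (t : ℝ) (y : ι → ℝ) :
    gmQS Ind r S t y * (∑ i, (gmA Ind r S *ᵥ 1) i) ≤ gmLS Ind r S t y ^ 2 := by
  obtain ⟨c, hcl⟩ := M.tri S hS hc
  set Y : (ι → ℝ) → Fin 3 → ℝ := fun y k =>
    ∑ i, if i ∉ S ∧ Ind (insert i S) ∧ c i = k then y i else 0 with hY
  obtain ⟨h1, h2, h3⟩ := gm_base_form M S hS hc c hcl Y (fun _ _ => rfl)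
  have e1 : ∑ i, (gmA Ind r S *ᵥ 1) i = 1 ⬝ᵥ gmA Ind r S *ᵥ 1 := by simp [dotProduct]
  have e2 : ∑ i, gmb Ind r S i = gmb Ind r S ⬝ᵥ 1 := by simp [dotProduct]
  have e3 : gmA Ind r S *ᵥ 1 ⬝ᵥ y = 1 ⬝ᵥ gmA Ind r S *ᵥ y := by
    rw [dotProduct_comm, gm_symm_dot _ (gmA_symm S)]
  simp only [gmQS, gmLS, gmQ, gmL]
  rw [e1, e2, e3, h1, h2, h2, h3, h3, h3]
  have hp : ∀ k, 0 ≤ Y 1 k := fun k => Finset.sum_nonneg fun i _ => by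
    split_ifs <;> simp
  exact gm_three t _ _ _ _ _ _ (hp 0) (hp 1) (hp 2)

lemma gm_hyp (M : GMat Ind r) (n : ℕ) (S : Finset ι) (hS : Ind S) (hc : S.card + 2 + n = r)
    (t : ℝ) (y : ι → ℝ) :
    gmQS Ind r S t y * (∑ i, (gmA Ind r S *ᵥ 1) i) ≤ gmLS Ind r S t y ^ 2 := by
  induction n generalizing S t y with
  | zero => exact gm_hyp_base M S hS (by omega) t y
  | succ n ih =>
    refine gm_step _ _ _ (gmA_symm S) (gmA_nonneg S)
      (fun f hf i j hi hj => gm_conn M S (by omega) f hf i j hi hj) ?_ t y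
    intro t y
    have hr := M.two_le
    have hκ : 0 < (r : ℝ) - 2 - S.card := by
      have : (r : ℝ) = S.card + 2 + (n + 1) := by rw [← hc]; push_cast; ring
      rw [this]; ring_nf; positivity
    have hsum := gmQS_sum (Ind := Ind) hr S t y
    rw [← mul_le_mul_iff_right₀ hκ, ← hsum, Finset.mul_sum]
    refine Finset.sum_le_sum fun i _ => ?_
    have hd0 : 0 ≤ (gmA Ind r S *ᵥ 1) i := by
      simp only [mulVec, dotProduct]
      exact Finset.sum_nonneg fun j _ => by simpa using gmA_nonneg S i j
    split_ifs with hi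
    · positivity
    by_cases hI : Ind (insert i S)
    · have h1 := ih (insert i S) hI (by rw [Finset.card_insert_of_notMem hi]; omega) t y
      rw [gmLS_contr hr S i hi, gmP_contr S i hi] at h1
      have hd : 0 < (gmA Ind r S *ᵥ 1) i := by
        rw [gmA_row, if_neg hi]
        refine mul_pos (by linarith) (M.N_pos _ hI r ?_ le_rfl)
        rw [Finset.card_insert_of_notMem hi]; omega
      rw [← mul_div_assoc, le_div_iff₀ hd]
      nlinarith
    · rw [gmQS_zero M _ hI]
      positivity

lemma gm_ker (M : GMat Ind r) (S : Finset ι) (hS : Ind S) (hc : S.card + 2 ≤ r)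
    (x : ℝ) (h1 : gmQS Ind r S 1 (fun _ => -x) = 0) (h2 : gmLS Ind r S 1 (fun _ => -x) = 0)
    (i : ι) : gmb Ind r S i + (gmA Ind r S *ᵥ fun _ => -x) i = 0 := by
  set A := gmA Ind r S with hA
  set b := gmb Ind r S with hb
  set h := gmh Ind r S
  have hyp := gm_hyp M (r - (S.card + 2)) S hS (by omega)
  set p := ∑ i, (A *ᵥ 1) i with hp
  have hp0 : 0 < p := by
    rw [hp, hA, gmA_total]
    have h3 : (S.card : ℝ) + 2 ≤ r := by exact_mod_cast hc
    exact mul_pos (by linarith) (mul_pos (by linarith) (M.N_pos S hS r (by omega) le_rfl))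
  -- test vector
  set w : ι → ℝ := fun _ => -x with hw
  set z : ι → ℝ := Pi.single i 1 with hz
  set g := b i + (A *ᵥ w) i with hg
  set l := (A *ᵥ 1) i with hl
  set a := A i i with ha
  have key : ∀ s : ℝ, (2 * s * g + s ^ 2 * a) * p ≤ (s * l) ^ 2 := by
    intro s
    have h3 := hyp 1 (w + s • z)
    have e1 : gmQS Ind r S 1 (w + s • z) = gmQS Ind r S 1 w + (2 * s * g + s ^ 2 * a) := by
      simp only [gmQS, gmQ, mulVec_add, mulVec_smul, dotProduct_add, add_dotProduct,
        smul_dotProduct, dotProduct_smul, smul_eq_mul]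
      rw [gm_symm_dot A (gmA_symm S) w z]
      simp only [hz, dotProduct_single, single_dotProduct, mulVec_single, hg, ha]
      simp
      ring
    have e2 : gmLS Ind r S 1 (w + s • z) = gmLS Ind r S 1 w + s * l := by
      simp only [gmLS, gmL, dotProduct_add, dotProduct_smul, smul_eq_mul]
      rw [hz, dotProduct_single, mul_one]
      ring
    rw [e1, e2, h1, h2, zero_add, zero_add] at h3
    exact h3
  by_contra hne
  -- choose s small with the sign of g
  have hq : ∀ s : ℝ, 2 * s * g * p ≤ s ^ 2 * (l ^ 2 - a * p) := fun s => by
    nlinarith [key s]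
  set C := l ^ 2 - a * p
  have h4 := hq (g * p / (|C| + 1))
  have hC : 0 < |C| + 1 := by positivity
  have h5 : 0 < (g * p) ^ 2 := by positivity
  have h6 : C ≤ |C| := le_abs_self C
  field_simp at h4
  have h7 : 0 < g ^ 2 := by positivity
  nlinarith [mul_pos h7 (show 0 < 2 * (|C| + 1) - C by linarith)]

lemma gm_descend (M : GMat Ind r) (x : ℝ) (h1 : gmQS Ind r ∅ 1 (fun _ => -x) = 0)
    (h2 : gmLS Ind r ∅ 1 (fun _ => -x) = 0) (S : Finset ι) :
    Ind S → S.card + 2 ≤ r →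
    gmQS Ind r S 1 (fun _ => -x) = 0 ∧ gmLS Ind r S 1 (fun _ => -x) = 0 := by
  induction S using Finset.induction_on with
  | empty => exact fun _ _ => ⟨h1, h2⟩
  | insert i S hi ih =>
    intro hI hc
    rw [Finset.card_insert_of_notMem hi] at hc
    have hS : Ind S := M.down _ _ (Finset.subset_insert _ _) hI
    obtain ⟨h3, h4⟩ := ih hS (by omega)
    have hk := gm_ker M S hS (by omega) x h3 h4
    have hL : ∀ j, j ∉ S → gmLS Ind r (insert j S) 1 (fun _ => -x) = 0 := fun j hj => by
      rw [gmLS_contr M.two_le S j hj, one_mul, hk j, mul_zero]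
    refine ⟨?_, hL i hi⟩
    have hle : ∀ j, (if j ∈ S then 0 else gmQS Ind r (insert j S) 1 (fun _ => -x)) ≤ 0 := by
      intro j
      split_ifs with hj
      · exact le_rfl
      by_cases hjI : Ind (insert j S)
      · have h5 := gm_hyp M (r - (S.card + 3)) (insert j S) hjI
          (by rw [Finset.card_insert_of_notMem hj]; omega) 1 (fun _ => -x)
        rw [hL j hj] at h5
        have hp0 : 0 < ∑ k, (gmA Ind r (insert j S) *ᵥ 1) k := by
          rw [gmA_total]
          have hcc := Finset.card_insert_of_notMem hj
          have h6 : ((insert j S).card : ℝ) + 2 ≤ r := by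
            rw [hcc]; push_cast; exact_mod_cast hc
          exact mul_pos (by linarith) (mul_pos (by linarith)
            (M.N_pos _ hjI r (by omega) le_rfl))
        by_contra hcon
        have := mul_pos (not_le.mp hcon) hp0
        linarith
      · rw [gmQS_zero M _ hjI]
    have hsum := gmQS_sum (Ind := Ind) M.two_le S 1 (fun _ => -x)
    rw [h3, mul_zero, Finset.sum_eq_zero_iff_of_nonpos (fun j _ => hle j)] at hsum
    have := hsum i (Finset.mem_univ _)
    rwa [if_neg hi] at this

/-- the main inequality -/
lemma gm_ineq (M : GMat Ind r) (hE0 : Ind ∅) :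
    3 / 2 * r * gmN Ind (r - 2) ∅ * gmN Ind r ∅ ≤ ((r : ℝ) - 1) * gmN Ind (r - 1) ∅ ^ 2 := by
  have h := gm_hyp M (r - 2) ∅ hE0 (by have := M.two_le; simp; omega) 1 0
  have hr : (2 : ℝ) ≤ r := by exact_mod_cast M.two_le
  rw [gmA_total] at h
  simp only [gmQS, gmLS, gmQ, gmL, gmb_sum M.two_le] at h
  simp [gmh] at h
  have h1 : 0 < (r : ℝ) - 1 := by linarith
  nlinarith

lemma gm_sq3 (a b c : ℝ) (h : (a - b) ^ 2 + (b - c) ^ 2 + (a - c) ^ 2 = 0) : a = b ∧ b = c := by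
  have h1 := sq_nonneg (a - b)
  have h2 := sq_nonneg (b - c)
  have h3 := sq_nonneg (a - c)
  have h4 : (a - b) ^ 2 = 0 := by linarith
  have h5 : (b - c) ^ 2 = 0 := by linarith
  rw [sq_eq_zero_iff] at h4 h5
  exact ⟨sub_eq_zero.mp h4, sub_eq_zero.mp h5⟩

lemma gm_eq (M : GMat Ind r) (hE0 : Ind ∅)
    (heq : 3 / 2 * r * gmN Ind (r - 2) ∅ * gmN Ind r ∅ = ((r : ℝ) - 1) * gmN Ind (r - 1) ∅ ^ 2) :
    ∃ a : ℝ, 0 < a ∧ ∀ S, Ind S → S.card + 2 = r → ∀ c : ι → Fin 3,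
    (∀ i j, i ∉ S → j ∉ S → i ≠ j →
    Ind (insert i S) → Ind (insert j S) → (Ind (insert i (insert j S)) ↔ c i ≠ c j)) →
    ∀ k, ((Finset.univ.filter fun i => i ∉ S ∧ Ind (insert i S) ∧ c i = k).card : ℝ) = a := by
  have hr : (2 : ℝ) ≤ r := by exact_mod_cast M.two_le
  have hNr : 0 < gmN Ind r ∅ := M.N_pos ∅ hE0 r (by simp) le_rfl
  have hN1 : 0 < gmN Ind (r - 1) ∅ := M.N_pos ∅ hE0 (r - 1) (by simp) (by omega)
  -- choice of the multiplier
  set x : ℝ := gmN Ind (r - 1) ∅ / (r * gmN Ind r ∅) with hx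
  have hx0 : 0 < x := by positivity
  have hconst : (fun _ : ι => -x) = (-x) • (1 : ι → ℝ) := by ext; simp
  have hq : ∀ S, gmQS Ind r S 1 (fun _ => -x) = gmh Ind r S - 2 * x * ∑ i, gmb Ind r S i +
      x ^ 2 * ∑ i, (gmA Ind r S *ᵥ 1) i := fun S => by
    have e1 : ∑ i, (gmA Ind r S *ᵥ 1) i = 1 ⬝ᵥ gmA Ind r S *ᵥ 1 := by simp [dotProduct]
    have e2 : ∑ i, gmb Ind r S i = gmb Ind r S ⬝ᵥ 1 := by simp [dotProduct]
    rw [e1, e2, hconst]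
    simp only [gmQS, gmQ, mulVec_smul, dotProduct_smul, smul_dotProduct, smul_eq_mul]
    ring
  have hl : ∀ S, gmLS Ind r S 1 (fun _ => -x) = ∑ i, gmb Ind r S i -
      x * ∑ i, (gmA Ind r S *ᵥ 1) i := fun S => by
    have e1 : ∑ i, (gmA Ind r S *ᵥ 1) i = gmA Ind r S *ᵥ 1 ⬝ᵥ 1 := by simp [dotProduct]
    rw [e1, hconst]
    simp only [gmLS, gmL, dotProduct_smul, smul_eq_mul]
    ring
  have hd := gm_descend M x (by
    rw [hq, gmb_sum M.two_le, gmA_total, gmh, hx]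
    simp only [Finset.card_empty, Nat.cast_zero, sub_zero, zero_add]
    field_simp
    linear_combination 2 * heq) (by
    rw [hl, gmb_sum M.two_le, gmA_total, hx]
    simp only [Finset.card_empty, Nat.cast_zero, sub_zero, zero_add]
    field_simp
    ring)
  refine ⟨1 / (2 * x), by positivity, ?_⟩
  intro S hS hc c hcl k
  obtain ⟨h1, h2⟩ := hd S hS hc.le
  set Y : (ι → ℝ) → Fin 3 → ℝ := fun y k =>
    ∑ i, if i ∉ S ∧ Ind (insert i S) ∧ c i = k then y i else 0 with hY
  obtain ⟨g1, g2, g3⟩ := gm_base_form M S hS hc c hcl Y (fun _ _ => rfl)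
  have e1 : ∑ i, (gmA Ind r S *ᵥ 1) i = 1 ⬝ᵥ gmA Ind r S *ᵥ 1 := by simp [dotProduct]
  have e2 : ∑ i, gmb Ind r S i = gmb Ind r S ⬝ᵥ 1 := by simp [dotProduct]
  have e4 : ((Finset.univ.filter fun i => i ∉ S ∧ Ind (insert i S) ∧ c i = k).card : ℝ)
      = Y 1 k := by
    rw [hY]
    simp [Finset.sum_boole]
  rw [hq, e1, e2, g1, g2, g3] at h1
  rw [hl, e1, e2, g2, g3] at h2
  rw [e4]
  have hk : k = 0 ∨ k = 1 ∨ k = 2 := by fin_cases k <;> simp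
  set A0 := Y 1 0
  set A1 := Y 1 1
  set A2 := Y 1 2
  have hm : x * (A0 + A1 + A2) = 3 / 2 := by linear_combination -h1 - x * h2
  have hs : (A0 - A1) ^ 2 + (A1 - A2) ^ 2 + (A0 - A2) ^ 2 = 0 := by
    have : x * ((A0 - A1) ^ 2 + (A1 - A2) ^ 2 + (A0 - A2) ^ 2) = 0 := by
      linear_combination 2 * (A0 + A1 + A2) * hm + 3 * h2
    exact (mul_eq_zero.mp this).resolve_left hx0.ne'
  obtain ⟨t1, t2⟩ := gm_sq3 A0 A1 A2 hs
  have t3 : A0 = 1 / (2 * x) := by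
    rw [eq_div_iff (by positivity)]
    rw [← t2, ← t1] at hm; linarith
  rcases hk with rfl | rfl | rfl
  · exact t3
  · exact t1.symm.trans t3
  · exact (t1.trans t2).symm.trans t3

end GM

section Graph

open SimpleGraph

lemma gf_insert {V : Type*} [DecidableEq V] (F : Finset (Sym2 V)) (u v : V) :
    fromEdgeSet ((insert s(u, v) F : Finset (Sym2 V)) : Set (Sym2 V)) =
      fromEdgeSet (F : Set (Sym2 V)) ⊔ edge u v := by
  rw [Finset.coe_insert, Set.insert_eq, Set.union_comm, fromEdgeSet_union]
  rfl

lemma gf_reach {V : Type*} {H : SimpleGraph V} {u v x y : V} :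
    (H ⊔ edge u v).Reachable x y ↔ H.Reachable x y ∨ (H.Reachable x u ∧ H.Reachable v y) ∨
      (H.Reachable x v ∧ H.Reachable u y) := by
  constructor
  · rintro ⟨p⟩
    induction p with
    | nil => exact Or.inl (Reachable.refl _)
    | @cons a b c hab p ih =>
      rw [sup_adj, edge_adj] at hab
      rcases hab with hab | ⟨⟨rfl, rfl⟩ | ⟨rfl, rfl⟩, hne⟩
      · have := hab.reachable
        rcases ih with h | ⟨h, h'⟩ | ⟨h, h'⟩
        · exact Or.inl (this.trans h)
        · exact Or.inr (Or.inl ⟨this.trans h, h'⟩)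
        · exact Or.inr (Or.inr ⟨this.trans h, h'⟩)
      · rcases ih with h | ⟨h, h'⟩ | ⟨h, h'⟩
        · exact Or.inr (Or.inl ⟨Reachable.refl _, h⟩)
        · exact Or.inr (Or.inl ⟨Reachable.refl _, h'⟩)
        · exact Or.inl h'
      · rcases ih with h | ⟨h, h'⟩ | ⟨h, h'⟩
        · exact Or.inr (Or.inr ⟨Reachable.refl _, h⟩)
        · exact Or.inl h'
        · exact Or.inr (Or.inr ⟨Reachable.refl _, h'⟩)
  · have hle : H ≤ H ⊔ edge u v := le_sup_left
    have huv : (H ⊔ edge u v).Reachable u v := by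
      by_cases h : u = v
      · rw [h]
      · exact Adj.reachable (by rw [sup_adj, edge_adj]; exact Or.inr ⟨Or.inl ⟨rfl, rfl⟩, h⟩)
    rintro (h | ⟨h, h'⟩ | ⟨h, h'⟩)
    · exact h.mono hle
    · exact (h.mono hle).trans (huv.trans (h'.mono hle))
    · exact (h.mono hle).trans (huv.symm.trans (h'.mono hle))

lemma gf_comp {V : Type*} [Fintype V] {H : SimpleGraph V} {u v : V} (h : ¬ H.Reachable u v) :
    Nat.card (H ⊔ edge u v).ConnectedComponent + 1 = Nat.card H.ConnectedComponent := by
  have hle : H ≤ H ⊔ edge u v := le_sup_left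
  have hb : Function.Bijective (fun c : {c : H.ConnectedComponent // c ≠ H.connectedComponentMk u} =>
      c.1.map (Hom.ofLE hle)) := by
    constructor
    · rintro ⟨c, hc⟩ ⟨d, hd⟩ hcd
      induction c using ConnectedComponent.ind with | _ x =>
      induction d using ConnectedComponent.ind with | _ y =>
      simp only [ConnectedComponent.map_mk, ConnectedComponent.eq, ne_eq] at hcd hc hd
      have hcd : (H ⊔ edge u v).Reachable x y := hcd
      rw [Subtype.mk.injEq, ConnectedComponent.eq]
      rcases gf_reach.mp hcd with h1 | ⟨h1, h2⟩ | ⟨h1, h2⟩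
      · exact h1
      · exact absurd h1 hc
      · exact absurd h2.symm hd
    · intro d
      induction d using ConnectedComponent.ind with | _ y =>
      by_cases hy : H.Reachable y u
      · refine ⟨⟨H.connectedComponentMk v, fun h' => h ?_⟩, ?_⟩
        · exact (ConnectedComponent.eq.mp h').symm
        · simp only [ConnectedComponent.map_mk, ConnectedComponent.eq]
          exact gf_reach.mpr (Or.inr (Or.inr ⟨Reachable.refl _, hy.symm⟩))
      · refine ⟨⟨H.connectedComponentMk y, fun h' => hy (ConnectedComponent.eq.mp h')⟩, ?_⟩
        rfl
  rw [← Nat.card_congr (Equiv.ofBijective _ hb)]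
  rw [Nat.card_eq_fintype_card, Nat.card_eq_fintype_card]
  have := Fintype.card_subtype_compl (fun c => c = H.connectedComponentMk u)
  rw [Fintype.card_subtype_eq] at this
  have h1 : 0 < Fintype.card H.ConnectedComponent :=
    Fintype.card_pos_iff.mpr ⟨H.connectedComponentMk u⟩
  simp only [ne_eq]
  omega

variable {V : Type*} [Fintype V] [DecidableEq V] {G : SimpleGraph V}

/-- independent sets of the graphical matroid -/
def gInd (G : SimpleGraph V) (F : Finset (Sym2 V)) : Prop :=
  (F : Set (Sym2 V)) ⊆ G.edgeSet ∧ (fromEdgeSet (F : Set (Sym2 V))).IsAcyclic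

/-- reachability inside an edge set -/
def gR (F : Finset (Sym2 V)) (u v : V) : Prop := (fromEdgeSet (F : Set (Sym2 V))).Reachable u v

lemma gR_insert {F : Finset (Sym2 V)} {u v x y : V} :
    gR (insert s(u, v) F) x y ↔ gR F x y ∨ (gR F x u ∧ gR F v y) ∨ (gR F x v ∧ gR F u y) := by
  unfold gR
  rw [gf_insert, gf_reach]

lemma gR_of_mem {F : Finset (Sym2 V)} {u v : V} (h : s(u, v) ∈ F) : gR F u v := by
  by_cases huv : u = v
  · rw [huv]; exact Reachable.refl _
  · exact Adj.reachable (by rw [fromEdgeSet_adj]; exact ⟨h, huv⟩)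

lemma gInd_down {S T : Finset (Sym2 V)} (h : S ⊆ T) (hT : gInd G T) : gInd G S :=
  ⟨fun _ hx => hT.1 (h hx), hT.2.anti (fromEdgeSet_mono (by exact_mod_cast h))⟩

lemma gInd_empty : gInd G ∅ := ⟨by simp, by simp⟩

lemma gInd_insert {F : Finset (Sym2 V)} (hF : gInd G F) {u v : V} :
    (s(u, v) ∉ F ∧ gInd G (insert s(u, v) F)) ↔ (s(u, v) ∈ G.edgeSet ∧ ¬ gR F u v) := by
  constructor
  · rintro ⟨h1, h2, h3⟩
    have hE : s(u, v) ∈ G.edgeSet := h2 (by simp)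
    refine ⟨hE, fun h => ?_⟩
    rw [gf_insert, isAcyclic_sup_fromEdgeSet_iff] at h3
    rcases h3.2 h with h4 | h4
    · exact (G.ne_of_adj hE) h4
    · rw [fromEdgeSet_adj] at h4; exact h1 (by exact_mod_cast h4.1)
  · rintro ⟨h1, h2⟩
    refine ⟨fun h => h2 (gR_of_mem h), ?_, ?_⟩
    · rw [Finset.coe_insert, Set.insert_subset_iff]; exact ⟨h1, hF.1⟩
    · rw [gf_insert, isAcyclic_sup_fromEdgeSet_iff]
      exact ⟨hF.2, fun h => absurd h h2⟩

lemma gInd_card (F : Finset (Sym2 V)) (hF : gInd G F) :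
    Nat.card (fromEdgeSet (F : Set (Sym2 V))).ConnectedComponent + F.card = Fintype.card V := by
  induction F using Finset.induction_on with
  | empty =>
    have hb : Function.Bijective (⊥ : SimpleGraph V).connectedComponentMk := by
      refine ⟨fun x y h => ?_, fun c => ?_⟩
      · simpa using h
      · induction c using ConnectedComponent.ind with | _ y => exact ⟨y, rfl⟩
    rw [Finset.coe_empty, fromEdgeSet_empty, ← Nat.card_congr (Equiv.ofBijective _ hb)]
    simp
  | insert e F he ih =>
    induction e using Sym2.ind with | _ u v =>
    have hF' : gInd G F := gInd_down (Finset.subset_insert _ _) hF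
    have h1 := (gInd_insert hF').mp ⟨he, hF⟩
    have h2 := gf_comp h1.2
    have h3 := ih hF'
    rw [gf_insert, Finset.card_insert_of_notMem he]
    omega

lemma gInd_aug {S T : Finset (Sym2 V)} (hS : gInd G S) (hT : gInd G T) (h : S.card < T.card) :
    ∃ e ∈ T, e ∉ S ∧ gInd G (insert e S) := by
  by_contra! hcon
  have hadj : ∀ u v, s(u, v) ∈ T → gR S u v := fun u v huv => by
    by_contra hR
    have := (gInd_insert hS).mpr ⟨hT.1 huv, hR⟩
    exact hcon _ huv this.1 this.2
  have hR : ∀ u v, gR T u v → gR S u v := by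
    rintro u v ⟨p⟩
    induction p with
    | nil => exact Reachable.refl _
    | cons hab p ih =>
      rw [fromEdgeSet_adj] at hab
      exact Reachable.trans (hadj _ _ (by exact_mod_cast hab.1)) ih
  let f : (fromEdgeSet (T : Set (Sym2 V))).ConnectedComponent →
      (fromEdgeSet (S : Set (Sym2 V))).ConnectedComponent :=
    Quot.lift (fun u => connectedComponentMk _ u) fun u v huv => ConnectedComponent.eq.mpr (hR u v huv)
  have hf : Function.Surjective f := fun c => by
    induction c using ConnectedComponent.ind with | _ y => exact ⟨connectedComponentMk _ y, rfl⟩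
  have h1 := Nat.card_le_card_of_surjective f hf
  have h2 := gInd_card S hS
  have h3 := gInd_card T hT
  omega

lemma gInd_phi {S : Finset (Sym2 V)} (hS : gInd G S) (hc : S.card + 3 = Fintype.card V) :
    ∃ φ : V → Fin 3, ∀ u v, φ u = φ v ↔ gR S u v := by
  have h := gInd_card S hS
  have h3 : Nat.card (fromEdgeSet (S : Set (Sym2 V))).ConnectedComponent = 3 := by omega
  have e := Finite.equivFinOfCardEq h3
  refine ⟨fun u => e (connectedComponentMk _ u), fun u v => ?_⟩
  rw [e.injective.eq_iff, ConnectedComponent.eq]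
  rfl

/-- class of an edge given a labelling of the vertices by `Fin 3` -/
def gcl (φ : V → Fin 3) : Sym2 V → Fin 3 := Sym2.lift ⟨fun u v => φ u + φ v, fun u v => add_comm _ _⟩

lemma gcl_mk (φ : V → Fin 3) (u v : V) : gcl φ s(u, v) = φ u + φ v := rfl

lemma fin3_dec : ∀ a b x y : Fin 3, a ≠ b → x ≠ y →
    (¬ (a = b ∨ (a = x ∧ y = b) ∨ (a = y ∧ x = b)) ↔ a + b ≠ x + y) := by decide

lemma gInd_tri {S : Finset (Sym2 V)} (hS : gInd G S) (φ : V → Fin 3)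
    (hφ : ∀ u v, φ u = φ v ↔ gR S u v) (i j : Sym2 V) (hi : i ∉ S) (hj : j ∉ S) (hij : i ≠ j)
    (hi' : gInd G (insert i S)) (hj' : gInd G (insert j S)) :
    gInd G (insert i (insert j S)) ↔ gcl φ i ≠ gcl φ j := by
  induction i using Sym2.ind with | _ u v =>
  induction j using Sym2.ind with | _ x y =>
  have h1 := (gInd_insert hS).mp ⟨hi, hi'⟩
  have h2 := (gInd_insert hS).mp ⟨hj, hj'⟩
  have h3 := gInd_insert (u := u) (v := v) hj'
  have h4 : s(u, v) ∉ insert s(x, y) S := by simp [hi, hij]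
  simp only [h4, h1.1, not_false_eq_true, true_and, gR_insert, ← hφ] at h3
  rw [h3, gcl_mk, gcl_mk]
  exact fin3_dec _ _ _ _ (fun h => h1.2 ((hφ _ _).mp h)) (fun h => h2.2 ((hφ _ _).mp h))

lemma gInd_tree {T : SimpleGraph V} (hT : T.IsTree) (hle : T ≤ G) :
    gInd G T.edgeFinset ∧ T.edgeFinset.card = Fintype.card V - 1 := by
  refine ⟨⟨?_, ?_⟩, ?_⟩
  · rw [coe_edgeFinset]; exact edgeSet_mono hle
  · rw [coe_edgeFinset, fromEdgeSet_edgeSet]; exact hT.isAcyclic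
  · have := hT.card_edgeFinset; omega

lemma gMat (hN : 3 ≤ Fintype.card V) (hconn : G.Connected) :
    GMat (gInd G) (Fintype.card V - 1) where
  two_le := by omega
  down := fun S T h hT => gInd_down h hT
  aug := fun S T hS hT h => gInd_aug hS hT h
  basis := by
    obtain ⟨T, hle, hT⟩ := hconn.exists_isTree_le
    exact ⟨_, gInd_tree hT hle⟩
  tri := fun S hS hc => by
    obtain ⟨φ, hφ⟩ := gInd_phi hS (by omega)
    exact ⟨gcl φ, gInd_tri hS φ hφ⟩

lemma numForests_eq (k : ℕ) : (numForests V G k : ℝ) = gmN (gInd G) k ∅ := by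
  unfold numForests gmN
  refine congrArg Nat.cast (congrArg Finset.card ?_)
  ext F
  simp [gInd, and_assoc, and_comm]


/-- the set of edges -/
def gE (G : SimpleGraph V) : Finset (Sym2 V) := Finset.univ.filter (· ∈ G.edgeSet)

lemma mem_gE {e : Sym2 V} : e ∈ gE G ↔ e ∈ G.edgeSet := by simp [gE]

lemma gE_coe : ((gE G : Finset (Sym2 V)) : Set (Sym2 V)) = G.edgeSet := by ext; simp [gE]

/-- `G` has `N` edges and is a circuit -/
def gCyc (G : SimpleGraph V) : Prop :=
  (gE G).card = Fintype.card V ∧ ∀ e ∈ gE G, gInd G ((gE G).erase e)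

lemma gR_closed {S : Finset (Sym2 V)} (P : V → Prop) (h : ∀ x y, s(x, y) ∈ S → P x → P y)
    {x y : V} (hxy : gR S x y) (hx : P x) : P y := by
  obtain ⟨p⟩ := hxy
  induction p with
  | nil => exact hx
  | cons hab p ih =>
    rw [fromEdgeSet_adj] at hab
    exact ih (h _ _ (by exact_mod_cast hab.1) hx)

lemma fin3_dec2 : ∀ a b x y : Fin 3, a ≠ b → x ≠ y → a + b = x + y →
    (a = x ∧ b = y) ∨ (a = y ∧ b = x) := by decide

/-- the existence of a flat with a class of size at most one -/
lemma gInd_leaf (hN : 3 ≤ Fintype.card V) (hconn : G.Connected) :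
    ∃ S : Finset (Sym2 V), gInd G S ∧ S.card + 3 = Fintype.card V ∧ ∃ u v : V, u ≠ v ∧
      (∀ x y, s(x, y) ∈ S → x ≠ u ∧ x ≠ v) := by
  obtain ⟨T, hle, hT⟩ := hconn.exists_isTree_le
  haveI : Nontrivial V := Fintype.one_lt_card_iff_nontrivial.mp (by omega)
  obtain ⟨u, v, huv, hu, hv⟩ := hT.exists_ne_and_degree_eq_one
  rw [degree_eq_one_iff_existsUnique_adj] at hu hv
  obtain ⟨u', hu1, hu2⟩ := hu
  obtain ⟨v', hv1, hv2⟩ := hv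
  obtain ⟨hB, hBc⟩ := gInd_tree hT hle
  have hne : s(u, u') ≠ s(v, v') := by
    intro h
    rw [Sym2.eq_iff] at h
    rcases h with ⟨h1, h2⟩ | ⟨h1, h2⟩
    · exact huv h1
    · obtain ⟨w, hw⟩ : ∃ w, w ∉ ({u, v} : Finset V) := by
        by_contra! hcon
        have h3 : (Finset.univ : Finset V) ⊆ {u, v} := fun x _ => hcon x
        have h4 := Finset.card_le_card h3
        have h5 : ({u, v} : Finset V).card ≤ 2 := Finset.card_le_two
        rw [Finset.card_univ] at h4
        omega
      have hr : gR T.edgeFinset u w := by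
        unfold gR
        rw [coe_edgeFinset, fromEdgeSet_edgeSet]
        exact hT.connected u w
      have := gR_closed (fun x => x = u ∨ x = v) (fun x y hxy hx => by
        rw [mem_edgeFinset, mem_edgeSet] at hxy
        rcases hx with rfl | rfl
        · exact Or.inr ((hu2 y hxy).trans h2)
        · exact Or.inl ((hv2 y hxy).trans h1.symm)) hr (Or.inl rfl)
      simp at hw
      tauto
  refine ⟨(T.edgeFinset.erase s(u, u')).erase s(v, v'),
    gInd_down ((Finset.erase_subset _ _).trans (Finset.erase_subset _ _)) hB, ?_, u, v, huv, ?_⟩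
  · rw [Finset.card_erase_of_mem, Finset.card_erase_of_mem, hBc]
    · omega
    · rw [mem_edgeFinset]; exact hu1
    · rw [Finset.mem_erase, mem_edgeFinset]; exact ⟨hne.symm, hv1⟩
  · intro x y hxy
    simp only [Finset.mem_erase, mem_edgeFinset, mem_edgeSet] at hxy
    obtain ⟨h1, h2, h3⟩ := hxy
    constructor
    · rintro rfl
      exact h2 (by rw [hu2 y h3])
    · rintro rfl
      exact h1 (by rw [hv2 y h3])

/-- non-loops over `S` -/
def gNL (G : SimpleGraph V) (S : Finset (Sym2 V)) : Finset (Sym2 V) :=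
  Finset.univ.filter fun i => i ∉ S ∧ gInd G (insert i S)

lemma mem_gNL {S : Finset (Sym2 V)} {i : Sym2 V} :
    i ∈ gNL G S ↔ i ∉ S ∧ gInd G (insert i S) := by simp [gNL]

lemma g_equality (hN : 3 ≤ Fintype.card V) (hconn : G.Connected)
    (H : ∃ a : ℝ, 0 < a ∧ ∀ S, gInd G S → S.card + 2 = Fintype.card V - 1 → ∀ c : Sym2 V → Fin 3,
    (∀ i j, i ∉ S → j ∉ S → i ≠ j → gInd G (insert i S) → gInd G (insert j S) →
      (gInd G (insert i (insert j S)) ↔ c i ≠ c j)) →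
    ∀ k, ((Finset.univ.filter fun i => i ∉ S ∧ gInd G (insert i S) ∧ c i = k).card : ℝ) = a) :
    ∀ S, gInd G S → S.card + 3 = Fintype.card V → (gNL G S).card = 3 ∧
      ∀ i ∈ gNL G S, ∀ j ∈ gNL G S, i ≠ j → gInd G (insert i (insert j S)) := by
  obtain ⟨a, ha, H⟩ := H
  have ha1 : a = 1 := by
    obtain ⟨S, hS, hSc, u, v, huv, hiso⟩ := gInd_leaf hN hconn
    obtain ⟨φ, hφ⟩ := gInd_phi hS hSc
    have h := H S hS (by omega) (gcl φ) (gInd_tri hS φ hφ) (gcl φ s(u, v))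
    have hu : ∀ y, gR S u y → y = u := fun y hy =>
      gR_closed (fun x => x = u) (fun x y hxy hx => absurd hx (hiso x y hxy).1) hy rfl
    have hv : ∀ y, gR S v y → y = v := fun y hy =>
      gR_closed (fun x => x = v) (fun x y hxy hx => absurd hx (hiso x y hxy).2) hy rfl
    have hsub : (Finset.univ.filter fun i => i ∉ S ∧ gInd G (insert i S) ∧
        gcl φ i = gcl φ s(u, v)) ⊆ {s(u, v)} := by
      intro i hi
      obtain ⟨-, h1, h2, h3⟩ := Finset.mem_filter.mp hi
      clear hi
      rw [Finset.mem_singleton]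
      induction i using Sym2.ind with | _ x y =>
      rw [gcl_mk, gcl_mk] at h3
      have h4 := (gInd_insert hS).mp ⟨h1, h2⟩
      rcases fin3_dec2 _ _ _ _ (fun h => h4.2 ((hφ _ _).mp h))
        (fun h => huv (hu _ ((hφ _ _).mp h)).symm) h3 with ⟨h5, h6⟩ | ⟨h5, h6⟩
      · rw [hu x ((hφ _ _).mp h5.symm), hv y ((hφ _ _).mp h6.symm)]
      · rw [hv x ((hφ _ _).mp h5.symm), hu y ((hφ _ _).mp h6.symm), Sym2.eq_swap]
    have hc := Finset.card_le_card hsub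
    rw [Finset.card_singleton] at hc
    rw [← h] at ha ⊢
    have : 0 < (Finset.univ.filter fun i => i ∉ S ∧ gInd G (insert i S) ∧
        gcl φ i = gcl φ s(u, v)).card := by exact_mod_cast ha
    have h1 : (Finset.univ.filter fun i => i ∉ S ∧ gInd G (insert i S) ∧
        gcl φ i = gcl φ s(u, v)).card = 1 := by omega
    rw [h1]; simp
  subst ha1
  intro S hS hSc
  obtain ⟨φ, hφ⟩ := gInd_phi hS hSc
  have h := H S hS (by omega) (gcl φ) (gInd_tri hS φ hφ)
  have h' : ∀ k, ((gNL G S).filter fun i => gcl φ i = k).card = 1 := fun k => by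
    have := h k
    have h2 : ((gNL G S).filter fun i => gcl φ i = k) = (Finset.univ.filter fun i =>
        i ∉ S ∧ gInd G (insert i S) ∧ gcl φ i = k) := by
      ext i; simp [gNL, and_assoc]
    rw [h2]; exact_mod_cast this
  constructor
  · rw [Finset.card_eq_sum_card_fiberwise (f := gcl φ) (t := Finset.univ) (by simp)]
    simp [h']
  · intro i hi j hj hij
    rw [mem_gNL] at hi hj
    rw [gInd_tri hS φ hφ i j hi.1 hj.1 hij hi.2 hj.2]
    intro hc
    obtain ⟨e, he⟩ := Finset.card_eq_one.mp (h' (gcl φ j))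
    have h1 : i ∈ ((gNL G S).filter fun i => gcl φ i = gcl φ j) := by simp [mem_gNL, hi, hc]
    have h2 : j ∈ ((gNL G S).filter fun i => gcl φ i = gcl φ j) := by simp [mem_gNL, hj]
    rw [he, Finset.mem_singleton] at h1 h2
    exact hij (h1.trans h2.symm)

lemma gInd_extend (B : Finset (Sym2 V)) (hB : gInd G B) (n : ℕ) :
    ∀ I : Finset (Sym2 V), gInd G I → I.card + n = B.card →
      ∃ J, gInd G J ∧ I ⊆ J ∧ J ⊆ I ∪ B ∧ J.card = B.card := by
  induction n with
  | zero => exact fun I hI hc => ⟨I, hI, subset_rfl, Finset.subset_union_left, by omega⟩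
  | succ n ih =>
    intro I hI hc
    obtain ⟨e, he, heI, hins⟩ := gInd_aug hI hB (by omega)
    obtain ⟨J, h1, h2, h3, h4⟩ := ih (insert e I) hins
      (by rw [Finset.card_insert_of_notMem heI]; omega)
    refine ⟨J, h1, (Finset.subset_insert _ _).trans h2, h3.trans ?_, h4⟩
    intro x hx
    simp only [Finset.mem_union, Finset.mem_insert] at hx ⊢
    rcases hx with (rfl | hx) | hx
    · exact Or.inr he
    · exact Or.inl hx
    · exact Or.inr hx

lemma gInd_exch {B : Finset (Sym2 V)} (hB : gInd G B) (hBn : 1 ≤ B.card) {g : Sym2 V}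
    (hg : g ∈ gE G) (hgB : g ∉ B) : ∃ e ∈ B, gInd G (insert g (B.erase e)) := by
  have h1 : gInd G {g} := by
    induction g using Sym2.ind with | _ x y =>
    rw [mem_gE] at hg
    have := (gInd_insert (gInd_empty (G := G)) (u := x) (v := y)).mpr ⟨hg, fun h => by
      have := gR_closed (fun z => z = x) (by simp) h rfl
      exact (G.ne_of_adj hg) this.symm⟩
    simpa using this.2
  obtain ⟨J, hJ, hgJ, hJs, hJc⟩ := gInd_extend B hB (B.card - 1) {g} h1 (by simp; omega)
  have hgJ : g ∈ J := by simpa using hgJ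
  obtain ⟨e, heB, heJ⟩ : ∃ e ∈ B, e ∉ J := by
    by_contra! hcon
    have h2 : insert g B ⊆ J := Finset.insert_subset hgJ hcon
    have h3 := Finset.card_le_card h2
    rw [Finset.card_insert_of_notMem hgB] at h3
    omega
  refine ⟨e, heB, ?_⟩
  have hJ2 : J ⊆ insert g (B.erase e) := by
    intro x hx
    have h2 := hJs hx
    simp only [Finset.mem_union, Finset.mem_singleton, Finset.mem_insert, Finset.mem_erase] at h2 ⊢
    rcases h2 with h2 | h2
    · exact Or.inl h2
    · exact Or.inr ⟨fun h => heJ (h ▸ hx), h2⟩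
  have hJ3 : J = insert g (B.erase e) := by
    refine Finset.eq_of_subset_of_card_le hJ2 ?_
    rw [Finset.card_insert_of_notMem (by simp [hgB]), Finset.card_erase_of_mem heB]
    omega
  rw [← hJ3]; exact hJ

lemma g_cyc (hN : 3 ≤ Fintype.card V) (hconn : G.Connected)
    (H : ∀ S, gInd G S → S.card + 3 = Fintype.card V → (gNL G S).card = 3 ∧
      ∀ i ∈ gNL G S, ∀ j ∈ gNL G S, i ≠ j → gInd G (insert i (insert j S))) : gCyc G := by
  obtain ⟨T, hle, hT⟩ := hconn.exists_isTree_le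
  obtain ⟨hB, hBc⟩ := gInd_tree hT hle
  generalize T.edgeFinset = B at hB hBc
  have hBE : B ⊆ gE G := fun x hx => mem_gE.mpr (hB.1 hx)
  have hother : ∀ e ∈ B, ∃ e' ∈ B, e' ≠ e := fun e he =>
    Finset.exists_mem_ne (by omega) e
  have hSc : ∀ e ∈ B, ∀ e' ∈ B, e' ≠ e →
      gInd G ((B.erase e).erase e') ∧ ((B.erase e).erase e').card + 3 = Fintype.card V := by
    intro e he e' he' hne
    refine ⟨gInd_down ((Finset.erase_subset _ _).trans (Finset.erase_subset _ _)) hB, ?_⟩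
    rw [Finset.card_erase_of_mem (Finset.mem_erase.mpr ⟨hne, he'⟩), Finset.card_erase_of_mem he]
    omega
  have hn1 : ∀ e ∈ B, ∀ e' ∈ B, e' ≠ e → e ∈ gNL G ((B.erase e).erase e') := by
    intro e he e' he' hne
    rw [mem_gNL]
    refine ⟨by simp, gInd_down ?_ hB⟩
    exact Finset.insert_subset he ((Finset.erase_subset _ _).trans (Finset.erase_subset _ _))
  have hn2 : ∀ e ∈ B, ∀ e' ∈ B, e' ≠ e → e' ∈ gNL G ((B.erase e).erase e') := by
    intro e he e' he' hne
    rw [Finset.erase_right_comm]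
    exact hn1 e' he' e he hne.symm
  have hn3 : ∀ e e' f, f ∉ B → gInd G (insert f (B.erase e)) →
      f ∈ gNL G ((B.erase e).erase e') := by
    intro e e' f hf hi
    rw [mem_gNL]
    refine ⟨by simp [hf], gInd_down ?_ hi⟩
    exact Finset.insert_subset_insert _ (Finset.erase_subset _ _)
  have huniq : ∀ f ∈ gE G, f ∉ B → ∀ g ∈ gE G, g ∉ B → f = g := by
    intro f hf hfB g hg hgB
    by_contra hfg
    obtain ⟨e1, he1, hi1⟩ := gInd_exch hB (by omega) hf hfB
    obtain ⟨e2, he2, hi2⟩ := gInd_exch hB (by omega) hg hgB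
    obtain ⟨e, he, e', he', hne, h1, h2⟩ : ∃ e ∈ B, ∃ e' ∈ B, e' ≠ e ∧
        f ∈ gNL G ((B.erase e).erase e') ∧ g ∈ gNL G ((B.erase e).erase e') := by
      by_cases h12 : e2 = e1
      · subst h12
        obtain ⟨e', he', hne⟩ := hother e2 he2
        exact ⟨e2, he2, e', he', hne, hn3 _ _ _ hfB hi1, hn3 _ _ _ hgB hi2⟩
      · refine ⟨e1, he1, e2, he2, h12, hn3 _ _ _ hfB hi1, ?_⟩
        rw [Finset.erase_right_comm]
        exact hn3 _ _ _ hgB hi2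
    have hcard := (H _ (hSc e he e' he' hne).1 (hSc e he e' he' hne).2).1
    have hsub : ({e, e', f, g} : Finset (Sym2 V)) ⊆ gNL G ((B.erase e).erase e') := by
      simp only [Finset.insert_subset_iff, Finset.singleton_subset_iff]
      exact ⟨hn1 e he e' he' hne, hn2 e he e' he' hne, h1, h2⟩
    have h3 := Finset.card_le_card hsub
    have ef : e ≠ f := fun h => hfB (h ▸ he)
    have eg : e ≠ g := fun h => hgB (h ▸ he)
    have ef' : e' ≠ f := fun h => hfB (h ▸ he')
    have eg' : e' ≠ g := fun h => hgB (h ▸ he')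
    rw [Finset.card_insert_of_notMem (by simp [ef, eg, hne.symm]),
      Finset.card_insert_of_notMem (by simp [ef', eg']),
      Finset.card_insert_of_notMem (by simp [hfg]), Finset.card_singleton] at h3
    omega
  -- every pair gives an element outside of B
  have hout : ∀ e ∈ B, ∀ e' ∈ B, e' ≠ e → ∃ f ∈ gE G, f ∉ B ∧ f ∈ gNL G ((B.erase e).erase e') := by
    intro e he e' he' hne
    have hcard := (H _ (hSc e he e' he' hne).1 (hSc e he e' he' hne).2).1
    obtain ⟨f, hf, hf'⟩ : ∃ f ∈ gNL G ((B.erase e).erase e'), f ∉ ({e, e'} : Finset (Sym2 V)) := by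
      refine Finset.exists_mem_notMem_of_card_lt_card ?_
      have : ({e, e'} : Finset (Sym2 V)).card ≤ 2 := Finset.card_le_two
      omega
    have h1 := mem_gNL.mp hf
    refine ⟨f, mem_gE.mpr (h1.2.1 (by simp)), fun h => ?_, hf⟩
    simp only [Finset.mem_insert, Finset.mem_singleton, Finset.mem_erase] at hf' h1
    tauto
  obtain ⟨e0, he0⟩ : ∃ e, e ∈ B := Finset.card_pos.mp (by omega)
  obtain ⟨e1, he1, hne1⟩ := hother e0 he0
  obtain ⟨f, hf, hfB, -⟩ := hout e0 he0 e1 he1 hne1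
  have hE : gE G = insert f B := by
    ext x
    rw [Finset.mem_insert]
    constructor
    · intro hx
      by_cases hxB : x ∈ B
      · exact Or.inr hxB
      · exact Or.inl (huniq x hx hxB f hf hfB)
    · rintro (rfl | hx)
      · exact hf
      · exact hBE hx
  refine ⟨by rw [hE, Finset.card_insert_of_notMem hfB]; omega, ?_⟩
  intro e he
  rw [hE, Finset.mem_insert] at he
  rcases he with rfl | he
  · rw [hE, Finset.erase_insert hfB]; exact hB
  · obtain ⟨e', he', hne⟩ := hother e he
    obtain ⟨g, hg, hgB, hgN⟩ := hout e he e' he' hne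
    obtain rfl := huniq f hf hfB g hg hgB
    have h1 := (H _ (hSc e he e' he' hne).1 (hSc e he e' he' hne).2).2 f hgN e'
      (hn2 e he e' he' hne) (fun h => hfB (h ▸ he'))
    rw [Finset.insert_erase (Finset.mem_erase.mpr ⟨hne, he'⟩)] at h1
    have hfe : f ≠ e := fun h => hfB (h ▸ he)
    rw [hE, Finset.erase_insert_of_ne hfe]
    exact h1

lemma gE_fromEdgeSet : fromEdgeSet ((gE G : Finset (Sym2 V)) : Set (Sym2 V)) = G := by
  rw [gE_coe, fromEdgeSet_edgeSet]

lemma gE_card [Fintype G.edgeSet] : (gE G).card = G.edgeFinset.card := by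
  congr 1
  ext e
  rw [mem_gE, mem_edgeFinset]

lemma gE_cycleGraph (n : ℕ) (hn : 3 ≤ n) : (gE (cycleGraph n)).card = n := by
  obtain ⟨m, rfl⟩ : ∃ m, n = m + 3 := ⟨n - 3, by omega⟩
  have h := sum_degrees_eq_twice_card_edges (cycleGraph (m + 3))
  have h2 : ∀ v, (cycleGraph (m + 3)).degree v = 2 := fun v => by
    convert cycleGraph_degree_three_le (v := v)
  simp only [h2, Finset.sum_const, Finset.card_univ, Fintype.card_fin, smul_eq_mul] at h
  have h3 := gE_card (G := cycleGraph (m + 3))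
  rw [h3]
  have h4 : (m + 3) * 2 = 2 * (cycleGraph (m + 3)).edgeFinset.card := by convert h
  omega

lemma gCyc_iso (hN : 3 ≤ Fintype.card V) (h : gCyc G) :
    Nonempty (G ≃g cycleGraph (Fintype.card V)) := by
  obtain ⟨hc, hind⟩ := h
  have hna : ¬ G.IsAcyclic := fun ha => by
    have h1 : gInd G (gE G) := ⟨gE_coe.subset, by rw [gE_fromEdgeSet]; exact ha⟩
    have h2 := gInd_card _ h1
    haveI : Nonempty V := Fintype.card_pos_iff.mp (by omega)
    haveI : Nonempty (fromEdgeSet ((gE G : Finset (Sym2 V)) : Set (Sym2 V))).ConnectedComponent :=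
      ⟨connectedComponentMk _ (Classical.arbitrary V)⟩
    have h3 : 0 < Nat.card
      (fromEdgeSet ((gE G : Finset (Sym2 V)) : Set (Sym2 V))).ConnectedComponent := Nat.card_pos
    omega
  unfold IsAcyclic at hna
  push Not at hna
  obtain ⟨v, p, hp⟩ := hna
  have hall : ∀ e ∈ gE G, e ∈ p.edges := by
    intro e he
    by_contra hep
    have hq : ∀ e' ∈ p.edges, e' ∈ (fromEdgeSet
        (((gE G).erase e : Finset (Sym2 V)) : Set (Sym2 V))).edgeSet := by
      intro e' he'
      have h1 := p.edges_subset_edgeSet he'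
      rw [edgeSet_fromEdgeSet]
      refine ⟨?_, G.not_isDiag_of_mem_edgeSet h1⟩
      rw [Finset.mem_coe, Finset.mem_erase, mem_gE]
      exact ⟨fun h => hep (h ▸ he'), h1⟩
    exact (hind e he).2 _ (hp.transfer hq)
  have hlen : p.length = Fintype.card V := by
    rw [← hc, ← p.length_edges, ← List.toFinset_card_of_nodup hp.edges_nodup]
    congr 1
    ext e
    rw [List.mem_toFinset]
    exact ⟨fun h => mem_gE.mpr (p.edges_subset_edgeSet h), hall e⟩
  obtain ⟨f⟩ := (cycleGraph_isContained_iff (G := G) (n := Fintype.card V) (by omega)).mpr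
    ⟨v, p, hp, hlen⟩
  have hfi : Function.Injective f.toHom := f.injective'
  have hfb : Function.Bijective f.toHom :=
    (Fintype.bijective_iff_injective_and_card _).mpr ⟨hfi, by simp⟩
  have himg : (gE (cycleGraph (Fintype.card V))).image (Sym2.map f.toHom) = gE G := by
    refine Finset.eq_of_subset_of_card_le ?_ ?_
    · intro e he
      obtain ⟨e', he', rfl⟩ := Finset.mem_image.mp he
      rw [mem_gE] at he' ⊢
      exact f.toHom.map_mem_edgeSet he'
    · rw [Finset.card_image_of_injective _ (Sym2.map.injective hfi), gE_cycleGraph _ hN, hc]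
  refine ⟨RelIso.symm ⟨Equiv.ofBijective _ hfb, ?_⟩⟩
  intro a b
  refine ⟨fun h => ?_, fun h => f.toHom.map_adj h⟩
  have h1 : s(f.toHom a, f.toHom b) ∈ gE G := mem_gE.mpr h
  rw [← himg] at h1
  obtain ⟨e', he', heq⟩ := Finset.mem_image.mp h1
  have h2 : e' = s(a, b) := Sym2.map.injective hfi (by rw [heq]; rfl)
  subst h2
  exact mem_gE.mp he'

lemma iso_gCyc (hN : 3 ≤ Fintype.card V) (hconn : G.Connected)
    (f : G ≃g cycleGraph (Fintype.card V)) : gCyc G := by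
  have hdeg : ∀ v, G.degree v = 2 := by
    intro v
    have h1 : G.degree v = (cycleGraph (Fintype.card V)).degree (f v) := by
      rw [← f.degree_eq v]
    rw [h1]
    generalize f v = w
    generalize Fintype.card V = n at *
    obtain ⟨m, rfl⟩ : ∃ m, n = m + 3 := ⟨n - 3, by omega⟩
    convert cycleGraph_degree_three_le (v := w)
  have hcard : (gE G).card = Fintype.card V := by
    have h := sum_degrees_eq_twice_card_edges G
    simp only [hdeg, Finset.sum_const, Finset.card_univ, smul_eq_mul] at h
    rw [gE_card]
    omega
  refine ⟨hcard, ?_⟩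
  have hcyc : G.IsCycles := fun v _ => by
    rw [← hdeg v, ← card_neighborSet_eq_degree, Set.ncard_eq_toFinset_card', Set.toFinset_card]
  intro e he
  induction e using Sym2.ind with | _ x y =>
  have hadj : G.Adj x y := mem_gE.mp he
  have hr := hcyc.reachable_deleteEdges hadj
  have hcon := hconn.connected_delete_edge_of_not_isBridge (x := x) (y := y)
    (by rw [isBridge_iff, not_not]; exact hr)
  have heq : fromEdgeSet (((gE G).erase s(x, y) : Finset (Sym2 V)) : Set (Sym2 V)) =
      G.deleteEdges {s(x, y)} := by
    rw [Finset.coe_erase, gE_coe]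
    ext a b
    simp only [fromEdgeSet_adj, deleteEdges_adj, Set.mem_diff, mem_edgeSet]
    exact ⟨fun h => h.1, fun h => ⟨h, h.1.ne⟩⟩
  refine ⟨?_, ?_⟩
  · intro a ha
    exact mem_gE.mp (Finset.mem_of_mem_erase ha)
  · rw [heq]
    refine (isTree_iff_connected_and_card.mpr ⟨hcon, ?_⟩).isAcyclic
    have : (G.deleteEdges {s(x, y)}).edgeSet = (((gE G).erase s(x, y) : Finset _) : Set _) := by
      rw [edgeSet_deleteEdges, Finset.coe_erase, gE_coe]
    rw [this, Nat.card_coe_set_eq, Set.ncard_coe_finset, Finset.card_erase_of_mem he, hcard,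
      Nat.card_eq_fintype_card]
    omega

lemma gCyc_num (h : gCyc G) {k : ℕ} (hk : k < Fintype.card V) :
    numForests V G k = (Fintype.card V).choose k := by
  rw [← h.1, ← Finset.card_powersetCard]
  unfold numForests
  congr 1
  ext F
  rw [Finset.mem_filter, Finset.mem_powersetCard]
  constructor
  · rintro ⟨-, h1, h2, -⟩
    exact ⟨fun e he => mem_gE.mpr (h1 he), h2⟩
  · rintro ⟨h1, h2⟩
    obtain ⟨e, he, heF⟩ : ∃ e ∈ gE G, e ∉ F :=
      Finset.exists_mem_notMem_of_card_lt_card (by rw [h.1]; omega)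
    have h3 : F ⊆ (gE G).erase e := fun x hx =>
      Finset.mem_erase.mpr ⟨fun h' => heF (h' ▸ hx), h1 hx⟩
    have h4 := gInd_down h3 (h.2 e he)
    exact ⟨Finset.mem_univ _, h4.1, h2, h4.2⟩

lemma choose_id (m : ℕ) : (((m + 3).choose (m + 1) : ℕ) : ℝ) ^ 2 =
    (3 : ℝ) / 2 * (1 + 1 / (((m + 3 : ℕ) : ℝ) - 2)) * ((m + 3).choose m : ℕ) *
      ((m + 3).choose (m + 2) : ℕ) := by
  have h1 := Nat.choose_succ_right_eq (m + 3) m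
  have h2 := Nat.choose_succ_right_eq (m + 3) (m + 1)
  rw [show m + 3 - m = 3 by omega] at h1
  rw [show m + 3 - (m + 1) = 2 by omega] at h2
  have h1' : (((m + 3).choose (m + 1) : ℕ) : ℝ) * (m + 1) = ((m + 3).choose m : ℕ) * 3 := by
    exact_mod_cast h1
  have h2' : (((m + 3).choose (m + 2) : ℕ) : ℝ) * (m + 2) = ((m + 3).choose (m + 1) : ℕ) * 2 := by
    exact_mod_cast h2
  generalize (((m + 3).choose (m + 1) : ℕ) : ℝ) = y at *
  generalize (((m + 3).choose m : ℕ) : ℝ) = x at *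
  generalize (((m + 3).choose (m + 2) : ℕ) : ℝ) = z at *
  have hm : (0 : ℝ) ≤ m := by positivity
  have e1 : x = y * (m + 1) / 3 := by linarith
  have e2 : z = y * 2 / (m + 2) := by rw [eq_div_iff (by positivity)]; exact h2'
  have e3 : ((m + 3 : ℕ) : ℝ) - 2 = m + 1 := by push_cast; ring
  rw [e3, e1, e2]
  field_simp
  ring

end Graph

/-- **Equality conditions for graphical matroids.**  For a simple connected graph `G` on
`N ≥ 3` vertices, `I(N-2)² ≥ (3/2)·(1 + 1/(N-2))·I(N-3)·I(N-1)`, with equality if and only if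
`G` is a cycle on `N` vertices. -/
theorem graphical_matroid_equality
    (V : Type*) [Fintype V] [DecidableEq V] (G : SimpleGraph V)
    (hN : 3 ≤ Fintype.card V) (hconn : G.Connected) :
    ((3 : ℝ) / 2) * (1 + 1 / ((Fintype.card V : ℝ) - 2)) *
          (numForests V G (Fintype.card V - 3) : ℝ) *
          (numForests V G (Fintype.card V - 1) : ℝ) ≤
        (numForests V G (Fintype.card V - 2) : ℝ) ^ 2 ∧
      ((numForests V G (Fintype.card V - 2) : ℝ) ^ 2 =
          ((3 : ℝ) / 2) * (1 + 1 / ((Fintype.card V : ℝ) - 2)) *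
            (numForests V G (Fintype.card V - 3) : ℝ) *
            (numForests V G (Fintype.card V - 1) : ℝ) ↔
        Nonempty (G ≃g SimpleGraph.cycleGraph (Fintype.card V))) := by
  have M := gMat hN hconn
  have hineq := gm_ineq M gInd_empty
  have heq := gm_eq M gInd_empty
  have c1 : Fintype.card V - 1 - 2 = Fintype.card V - 3 := by omega
  have c2 : Fintype.card V - 1 - 1 = Fintype.card V - 2 := by omega
  have c3 : ((Fintype.card V - 1 : ℕ) : ℝ) = (Fintype.card V : ℝ) - 1 := by
    rw [Nat.cast_sub (by omega)]; simp
  rw [c1, c2, c3, ← numForests_eq, ← numForests_eq, ← numForests_eq] at hineq heq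
  have hN3 : (3 : ℝ) ≤ Fintype.card V := by exact_mod_cast hN
  have hpos : 0 < (Fintype.card V : ℝ) - 2 := by linarith
  have hfac : ∀ a b : ℝ, ((3 : ℝ) / 2) * (1 + 1 / ((Fintype.card V : ℝ) - 2)) * a * b =
      (3 / 2 * ((Fintype.card V : ℝ) - 1) * a * b) / ((Fintype.card V : ℝ) - 2) := by
    intro a b
    field_simp
    ring
  refine ⟨?_, ?_, ?_⟩
  · rw [hfac, div_le_iff₀ hpos]
    linarith
  · intro h
    rw [hfac, eq_div_iff hpos.ne'] at h
    exact gCyc_iso hN (g_cyc hN hconn (g_equality hN hconn (heq (by linarith))))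
  · rintro ⟨f⟩
    have hcyc := iso_gCyc hN hconn f
    obtain ⟨m, hm⟩ : ∃ m, Fintype.card V = m + 3 := ⟨Fintype.card V - 3, by omega⟩
    rw [gCyc_num hcyc (by omega), gCyc_num hcyc (by omega), gCyc_num hcyc (by omega)]
    rw [hm]
    exact choose_id m
end
end

section
/- Let F_q be a finite field with q elements, let m ≥ 1, let X ⊆ F_q^m be a finite set of vectors which spans F_q^m, and let M = (X, I) be the matroid on X whose independent sets are the linearly independent subsets of X (so rk(M) = m). Then for all integers 1 ≤ k < m: I(k)² ≥ (1 + 1/k)·(1 + 1/(q^{m−k+1} − 2))·I(k−1)·I(k+1). -/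
open scoped Classical BigOperators

noncomputable section

/-- The number of `k`-element subsets of `X ⊆ F^m` which are linearly independent over `F`;
these are the independent sets of size `k` of the matroid on `X` of vectors in `F^m`. -/
def numLinIndepSets (F : Type*) [Field F] {m : ℕ} (X : Finset (Fin m → F)) (k : ℕ) : ℕ :=
  (X.powerset.filter (fun S => S.card = k ∧
    LinearIndependent F (fun v : {x // x ∈ S} => (v : Fin m → F)))).card

lemma hyp_spectral {ι : Type*} [Fintype ι] (B : Matrix ι ι ℝ) (hB : B.IsHermitian) :
    ∃ (b : ι → ι → ℝ) (l : ι → ℝ), (∀ i, B.mulVec (b i) = l i • b i) ∧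
      ∀ u : ι → ℝ, dotProduct u (B.mulVec u) = ∑ i, l i * (dotProduct (b i) u) ^ 2 := by
  refine ⟨fun i => (hB.eigenvectorBasis i).ofLp, hB.eigenvalues,
    fun i => hB.mulVec_eigenvectorBasis i, ?_⟩
  intro u
  have h := hB.eigenvectorBasis.sum_inner_mul_inner (WithLp.toLp 2 u) (WithLp.toLp 2 (B.mulVec u))
  have e1 : inner ℝ (WithLp.toLp 2 u) (WithLp.toLp 2 (B.mulVec u)) = dotProduct u (B.mulVec u) := by
    simp [EuclideanSpace.inner_eq_star_dotProduct, dotProduct_comm]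
  rw [← e1, ← h]
  refine Finset.sum_congr rfl fun i _ => ?_
  have e2 : inner ℝ (WithLp.toLp 2 u) (hB.eigenvectorBasis i)
      = dotProduct (hB.eigenvectorBasis i).ofLp u := by
    simp [EuclideanSpace.inner_eq_star_dotProduct]
  have e3 : inner ℝ (hB.eigenvectorBasis i) (WithLp.toLp 2 (B.mulVec u))
      = hB.eigenvalues i * dotProduct (hB.eigenvectorBasis i).ofLp u := by
    have : inner ℝ (hB.eigenvectorBasis i) (WithLp.toLp 2 (B.mulVec u))
      = dotProduct (hB.eigenvectorBasis i).ofLp (B.mulVec u) := by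
      simp [EuclideanSpace.inner_eq_star_dotProduct, dotProduct_comm]
    rw [this, Matrix.dotProduct_mulVec, ← Matrix.mulVec_transpose]
    have ht : B.IsSymm := by simpa using hB
    have ht : B.transpose = B := ht
    rw [ht, hB.mulVec_eigenvectorBasis i, smul_dotProduct, smul_eq_mul]
  rw [e2, e3]; ring

lemma hyp_core {ι : Type*} [Fintype ι] (B : Matrix ι ι ℝ) (hB : B.IsHermitian) (p : ι → ℝ)
    (h1 : ∀ u : ι → ℝ, dotProduct u (B.mulVec u) ≤ dotProduct (B.mulVec u) (B.mulVec u))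
    (h2 : ∀ (u : ι → ℝ) (l : ℝ), 1 ≤ l → B.mulVec u = l • u → ∃ c : ℝ, u = c • p)
    (u : ι → ℝ) (hu : dotProduct p u = 0) : dotProduct u (B.mulVec u) ≤ 0 := by
  obtain ⟨b, l, hb, hs⟩ := hyp_spectral B hB
  rw [hs]
  refine Finset.sum_nonpos fun i _ => ?_
  by_cases hl : l i ≤ 0
  · exact mul_nonpos_of_nonpos_of_nonneg hl (sq_nonneg _)
  push Not at hl
  have := h1 (b i)
  rw [hb i] at this
  simp only [dotProduct_smul, smul_dotProduct, smul_eq_mul] at this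
  have hn : 0 ≤ dotProduct (b i) (b i) := by
    simp only [dotProduct]; exact Finset.sum_nonneg fun x _ => mul_self_nonneg _
  rcases hn.eq_or_lt with h0 | h0
  · have : b i = 0 := by
      exact dotProduct_self_eq_zero.1 h0.symm
    simp [this]
  · have h1l : 1 ≤ l i := by
      by_contra hc
      push Not at hc
      nlinarith [mul_pos hl h0]
    obtain ⟨c, hc⟩ := h2 _ _ h1l (hb i)
    rw [hc]; simp [hu]

/-- reverse Cauchy-Schwarz from a good shift -/
lemma hyp_of_shift {qv qw qvw s : ℝ} (hw : 0 ≤ qw) (h : qv - 2 * s * qvw + s ^ 2 * qw ≤ 0) :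
    qv * qw ≤ qvw ^ 2 := by
  nlinarith [sq_nonneg (s * qw - qvw), mul_nonneg hw (sub_nonneg.2 h)]

lemma hyp_main {ι : Type*} [Fintype ι] (A : ι → ι → ℝ) (hsym : ∀ x y, A x y = A y x)
    (hA : ∀ x y, 0 ≤ A x y) (w : ι → ℝ) (hw : ∀ x, 0 < w x) (r : ι → ℝ)
    (hr : ∀ x, r x = ∑ y, A x y * w y)
    (ha : ∀ v : ι → ℝ, ∑ x, ∑ y, v x * A x y * v y ≤ ∑ x, w x / r x * (∑ y, A x y * v y) ^ 2)
    (o : ι) (ho : ∀ x, x ≠ o → 0 < r x → 0 < A x o) (v : ι → ℝ) :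
    (∑ x, ∑ y, v x * A x y * v y) * (∑ x, w x * r x) ≤ (∑ x, r x * v x) ^ 2 := by
  have hr0 : ∀ x, 0 ≤ r x := fun x => by
    rw [hr]; exact Finset.sum_nonneg fun y _ => mul_nonneg (hA _ _) (hw y).le
  have hz : ∀ x y, r x = 0 → A x y = 0 := fun x y h => by
    rw [hr, Finset.sum_eq_zero_iff_of_nonneg
      (fun y _ => mul_nonneg (hA _ _) (hw y).le)] at h
    have := h y (Finset.mem_univ _)
    rcases mul_eq_zero.1 this with h | h
    · exact h
    · exact absurd h (hw y).ne'
  set s : ι → ℝ := fun x => Real.sqrt (w x / r x) with hs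
  have hs2 : ∀ x, s x ^ 2 = w x / r x := fun x =>
    Real.sq_sqrt (div_nonneg (hw x).le (hr0 x))
  have hs0 : ∀ x, r x ≠ 0 → 0 < s x := fun x h =>
    Real.sqrt_pos.2 (div_pos (hw x) (lt_of_le_of_ne (hr0 x) (Ne.symm h)))
  have hs1 : ∀ x, r x = 0 → s x = 0 := fun x h => by simp [hs, h]
  set B : Matrix ι ι ℝ := Matrix.of fun x y => s x * A x y * s y with hBdef
  have hBm : ∀ u x, B.mulVec u x = s x * ∑ y, A x y * (s y * u y) := fun u x => by
    simp only [Matrix.mulVec, dotProduct, hBdef, Matrix.of_apply, Finset.mul_sum]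
    exact Finset.sum_congr rfl fun y _ => by ring
  have hBH : B.IsHermitian := by
    ext x y
    simp only [hBdef, Matrix.conjTranspose_apply, Matrix.of_apply, star_trivial]
    rw [hsym y x]; ring
  have hBq : ∀ u, dotProduct u (B.mulVec u) = ∑ x, ∑ y, (s x * u x) * A x y * (s y * u y) := by
    intro u
    simp only [dotProduct, hBm, Finset.mul_sum]
    exact Finset.sum_congr rfl fun x _ => Finset.sum_congr rfl fun y _ => by ring
  have key : ∀ v : ι → ℝ, ∑ x, r x * v x = 0 → ∑ x, ∑ y, v x * A x y * v y ≤ 0 := by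
    intro v hv
    have hc := hyp_core B hBH (fun x => s x * r x) ?_ ?_ (fun x => v x / s x) ?_
    · rw [hBq] at hc
      refine le_trans (le_of_eq ?_) hc
      refine Finset.sum_congr rfl fun x _ => Finset.sum_congr rfl fun y _ => ?_
      by_cases hx : r x = 0
      · simp [hz x y hx]
      by_cases hy : r y = 0
      · rw [hsym]; simp [hz y x hy]
      rw [mul_div_cancel₀ _ (hs0 x hx).ne', mul_div_cancel₀ _ (hs0 y hy).ne']
    · intro u
      rw [hBq]
      refine (ha (fun x => s x * u x)).trans (le_of_eq ?_)
      simp only [dotProduct, hBm]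
      refine Finset.sum_congr rfl fun x _ => ?_
      rw [← hs2]; ring
    · intro u l hl hu
      have hq := hBq u
      rw [hu] at hq
      set z : ι → ℝ := fun x => s x * u x / w x with hzdef
      have hwz : ∀ x, s x * u x = w x * z x := fun x => by
        simp only [hzdef]; field_simp [(hw x).ne']
      have hu0 : ∀ x, r x = 0 → u x = 0 := fun x hx => by
        have := congrFun hu x
        rw [hBm, hs1 x hx, zero_mul, Pi.smul_apply, smul_eq_mul] at this
        rcases mul_eq_zero.1 this.symm with h | h
        · linarith
        · exact h
      have huu : ∀ x, u x * u x = r x * w x * z x ^ 2 := fun x => by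
        by_cases hx : r x = 0
        · simp [hx, hu0 x hx]
        · have h3 : r x * w x * z x ^ 2 = s x ^ 2 * r x / w x * u x ^ 2 := by
            simp only [hzdef]; field_simp [(hw x).ne']
          rw [h3, hs2]
          have := (hw x).ne'
          field_simp
      have hE : ∑ x, ∑ y, A x y * w x * w y * (z x - z y) ^ 2 ≤ 0 := by
        have e1 : ∑ x, ∑ y, A x y * w x * w y * (z x - z y) ^ 2
            = ∑ x, ∑ y, A x y * w x * w y * z x ^ 2 + ∑ x, ∑ y, A x y * w x * w y * z y ^ 2
              - 2 * ∑ x, ∑ y, (s x * u x) * A x y * (s y * u y) := by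
          simp only [Finset.mul_sum, ← Finset.sum_add_distrib, ← Finset.sum_sub_distrib]
          refine Finset.sum_congr rfl fun x _ => Finset.sum_congr rfl fun y _ => ?_
          rw [hwz, hwz]; ring
        have e2 : ∑ x, ∑ y, A x y * w x * w y * z x ^ 2 = dotProduct u u := by
          simp only [dotProduct, huu]
          refine Finset.sum_congr rfl fun x _ => ?_
          rw [hr, Finset.sum_mul, Finset.sum_mul]
          exact Finset.sum_congr rfl fun y _ => by ring
        have e3 : ∑ x, ∑ y, A x y * w x * w y * z y ^ 2 = dotProduct u u := by
          rw [← e2, Finset.sum_comm]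
          refine Finset.sum_congr rfl fun x _ => Finset.sum_congr rfl fun y _ => ?_
          rw [hsym]; ring
        rw [e1, e2, e3, ← hq]
        simp only [dotProduct_smul, smul_eq_mul]
        have hn : 0 ≤ dotProduct u u := by
          simp only [dotProduct]; exact Finset.sum_nonneg fun x _ => mul_self_nonneg _
        nlinarith
      have hpos : ∀ x y, 0 ≤ A x y * w x * w y * (z x - z y) ^ 2 := fun x y =>
        mul_nonneg (mul_nonneg (mul_nonneg (hA _ _) (hw x).le) (hw y).le) (sq_nonneg _)
      have hzz : ∀ x, r x ≠ 0 → z x = z o := by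
        intro x hx
        by_cases hxo : x = o
        · rw [hxo]
        have hxA := ho x hxo (lt_of_le_of_ne (hr0 x) (Ne.symm hx))
        have h0 := le_antisymm hE (Finset.sum_nonneg fun x _ => Finset.sum_nonneg fun y _ => hpos x y)
        rw [Finset.sum_eq_zero_iff_of_nonneg
          (fun x _ => Finset.sum_nonneg fun y _ => hpos x y)] at h0
        have h1 := h0 x (Finset.mem_univ _)
        rw [Finset.sum_eq_zero_iff_of_nonneg (fun y _ => hpos x y)] at h1
        have h2 := h1 o (Finset.mem_univ _)
        have h3 : A x o * w x * w o ≠ 0 := (mul_pos (mul_pos hxA (hw x)) (hw o)).ne'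
        have h4 := (mul_eq_zero.1 h2).resolve_left h3
        have := pow_eq_zero_iff (two_ne_zero) |>.1 h4
        linarith
      refine ⟨z o, ?_⟩
      ext x
      simp only [Pi.smul_apply, smul_eq_mul]
      by_cases hx : r x = 0
      · simp [hx, hu0 x hx]
      · rw [← hzz x hx]
        have h3 : z x * (s x * r x) = s x ^ 2 * r x / w x * u x := by
          simp only [hzdef]; field_simp [(hw x).ne']
        rw [h3, hs2]
        have := (hw x).ne'
        field_simp
    · simp only [dotProduct]
      rw [← hv]
      refine Finset.sum_congr rfl fun x _ => ?_
      by_cases hx : r x = 0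
      · simp [hx]
      · have := (hs0 x hx).ne'
        field_simp
  have hqw : 0 ≤ ∑ x, w x * r x := Finset.sum_nonneg fun x _ => mul_nonneg (hw x).le (hr0 x)
  rcases hqw.eq_or_lt with h0 | h0
  · rw [← h0, mul_zero]; positivity
  · set c := (∑ x, r x * v x) / (∑ x, w x * r x) with hc
    refine hyp_of_shift (s := c) hqw ?_
    have hk := key (fun x => v x - c * w x) ?_
    · refine le_trans (le_of_eq ?_) hk
      have e1 : ∑ x, r x * v x = ∑ x, ∑ y, v x * A x y * w y := by
        refine Finset.sum_congr rfl fun x _ => ?_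
        rw [hr, Finset.sum_mul]; exact Finset.sum_congr rfl fun y _ => by ring
      have e2 : ∑ x, r x * v x = ∑ x, ∑ y, w x * A x y * v y := by
        rw [e1, Finset.sum_comm]
        refine Finset.sum_congr rfl fun x _ => Finset.sum_congr rfl fun y _ => ?_
        rw [hsym]; ring
      have e3 : ∑ x, w x * r x = ∑ x, ∑ y, w x * A x y * w y := by
        refine Finset.sum_congr rfl fun x _ => ?_
        rw [hr, Finset.mul_sum]; exact Finset.sum_congr rfl fun y _ => by ring
      have e4 : 2 * c * ∑ x, r x * v x = c * (∑ x, ∑ y, v x * A x y * w y)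
          + c * ∑ x, ∑ y, w x * A x y * v y := by rw [← e1, ← e2]; ring
      rw [e4, e3]
      simp only [Finset.mul_sum, ← Finset.sum_add_distrib, ← Finset.sum_sub_distrib]
      exact Finset.sum_congr rfl fun x _ => Finset.sum_congr rfl fun y _ => by ring
    · have : ∑ x, r x * (v x - c * w x) = ∑ x, r x * v x - c * ∑ x, w x * r x := by
        simp only [Finset.mul_sum, ← Finset.sum_sub_distrib]
        exact Finset.sum_congr rfl fun x _ => by ring
      rw [this, hc]; field_simp; ring

def atlasForm {ι σ : Type*} [Fintype ι] (step : ι → σ → σ) (Q : σ → ℝ) (a : σ)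
    (u v : ι → ℝ) : ℝ := ∑ x, ∑ y, u x * Q (step x (step y a)) * v y

lemma hyp_local_to_global {ι σ : Type*} [Fintype ι] (step : ι → σ → σ)
    (hcomm : ∀ x y a, step x (step y a) = step y (step x a))
    (Q : σ → ℝ) (hQ : ∀ a, 0 ≤ Q a) (w : ι → ℝ) (hw : ∀ x, 0 < w x)
    (deg : σ → ℕ) (hdeg : ∀ x a, deg (step x a) = deg a + 1) (d : ℕ)
    (euler : ∀ a, deg a ≤ d → ∑ x, w x * Q (step x a) = ((d : ℝ) - deg a) * Q a)
    (o : ι) (hconn : ∀ a x, deg a + 2 ≤ d → 0 < Q (step x a) → 0 < Q (step x (step o a)))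
    (base : ∀ a, deg a + 2 = d → ∀ v, atlasForm step Q a v v * atlasForm step Q a w w
      ≤ (atlasForm step Q a w v) ^ 2) :
    ∀ (e : ℕ) (a : σ), deg a + 2 + e = d → ∀ v, atlasForm step Q a v v * atlasForm step Q a w w
      ≤ (atlasForm step Q a w v) ^ 2 := by
  intro e
  induction e with
  | zero => exact base
  | succ e ih =>
    intro a hd v
    have hdR : (d : ℝ) = deg a + 3 + e := by
      rw [← hd]; push_cast; ring
    have hzero : ∀ b, deg b ≤ d → Q b = 0 → ∀ x, Q (step x b) = 0 := by
      intro b hb h0 x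
      have := euler b hb
      rw [h0, mul_zero, Finset.sum_eq_zero_iff_of_nonneg
        (fun x _ => mul_nonneg (hw x).le (hQ _))] at this
      exact (mul_eq_zero.1 (this x (Finset.mem_univ _))).resolve_left (hw x).ne'
    have hr : ∀ x, ((e : ℝ) + 2) * Q (step x a) = ∑ y, Q (step x (step y a)) * w y := by
      intro x
      have := euler (step x a) (by rw [hdeg]; omega)
      rw [hdeg, hdR] at this
      push_cast at this
      have h2 : ((e : ℝ) + 2) = (deg a + 3 + e - (deg a + 1)) := by ring
      rw [h2, ← this]
      exact Finset.sum_congr rfl fun y _ => by rw [hcomm x y]; ring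
    have hE2 : ∀ x y, ∑ z, w z * Q (step z (step y (step x a)))
        = ((e : ℝ) + 1) * Q (step x (step y a)) := by
      intro x y
      rw [euler _ (by rw [hdeg, hdeg]; omega), hdeg, hdeg, hdR, hcomm x y]
      push_cast; ring
    have hF : ∀ x u, atlasForm step Q (step x a) w u
        = ((e : ℝ) + 1) * ∑ y, Q (step x (step y a)) * u y := by
      intro x u
      unfold atlasForm
      rw [Finset.sum_comm, Finset.mul_sum]
      refine Finset.sum_congr rfl fun y _ => ?_
      rw [← Finset.sum_mul, hE2]; ring
    have hS : ∀ u, ∑ x, w x * atlasForm step Q (step x a) u u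
        = ((e : ℝ) + 1) * ∑ x, ∑ y, u x * Q (step x (step y a)) * u y := by
      intro u
      unfold atlasForm
      simp only [Finset.mul_sum]
      rw [Finset.sum_comm]
      refine Finset.sum_congr rfl fun y _ => ?_
      rw [Finset.sum_comm]
      refine Finset.sum_congr rfl fun z _ => ?_
      have h : ∑ x, w x * (u y * Q (step y (step z (step x a))) * u z)
          = u y * u z * ∑ x, w x * Q (step x (step y (step z a))) := by
        rw [Finset.mul_sum]
        refine Finset.sum_congr rfl fun x _ => ?_
        rw [hcomm z x, hcomm y x]; ring
      rw [h, hE2, hcomm z y]; ring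
    have he1 : (0 : ℝ) < e + 1 := by positivity
    have he2 : (0 : ℝ) < e + 2 := by positivity
    have hm := hyp_main (fun x y => Q (step x (step y a))) (fun x y => by rw [hcomm])
      (fun x y => hQ _) w hw (fun x => ((e : ℝ) + 2) * Q (step x a)) hr ?_ o ?_ v
    · have e1 : atlasForm step Q a w w = ∑ x, w x * (((e : ℝ) + 2) * Q (step x a)) := by
        unfold atlasForm
        refine Finset.sum_congr rfl fun x _ => ?_
        rw [hr, Finset.mul_sum]; exact Finset.sum_congr rfl fun y _ => by ring
      have e2 : atlasForm step Q a w v = ∑ x, ((e : ℝ) + 2) * Q (step x a) * v x := by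
        unfold atlasForm
        rw [Finset.sum_comm]
        refine Finset.sum_congr rfl fun x _ => ?_
        rw [hr, Finset.sum_mul]; exact Finset.sum_congr rfl fun y _ => by rw [hcomm]; ring
      rw [e1, e2]; exact hm
    · intro u
      refine le_of_mul_le_mul_left ?_ he1
      rw [← hS u, Finset.mul_sum]
      refine Finset.sum_le_sum fun x _ => ?_
      by_cases h0 : Q (step x a) = 0
      · have : atlasForm step Q (step x a) u u = 0 := by
          unfold atlasForm
          refine Finset.sum_eq_zero fun y _ => Finset.sum_eq_zero fun z _ => ?_
          have h1 := hzero _ (by rw [hdeg]; omega) h0 z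
          rw [hzero _ (by rw [hdeg, hdeg]; omega) h1 y]; ring
        rw [this, h0]; simp
      · have hpos : 0 < ((e : ℝ) + 2) * Q (step x a) :=
          mul_pos he2 (lt_of_le_of_ne (hQ _) (Ne.symm h0))
        have hi := ih (step x a) (by rw [hdeg]; omega) u
        rw [hF, hF, ← hr] at hi
        have h3 : atlasForm step Q (step x a) u u
            ≤ ((e : ℝ) + 1) * (∑ y, Q (step x (step y a)) * u y) ^ 2
              / (((e : ℝ) + 2) * Q (step x a)) := by
          rw [le_div_iff₀ hpos]
          refine le_of_mul_le_mul_left ?_ he1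
          linarith
        calc _ ≤ w x * (((e : ℝ) + 1) * (∑ y, Q (step x (step y a)) * u y) ^ 2
              / (((e : ℝ) + 2) * Q (step x a))) := mul_le_mul_of_nonneg_left h3 (hw x).le
          _ = _ := by ring
    · intro x _ hx
      refine hconn a x (by omega) ?_
      exact pos_of_mul_pos_right hx he2.le

lemma Finset.sum_filter_mem_eq_of_univ_aux {V : Type*} [Fintype V] (N : Finset V) (f : V → ℝ) :
    ∑ x, (if x ∈ N then f x else 0) = ∑ x ∈ N, f x := by
  simp

def atlasStep {V : Type*} : Option V → Multiset V × ℕ → Multiset V × ℕ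
  | none, a => (a.1, a.2 + 1)
  | some x, a => (x ::ₘ a.1, a.2)

def atlasQ {V : Type*} [Fintype V] (Ind : Finset V → Prop) (c : ℕ → ℝ) (d : ℕ) (t : ℝ)
    (a : Multiset V × ℕ) : ℝ :=
  ∑ T : Finset V, if Ind T ∧ a.1 ≤ T.val ∧ T.card + a.2 ≤ d then
    c T.card * (t ^ (d - a.2 - T.card) / (Nat.factorial (d - a.2 - T.card) : ℝ)) else 0

def atlasW {V : Type*} (t : ℝ) : Option V → ℝ
  | none => t
  | some _ => 1

lemma atlasStep_comm {V : Type*} (x y : Option V) (a : Multiset V × ℕ) :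
    atlasStep x (atlasStep y a) = atlasStep y (atlasStep x a) := by
  cases x <;> cases y <;> simp [atlasStep, Multiset.cons_swap]

lemma atlasQ_nonneg {V : Type*} [Fintype V] (Ind : Finset V → Prop) (c : ℕ → ℝ)
    (hc : ∀ j, 0 < c j) (d : ℕ) (t : ℝ) (ht : 0 < t) (a : Multiset V × ℕ) :
    0 ≤ atlasQ Ind c d t a := by
  unfold atlasQ
  refine Finset.sum_nonneg fun T _ => ?_
  split_ifs
  · have := hc T.card; positivity
  · exact le_rfl

lemma card_cons_le {V : Type*} [Fintype V] (T : Finset V) (S : Multiset V) (h : S ≤ T.val) :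
    ((Finset.univ.filter fun x => x ::ₘ S ≤ T.val).card : ℝ) = (T.card : ℝ) - S.card := by
  have e : (Finset.univ.filter fun x => x ::ₘ S ≤ T.val) = (T.val - S).toFinset := by
    ext x
    simp only [Finset.mem_filter, Finset.mem_univ, true_and, Multiset.mem_toFinset]
    rw [← Multiset.singleton_le, le_tsub_iff_right h, Multiset.singleton_add]
  have hn : (T.val - S).Nodup := Multiset.nodup_of_le (Multiset.sub_le_self _ _) T.nodup
  rw [e, Multiset.toFinset_card_of_nodup hn, Multiset.card_sub h,
    Nat.cast_sub (Multiset.card_le_card h)]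
  rfl

lemma atlasQ_mk {V : Type*} [Fintype V] (Ind : Finset V → Prop) (c : ℕ → ℝ) (d : ℕ) (t : ℝ)
    (S : Multiset V) (i : ℕ) : atlasQ Ind c d t (S, i) =
  ∑ T : Finset V, if Ind T ∧ S ≤ T.val ∧ T.card + i ≤ d then
    c T.card * (t ^ (d - i - T.card) / (Nat.factorial (d - i - T.card) : ℝ)) else 0 := rfl

lemma atlas_euler {V : Type*} [Fintype V] (Ind : Finset V → Prop) (c : ℕ → ℝ)
    (d : ℕ) (t : ℝ) (a : Multiset V × ℕ) :
    ∑ x, atlasW t x * atlasQ Ind c d t (atlasStep x a)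
      = ((d : ℝ) - ((a.1.card + a.2 : ℕ) : ℝ)) * atlasQ Ind c d t a := by
  obtain ⟨S, i⟩ := a
  rw [Fintype.sum_option]
  simp only [atlasW, atlasStep, one_mul, atlasQ_mk]
  rw [Finset.sum_comm, Finset.mul_sum, Finset.mul_sum, ← Finset.sum_add_distrib]
  refine Finset.sum_congr rfl fun T _ => ?_
  by_cases h : Ind T ∧ S ≤ T.val ∧ T.card + i ≤ d
  · obtain ⟨h1, h2, h3⟩ := h
    have e1 : ∀ x : V, (if Ind T ∧ x ::ₘ S ≤ T.val ∧ T.card + i ≤ d then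
      c T.card * (t ^ (d - i - T.card) / (Nat.factorial (d - i - T.card) : ℝ)) else 0)
      = (if x ::ₘ S ≤ T.val then (1 : ℝ) else 0) *
        (c T.card * (t ^ (d - i - T.card) / (Nat.factorial (d - i - T.card) : ℝ))) := by
      intro x; simp [h1, h3]
    simp only [e1]
    rw [← Finset.sum_mul, Finset.sum_boole, card_cons_le T S h2]
    rw [if_pos (⟨h1, h2, h3⟩ : Ind T ∧ S ≤ T.val ∧ T.card + i ≤ d)]
    obtain ⟨n, hn⟩ := Nat.exists_eq_add_of_le h3
    have hn1 : d - i - T.card = n := by omega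
    rw [hn1]
    have hdR : (d : ℝ) = T.card + i + n := by rw [hn]; push_cast; ring
    rw [hdR]
    push_cast
    cases n with
    | zero =>
      rw [if_neg (by omega)]; simp
    | succ n =>
      rw [if_pos ⟨h1, h2, by omega⟩]
      have hn2 : d - (i + 1) - T.card = n := by omega
      rw [hn2, Nat.factorial_succ]
      have : (Nat.factorial n : ℝ) ≠ 0 := by positivity
      have : (n : ℝ) + 1 ≠ 0 := by positivity
      push_cast
      field_simp
      ring
  · rw [if_neg h, if_neg (fun h' => h ⟨h'.1, h'.2.1, by omega⟩)]
    rw [Finset.sum_eq_zero, mul_zero, mul_zero, add_zero]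
    intro x _
    rw [if_neg]
    exact fun h' => h ⟨h'.1, (Multiset.le_cons_self _ _).trans h'.2.1, h'.2.2⟩

lemma atlasQ_pos {V : Type*} [Fintype V] (Ind : Finset V → Prop) (c : ℕ → ℝ)
    (hc : ∀ j, 0 < c j) (d : ℕ) (t : ℝ) (ht : 0 < t)
    (hdown : ∀ S T, S ⊆ T → Ind T → Ind S) (S : Multiset V) (i j : ℕ)
    (h : 0 < atlasQ Ind c d t (S, i)) (hj : S.card + j ≤ d) : 0 < atlasQ Ind c d t (S, j) := by
  unfold atlasQ at h
  obtain ⟨T, _, hT⟩ := Finset.exists_ne_zero_of_sum_ne_zero h.ne'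
  have hT' : Ind T ∧ S ≤ T.val ∧ T.card + i ≤ d := by
    by_contra hh; exact hT (if_neg hh)
  have hSn : S.Nodup := Multiset.nodup_of_le hT'.2.1 T.nodup
  let T0 : Finset V := ⟨S, hSn⟩
  have hI : Ind T0 := hdown T0 T (Finset.val_le_iff.1 hT'.2.1) hT'.1
  unfold atlasQ
  refine Finset.sum_pos' (fun T _ => ?_) ⟨T0, Finset.mem_univ _, ?_⟩
  · split_ifs
    · have := hc T.card; positivity
    · exact le_rfl
  · rw [if_pos ⟨hI, le_rfl, hj⟩]
    have := hc T0.card; positivity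

lemma atlasQ_top {V : Type*} [Fintype V] (Ind : Finset V → Prop) (c : ℕ → ℝ)
    (d : ℕ) (t : ℝ) (S : Multiset V) (i : ℕ) (h : S.card + i = d) :
    atlasQ Ind c d t (S, i) = if (∃ T : Finset V, T.val = S ∧ Ind T) then c S.card else 0 := by
  have key : ∀ T : Finset V, S ≤ T.val ∧ T.card + i ≤ d → T.val = S := by
    intro T hT
    refine (Multiset.eq_of_le_of_card_le hT.1 ?_).symm
    have : T.val.card = T.card := rfl
    omega
  unfold atlasQ
  split_ifs with hS
  · obtain ⟨T, rfl, hT⟩ := hS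
    rw [Finset.sum_eq_single T]
    · have : d - i - T.card = 0 := by
        have : T.val.card = T.card := rfl
        omega
      simp only [this]
      rw [if_pos ⟨hT, le_rfl, h.le⟩]; simp
    · intro T' _ hne
      rw [if_neg]
      exact fun h' => hne (Finset.val_injective (key T' h'.2))
    · simp
  · refine Finset.sum_eq_zero fun T _ => if_neg ?_
    exact fun h' => hS ⟨T, key T h'.2, h'.1⟩

lemma class_sum {V κ : Type*} (N : Finset V) (cl : V → κ) (u : V → ℝ) :
    ∑ x ∈ N, ∑ y ∈ N, (if cl x ≠ cl y then u x * u y else 0)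
      = (∑ x ∈ N, u x) ^ 2 - ∑ C ∈ N.image cl, (∑ x ∈ N with cl x = C, u x) ^ 2 := by
  have h1 : ∑ C ∈ N.image cl, (∑ x ∈ N with cl x = C, u x) ^ 2
      = ∑ x ∈ N, ∑ y ∈ N, (if cl x = cl y then u x * u y else 0) := by
    rw [← Finset.sum_fiberwise_of_maps_to (s := N) (t := N.image cl) (g := cl)
      (fun x hx => Finset.mem_image_of_mem _ hx)]
    refine Finset.sum_congr rfl fun C _ => ?_
    rw [sq, Finset.sum_mul_sum]
    refine Finset.sum_congr rfl fun x hx => ?_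
    rw [Finset.sum_filter]
    refine Finset.sum_congr rfl fun y _ => ?_
    rw [(Finset.mem_filter.1 hx).2]
    simp only [eq_comm]
  rw [h1, sq, Finset.sum_mul_sum, ← Finset.sum_sub_distrib]
  refine Finset.sum_congr rfl fun x _ => ?_
  rw [← Finset.sum_sub_distrib]
  refine Finset.sum_congr rfl fun y _ => ?_
  by_cases h : cl x = cl y <;> simp [h]

lemma base_neg {V κ : Type*} [Fintype V] (N : Finset V) (cl : V → κ) (c0 c1 c2 : ℝ)
    (h0 : 0 < c0) (h2 : 0 < c2)
    (hp : (c0 * c2 - c1 ^ 2) * (N.image cl).card ≤ c0 * c2)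
    (M : Option V → Option V → ℝ) (hM0 : M none none = c0)
    (hM1 : ∀ x, M none (some x) = if x ∈ N then c1 else 0)
    (hM1' : ∀ x, M (some x) none = if x ∈ N then c1 else 0)
    (hM2 : ∀ x y, M (some x) (some y) = if x ∈ N ∧ y ∈ N ∧ cl x ≠ cl y then c2 else 0)
    (u : Option V → ℝ) (hu : c0 * u none + c1 * ∑ x ∈ N, u (some x) = 0) :
    ∑ x, ∑ y, u x * M x y * u y ≤ 0 := by
  set Z := ∑ x ∈ N, u (some x) with hZ
  set R := ∑ C ∈ N.image cl, (∑ x ∈ N with cl x = C, u (some x)) ^ 2 with hR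
  have hZR : Z ^ 2 ≤ (N.image cl).card * R := by
    rw [hZ, ← Finset.sum_fiberwise_of_maps_to (s := N) (t := N.image cl) (g := cl)
      (fun x hx => Finset.mem_image_of_mem _ hx)]
    exact sq_sum_le_card_mul_sum_sq
  have hR0 : 0 ≤ R := Finset.sum_nonneg fun C _ => sq_nonneg _
  have e1 : ∑ y, u none * M none (some y) * u (some y) = c1 * u none * Z := by
    rw [hZ, Finset.mul_sum, ← Finset.sum_filter_mem_eq_of_univ_aux N]
    refine Finset.sum_congr rfl fun x _ => ?_
    rw [hM1]; split_ifs <;> ring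
  have e2 : ∑ y, u (some y) * M (some y) none * u none = c1 * u none * Z := by
    rw [← e1]
    refine Finset.sum_congr rfl fun x _ => ?_
    rw [hM1, hM1']; ring
  have e3 : ∑ x, ∑ y, u (some x) * M (some x) (some y) * u (some y) = c2 * (Z ^ 2 - R) := by
    rw [hZ, hR, ← class_sum N cl (fun x => u (some x)), Finset.mul_sum,
      ← Finset.sum_filter_mem_eq_of_univ_aux N]
    refine Finset.sum_congr rfl fun x _ => ?_
    split_ifs with hx
    · rw [Finset.mul_sum, ← Finset.sum_filter_mem_eq_of_univ_aux N]
      refine Finset.sum_congr rfl fun y _ => ?_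
      rw [hM2]
      by_cases hy : y ∈ N <;> by_cases hxy : cl x = cl y <;> simp [hx, hy, hxy]; ring
    · refine Finset.sum_eq_zero fun y _ => ?_
      rw [hM2]; simp [hx]
  rw [Fintype.sum_option, Fintype.sum_option]
  simp only [Fintype.sum_option (fun y => u (some _) * M (some _) y * u y)]
  rw [Finset.sum_add_distrib, e1, e2, e3, hM0]
  refine le_of_mul_le_mul_left ?_ h0
  have hu0 : c0 * u none = - (c1 * Z) := by linarith
  have e4 : c0 * (u none * c0 * u none + c1 * u none * Z + (c1 * u none * Z + c2 * (Z ^ 2 - R)))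
      = (c0 * u none) ^ 2 + 2 * c1 * Z * (c0 * u none) + c0 * c2 * Z ^ 2 - c0 * c2 * R := by ring
  rw [e4, hu0, mul_zero]
  have e5 : (-(c1 * Z)) ^ 2 + 2 * c1 * Z * (-(c1 * Z)) + c0 * c2 * Z ^ 2 - c0 * c2 * R
     = (c0 * c2 - c1 ^ 2) * Z ^ 2 - c0 * c2 * R := by ring
  rw [e5]
  by_cases hs : c0 * c2 - c1 ^ 2 ≤ 0
  · have := mul_nonneg (mul_pos h0 h2).le hR0
    nlinarith [mul_nonneg (neg_nonneg.2 hs) (sq_nonneg Z)]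
  · push Not at hs
    have a1 := mul_le_mul_of_nonneg_left hZR hs.le
    have a2 := mul_le_mul_of_nonneg_right hp hR0
    nlinarith

lemma exists_val_cons {V : Type*} (Ind : Finset V → Prop) (T0 : Finset V) (x : V) :
    (∃ T : Finset V, T.val = x ::ₘ T0.val ∧ Ind T) ↔ (x ∉ T0 ∧ Ind (insert x T0)) := by
  constructor
  · rintro ⟨T, hT, hI⟩
    have hn : (x ::ₘ T0.val).Nodup := hT ▸ T.nodup
    have hx : x ∉ T0 := (Multiset.nodup_cons.1 hn).1
    refine ⟨hx, ?_⟩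
    have : T = insert x T0 := by
      apply Finset.val_injective
      rw [hT, Finset.insert_val_of_notMem hx]
    rwa [← this]
  · rintro ⟨hx, hI⟩
    exact ⟨_, Finset.insert_val_of_notMem hx, hI⟩

lemma exists_val_cons2 {V : Type*} (Ind : Finset V → Prop) (T0 : Finset V) (x y : V) :
    (∃ T : Finset V, T.val = x ::ₘ y ::ₘ T0.val ∧ Ind T) ↔
      (x ∉ T0 ∧ y ∉ T0 ∧ x ≠ y ∧ Ind (insert x (insert y T0))) := by
  by_cases hy : y ∈ T0
  · constructor
    · rintro ⟨T, hT, hI⟩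
      have hn : (x ::ₘ y ::ₘ T0.val).Nodup := hT ▸ T.nodup
      exact absurd hy (Multiset.nodup_cons.1 (Multiset.nodup_cons.1 hn).2).1
    · rintro ⟨_, h, _⟩; exact absurd hy h
  · rw [← Finset.insert_val_of_notMem hy, exists_val_cons]
    simp only [Finset.mem_insert, not_or]
    tauto

lemma atlasForm_shift {ι σ : Type*} [Fintype ι] (step : ι → σ → σ)
    (hcomm : ∀ x y a, step x (step y a) = step y (step x a)) (Q : σ → ℝ) (a : σ)
    (v w : ι → ℝ) (s : ℝ) :
    atlasForm step Q a v v - 2 * s * atlasForm step Q a w v + s ^ 2 * atlasForm step Q a w w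
      = ∑ x, ∑ y, (v x - s * w x) * Q (step x (step y a)) * (v y - s * w y) := by
  have e : atlasForm step Q a w v = ∑ x, ∑ y, v x * Q (step x (step y a)) * w y := by
    unfold atlasForm
    rw [Finset.sum_comm]
    refine Finset.sum_congr rfl fun x _ => Finset.sum_congr rfl fun y _ => ?_
    rw [hcomm]; ring
  have e2 : 2 * s * atlasForm step Q a w v = s * atlasForm step Q a w v
    + s * ∑ x, ∑ y, v x * Q (step x (step y a)) * w y := by rw [← e]; ring
  rw [e2]
  unfold atlasForm
  simp only [Finset.mul_sum, ← Finset.sum_add_distrib, ← Finset.sum_sub_distrib]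
  exact Finset.sum_congr rfl fun x _ => Finset.sum_congr rfl fun y _ => by ring

lemma atlas_base {V κ : Type*} [Fintype V] (Ind : Finset V → Prop) (c : ℕ → ℝ)
    (hc : ∀ j, 0 < c j) (d : ℕ) (t : ℝ) (ht : 0 < t)
    (hdown : ∀ S T, S ⊆ T → Ind T → Ind S) (cl : Finset V → V → κ)
    (hcl : ∀ T0 x y, x ∉ T0 → y ∉ T0 → Ind (insert x T0) → Ind (insert y T0) →
      ((x ≠ y ∧ Ind (insert x (insert y T0))) ↔ cl T0 x ≠ cl T0 y))
    (hp : ∀ T0, Ind T0 → T0.card + 2 ≤ d →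
      (c T0.card * c (T0.card + 2) - c (T0.card + 1) ^ 2) *
        ((Finset.univ.filter fun x => x ∉ T0 ∧ Ind (insert x T0)).image (cl T0)).card
        ≤ c T0.card * c (T0.card + 2))
    (a : Multiset V × ℕ) (ha : a.1.card + a.2 + 2 = d) (v : Option V → ℝ) :
    atlasForm atlasStep (atlasQ Ind c d t) a v v *
        atlasForm atlasStep (atlasQ Ind c d t) a (atlasW t) (atlasW t)
      ≤ (atlasForm atlasStep (atlasQ Ind c d t) a (atlasW t) v) ^ 2 := by
  obtain ⟨S, i⟩ := a
  simp only at ha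
  have hW : ∀ x : Option V, 0 < atlasW t x := by
    intro x; cases x <;> simp [atlasW, ht]
  have hww : 0 ≤ atlasForm atlasStep (atlasQ Ind c d t) (S, i) (atlasW t) (atlasW t) := by
    unfold atlasForm
    exact Finset.sum_nonneg fun x _ => Finset.sum_nonneg fun y _ =>
      mul_nonneg (mul_nonneg (hW x).le (atlasQ_nonneg Ind c hc d t ht _)) (hW y).le
  by_cases hS : ∃ T : Finset V, T.val = S ∧ Ind T
  · obtain ⟨T0, rfl, hT0⟩ := hS
    have hcard : T0.val.card = T0.card := rfl
    set N := Finset.univ.filter fun x => x ∉ T0 ∧ Ind (insert x T0) with hN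
    have hM0 : atlasQ Ind c d t (atlasStep none (atlasStep none (T0.val, i))) = c T0.card := by
      simp only [atlasStep]
      rw [atlasQ_top _ _ _ _ _ _ (by omega), if_pos ⟨T0, rfl, hT0⟩, hcard]
    have hM1 : ∀ x, atlasQ Ind c d t (atlasStep none (atlasStep (some x) (T0.val, i)))
        = if x ∈ N then c (T0.card + 1) else 0 := by
      intro x
      simp only [atlasStep]
      rw [atlasQ_top _ _ _ _ _ _ (by rw [Multiset.card_cons]; omega), Multiset.card_cons, hcard]
      simp only [exists_val_cons, hN, Finset.mem_filter, Finset.mem_univ, true_and]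
    have hM2 : ∀ x y, atlasQ Ind c d t (atlasStep (some x) (atlasStep (some y) (T0.val, i)))
        = if x ∈ N ∧ y ∈ N ∧ cl T0 x ≠ cl T0 y then c (T0.card + 2) else 0 := by
      intro x y
      simp only [atlasStep]
      rw [atlasQ_top _ _ _ _ _ _ (by rw [Multiset.card_cons, Multiset.card_cons]; omega),
        Multiset.card_cons, Multiset.card_cons, hcard]
      simp only [exists_val_cons2]
      refine if_congr ?_ rfl rfl
      simp only [hN, Finset.mem_filter, Finset.mem_univ, true_and]
      constructor
      · rintro ⟨h1, h2, h3, h4⟩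
        have hx : Ind (insert x T0) :=
          hdown _ _ (Finset.insert_subset_insert _ (Finset.subset_insert _ _)) h4
        have hy : Ind (insert y T0) := hdown _ _ (Finset.subset_insert _ _) h4
        exact ⟨⟨h1, hx⟩, ⟨h2, hy⟩, (hcl T0 x y h1 h2 hx hy).1 ⟨h3, h4⟩⟩
      · rintro ⟨⟨h1, hx⟩, ⟨h2, hy⟩, h⟩
        obtain ⟨h3, h4⟩ := (hcl T0 x y h1 h2 hx hy).2 h
        exact ⟨h1, h2, h3, h4⟩
    set L : (Option V → ℝ) → ℝ := fun u =>
      c T0.card * u none + c (T0.card + 1) * ∑ x ∈ N, u (some x) with hL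
    have hLw : 0 < L (atlasW t) := by
      simp only [hL, atlasW]
      have h1 := hc T0.card
      have h2 := hc (T0.card + 1)
      have h3 : (0 : ℝ) ≤ ∑ x ∈ N, (1 : ℝ) := Finset.sum_nonneg fun _ _ => zero_le_one
      have := mul_pos h1 ht
      have := mul_nonneg h2.le h3
      linarith
    refine hyp_of_shift (s := L v / L (atlasW t)) hww ?_
    rw [atlasForm_shift _ atlasStep_comm]
    refine base_neg N (cl T0) (c T0.card) (c (T0.card + 1)) (c (T0.card + 2)) (hc _) (hc _)
      (hp T0 hT0 (by omega)) (fun x y => atlasQ Ind c d t (atlasStep x (atlasStep y (T0.val, i))))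
      hM0 hM1 ?_ hM2 (fun x => v x - L v / L (atlasW t) * atlasW t x) ?_
    · intro x
      rw [← hM1, atlasStep_comm]
    · have : ∀ s : ℝ, c T0.card * (v none - s * atlasW t (none : Option V))
          + c (T0.card + 1) * ∑ x ∈ N, (v (some x) - s * atlasW t (some x))
          = L v - s * L (atlasW t) := by
        intro s
        simp only [hL]
        rw [Finset.sum_sub_distrib, ← Finset.mul_sum]; ring
      rw [this]
      field_simp
      ring
  · have h0 : ∀ x y, atlasQ Ind c d t (atlasStep x (atlasStep y (S, i))) = 0 := by
      have hh : ∀ (S' : Multiset V), S ≤ S' → ¬ ∃ T : Finset V, T.val = S' ∧ Ind T := by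
        rintro S' hle ⟨T, rfl, hT⟩
        refine hS ⟨⟨S, Multiset.nodup_of_le hle T.nodup⟩, rfl, ?_⟩
        exact hdown _ _ (Finset.val_le_iff.1 hle) hT
      intro x y
      have hle : S ≤ (atlasStep x (atlasStep y (S, i))).1 := by
        cases x <;> cases y <;> simp only [atlasStep]
        · exact le_rfl
        · exact Multiset.le_cons_self _ _
        · exact Multiset.le_cons_self _ _
        · exact (Multiset.le_cons_self _ _).trans (Multiset.le_cons_self _ _)
      have hcd : (atlasStep x (atlasStep y (S, i))).1.card
          + (atlasStep x (atlasStep y (S, i))).2 = d := by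
        cases x <;> cases y <;> simp [atlasStep] <;> omega
      rw [show atlasStep x (atlasStep y (S, i)) = ((atlasStep x (atlasStep y (S, i))).1,
        (atlasStep x (atlasStep y (S, i))).2) from rfl, atlasQ_top _ _ _ _ _ _ hcd,
        if_neg (hh _ hle)]
    have : atlasForm atlasStep (atlasQ Ind c d t) (S, i) v v = 0 := by
      unfold atlasForm; simp [h0]
    rw [this, zero_mul]; positivity

/-- The abstract inequality. -/
lemma atlas_final {V κ : Type*} [Fintype V] (Ind : Finset V → Prop) (c : ℕ → ℝ)
    (hc : ∀ j, 0 < c j) (k : ℕ) (hk : 1 ≤ k)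
    (hdown : ∀ S T, S ⊆ T → Ind T → Ind S) (cl : Finset V → V → κ)
    (hcl : ∀ T0 x y, x ∉ T0 → y ∉ T0 → Ind (insert x T0) → Ind (insert y T0) →
      ((x ≠ y ∧ Ind (insert x (insert y T0))) ↔ cl T0 x ≠ cl T0 y))
    (hp : ∀ T0, Ind T0 → T0.card + 2 ≤ k + 1 →
      (c T0.card * c (T0.card + 2) - c (T0.card + 1) ^ 2) *
        ((Finset.univ.filter fun x => x ∉ T0 ∧ Ind (insert x T0)).image (cl T0)).card
        ≤ c T0.card * c (T0.card + 2))
    (I : ℕ → ℝ) (hI : ∀ j, I j = ((Finset.univ.filter fun T => Ind T ∧ T.card = j).card : ℝ)) :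
    (k + 1) * (c (k - 1) * I (k - 1)) * (c (k + 1) * I (k + 1)) ≤ k * (c k * I k) ^ 2 := by
  have hmain : ∀ t : ℝ, 0 < t →
      (k + 1) * atlasQ Ind c (k + 1) t (0, 2) * atlasQ Ind c (k + 1) t (0, 0)
        ≤ k * (atlasQ Ind c (k + 1) t (0, 1)) ^ 2 := by
    intro t ht
    have hW : ∀ x : Option V, 0 < atlasW t x := by
      intro x; cases x <;> simp [atlasW, ht]
    have h := hyp_local_to_global (atlasStep (V := V)) atlasStep_comm (atlasQ Ind c (k + 1) t)
      (atlasQ_nonneg Ind c hc _ t ht) (atlasW t) hW (fun a => a.1.card + a.2)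
      (by
        intro x a
        cases x <;> simp [atlasStep] <;> omega) (k + 1)
      (fun a _ => atlas_euler Ind c (k + 1) t a) none ?_
      (fun a ha v => atlas_base Ind c hc (k + 1) t ht hdown cl hcl hp a ha v)
      (k - 1) (0, 0) (by simp; omega) (fun x => if x = none then 1 else 0)
    · set Q := atlasQ Ind c (k + 1) t with hQ
      have he := atlas_euler Ind c (k + 1) t
      have f1 : atlasForm atlasStep Q (0, 0) (fun x : Option V => if x = none then (1 : ℝ) else 0)
          (fun x => if x = none then (1 : ℝ) else 0) = Q (0, 2) := by
        unfold atlasForm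
        simp [atlasStep]
      have f2 : atlasForm atlasStep Q (0, 0) (atlasW t)
          (fun x : Option V => if x = none then (1 : ℝ) else 0) = k * Q (0, 1) := by
        have := he (0, 1)
        unfold atlasForm
        simp only [mul_ite, mul_one, mul_zero, Finset.sum_ite_eq', Finset.mem_univ, if_true]
        simp only [Multiset.card_zero] at this
        push_cast at this
        rw [show (k : ℝ) = k + 1 - 1 by ring, ← this]
        rfl
      have f3 : atlasForm atlasStep Q (0, 0) (atlasW t) (atlasW t)
          = k * ((k + 1) * Q (0, 0)) := by
        have h0 := he (0, 0)
        simp only [Multiset.card_zero] at h0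
        push_cast at h0
        unfold atlasForm
        rw [Finset.sum_comm, show ((k : ℝ) + 1) = k + 1 - 0 by ring, ← h0, Finset.mul_sum]
        refine Finset.sum_congr rfl fun x _ => ?_
        have h1 := he (atlasStep x (0, 0))
        have h2 : (atlasStep x ((0 : Multiset V), 0)).1.card + (atlasStep x ((0 : Multiset V), 0)).2
          = 1 := by cases x <;> simp [atlasStep]
        rw [h2] at h1
        push_cast at h1
        rw [← Finset.sum_mul, h1]; ring
      rw [f1, f2, f3] at h
      have hk0 : (0 : ℝ) < k := by exact_mod_cast hk
      refine le_of_mul_le_mul_left ?_ hk0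
      nlinarith
    · rintro ⟨S, i⟩ x hd hx
      simp only at hd
      cases x with
      | none =>
        simp only [atlasStep] at hx ⊢
        exact atlasQ_pos Ind c hc _ t ht hdown S _ _ hx (by omega)
      | some x =>
        simp only [atlasStep] at hx ⊢
        exact atlasQ_pos Ind c hc _ t ht hdown _ _ _ hx (by simp; omega)
  have hcont : ∀ i, Continuous fun t : ℝ => atlasQ Ind c (k + 1) t (0, i) := by
    intro i
    simp only [atlasQ_mk]
    refine continuous_finsetSum _ fun T _ => ?_
    split_ifs <;> fun_prop
  have hzero : ∀ i, i ≤ k + 1 → atlasQ Ind c (k + 1) 0 (0, i) = c (k + 1 - i) * I (k + 1 - i) := by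
    intro i hi
    rw [atlasQ_mk, hI, Finset.card_filter]
    push_cast
    rw [Finset.mul_sum]
    refine Finset.sum_congr rfl fun T _ => ?_
    by_cases h1 : Ind T
    · by_cases h2 : T.card = k + 1 - i
      · rw [if_pos ⟨h1, Multiset.zero_le _, by omega⟩, if_pos ⟨h1, h2⟩]
        simp [h2]
      · rw [if_neg (show ¬ (Ind T ∧ T.card = k + 1 - i) from fun h => h2 h.2), mul_zero]
        split_ifs with h3
        · rw [zero_pow (by omega)]; simp
        · rfl
    · simp [h1]
  have hlim : (k + 1) * atlasQ Ind c (k + 1) 0 (0, 2) * atlasQ Ind c (k + 1) 0 (0, 0)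
        ≤ k * (atlasQ Ind c (k + 1) 0 (0, 1)) ^ 2 := by
    have c0 := hcont 0
    have c1 := hcont 1
    have c2 := hcont 2
    have hl : Continuous fun t : ℝ =>
      (k + 1 : ℝ) * atlasQ Ind c (k + 1) t (0, 2) * atlasQ Ind c (k + 1) t (0, 0) :=
      (continuous_const.mul c2).mul c0
    have hr : Continuous fun t : ℝ => (k : ℝ) * (atlasQ Ind c (k + 1) t (0, 1)) ^ 2 :=
      continuous_const.mul (c1.pow 2)
    have hcl := isClosed_le hl hr
    have h0 : (0 : ℝ) ∈ closure (Set.Ioi (0 : ℝ)) := by simp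
    exact hcl.closure_subset_iff.2 (fun t ht => hmain t ht) h0
  rw [hzero 2 (by omega), hzero 1 (by omega), hzero 0 (by omega)] at hlim
  exact hlim

lemma span_class_card {F V : Type*} [Field F] [Fintype F] [AddCommGroup V] [Module F V]
    [Fintype V] (T0 : Finset V) (hT0 : LinearIndepOn F id (T0 : Set V)) (N : Finset V)
    (hN : ∀ x ∈ N, x ∉ Submodule.span F (T0 : Set V)) :
    (N.image fun x => Submodule.span F (insert x (T0 : Set V))).card + 1
      ≤ Fintype.card F ^ (Module.finrank F V - T0.card) := by
  set W := Submodule.span F (T0 : Set V) with hW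
  have hfin : Module.finrank F (V ⧸ W) = Module.finrank F V - T0.card := by
    have h1 := Submodule.finrank_quotient_add_finrank W
    have h2 : Module.finrank F W = T0.card := finrank_span_finset_eq_card hT0
    omega
  have hcard : Fintype.card (V ⧸ W) = Fintype.card F ^ (Module.finrank F V - T0.card) := by
    rw [← hfin]; exact Module.card_eq_pow_finrank
  rw [← hcard]
  have hsub : (N.image fun x => Submodule.span F (insert x (T0 : Set V)))
      ⊆ ((Finset.univ.erase (0 : V ⧸ W)).image
        fun z => (Submodule.span F {z}).comap W.mkQ) := by
    intro C hC
    obtain ⟨x, hx, rfl⟩ := Finset.mem_image.1 hC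
    refine Finset.mem_image.2 ⟨W.mkQ x, ?_, ?_⟩
    · simp only [Finset.mem_erase, Finset.mem_univ, and_true]
      intro h0
      exact hN x hx ((Submodule.Quotient.mk_eq_zero W).1 h0)
    · rw [Submodule.span_insert, ← hW, ← Set.image_singleton, ← Submodule.map_span,
        Submodule.comap_map_mkQ, sup_comm]
  have h1 := (Finset.card_le_card hsub).trans Finset.card_image_le
  rw [Finset.card_erase_of_mem (Finset.mem_univ _), Finset.card_univ] at h1
  have : 0 < Fintype.card (V ⧸ W) := Fintype.card_pos
  omega

lemma span_class_iff {F V : Type*} [Field F] [AddCommGroup V] [Module F V]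
    (T0 : Finset V) (x y : V) (hx : x ∉ T0) (hy : y ∉ T0)
    (hxI : LinearIndepOn F id ((insert x T0 : Finset V) : Set V))
    (hyI : LinearIndepOn F id ((insert y T0 : Finset V) : Set V)) :
    (x ≠ y ∧ LinearIndepOn F id ((insert x (insert y T0) : Finset V) : Set V)) ↔
      Submodule.span F (insert x (T0 : Set V)) ≠ Submodule.span F (insert y (T0 : Set V)) := by
  rw [Finset.coe_insert] at hxI
  have hxs := ((linearIndepOn_id_insert (by simpa using hx)).1 hxI).2
  constructor
  · rintro ⟨hne, hI⟩ heq
    rw [Finset.coe_insert, linearIndepOn_id_insert (by simp [hne, hx]), Finset.coe_insert] at hI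
    apply hI.2
    rw [← heq]
    exact Submodule.subset_span (Set.mem_insert _ _)
  · intro h
    have hne : x ≠ y := fun e => h (by rw [e])
    refine ⟨hne, ?_⟩
    rw [Finset.coe_insert, linearIndepOn_id_insert (by simp [hne, hx])]
    refine ⟨hyI, ?_⟩
    rw [Finset.coe_insert]
    intro hmem
    have hmem2 := mem_span_insert_exchange hmem hxs
    apply h
    apply le_antisymm
    · refine Submodule.span_le.2 (Set.insert_subset hmem ?_)
      exact (Set.subset_insert _ _).trans Submodule.subset_span
    · refine Submodule.span_le.2 (Set.insert_subset hmem2 ?_)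
      exact (Set.subset_insert _ _).trans Submodule.subset_span

lemma log_concavity_general
    (q : ℕ) (F V : Type*) [Field F] [Fintype F] [AddCommGroup V] [Module F V] [Fintype V]
    (hq : Fintype.card F = q) (m : ℕ) (hmV : Module.finrank F V = m)
    (X : Finset V) (k : ℕ) (hk1 : 1 ≤ k) (hk2 : k < m) (I : ℕ → ℕ)
    (hI : ∀ j, I j = (X.powerset.filter (fun S => S.card = j ∧
      LinearIndependent F (fun v : {x // x ∈ S} => (v : V)))).card) :
    ((1 : ℝ) + 1 / (k : ℝ)) * (1 + 1 / ((q : ℝ) ^ (m - k + 1) - 2)) *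
        (I (k - 1) : ℝ) * (I (k + 1) : ℝ) ≤ (I k : ℝ) ^ 2 := by
  have hq2 : 2 ≤ q := hq ▸ Fintype.one_lt_card
  have hQ4 : (4 : ℝ) ≤ (q : ℝ) ^ (m - k + 1) := by
    have h1 : 2 ^ 2 ≤ q ^ (m - k + 1) :=
      (Nat.pow_le_pow_left hq2 2).trans (Nat.pow_le_pow_right (by omega) (by omega))
    have h2 : ((2 ^ 2 : ℕ) : ℝ) ≤ ((q ^ (m - k + 1) : ℕ) : ℝ) := by exact_mod_cast h1
    push_cast at h2
    linarith
  set P : ℝ := (q : ℝ) ^ (m - k + 1) with hP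
  set D : ℝ := 1 + 1 / (P - 2) with hD
  have hP2 : 0 < P - 2 := by linarith
  have hD1 : 1 ≤ D := by
    have : 0 ≤ 1 / (P - 2) := by positivity
    linarith
  set c : ℕ → ℝ := fun j => if j + 1 ≤ k then D else 1 with hcdef
  have hc : ∀ j, 0 < c j := by
    intro j; simp only [hcdef]; split_ifs <;> linarith
  set Ind : Finset V → Prop := fun T => T ⊆ X ∧
    LinearIndepOn F id (T : Set V) with hInd
  have h := atlas_final Ind c hc k hk1
    (fun S T hST hT => ⟨hST.trans hT.1, hT.2.mono (by exact_mod_cast hST)⟩)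
    (fun T0 x => Submodule.span F (insert x (T0 : Set V))) ?_ ?_
    (fun j => (I j : ℝ)) ?_
  · have c1 : c (k - 1) = D := by simp only [hcdef]; rw [if_pos (by omega)]
    have c2 : c k = 1 := by simp only [hcdef]; rw [if_neg (by omega)]
    have c3 : c (k + 1) = 1 := by simp only [hcdef]; rw [if_neg (by omega)]
    simp only [c1, c2, c3, one_mul] at h
    have hk0 : (0 : ℝ) < k := by exact_mod_cast hk1
    refine le_of_mul_le_mul_left ?_ hk0
    refine le_trans (le_of_eq ?_) h
    field_simp
  · intro T0 x y hx hy hxI hyI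
    rw [← span_class_iff T0 x y hx hy hxI.2 hyI.2]
    have : insert x (insert y T0) ⊆ X := by
      intro z hz
      rcases Finset.mem_insert.1 hz with rfl | hz
      · exact hxI.1 (Finset.mem_insert_self _ _)
      · exact hyI.1 hz
    simp [hInd, this]
  · intro T0 hT0 hT0k
    by_cases hj : T0.card + 1 = k
    · have c1 : c T0.card = D := by simp only [hcdef]; rw [if_pos (by omega)]
      have c2 : c (T0.card + 1) = 1 := by simp only [hcdef]; rw [if_neg (by omega)]
      have c3 : c (T0.card + 2) = 1 := by simp only [hcdef]; rw [if_neg (by omega)]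
      rw [c1, c2, c3]
      have hcount := span_class_card T0 hT0.2
        (Finset.univ.filter fun x => x ∉ T0 ∧ Ind (insert x T0)) (by
          intro x hx
          obtain ⟨hx1, hx2⟩ := (Finset.mem_filter.1 hx).2
          have := hx2.2
          rw [Finset.coe_insert] at this
          exact ((linearIndepOn_id_insert (by simpa using hx1)).1 this).2)
      rw [hq, hmV, show m - T0.card = m - k + 1 by omega] at hcount
      have hcR : ((((Finset.univ.filter fun x => x ∉ T0 ∧ Ind (insert x T0)).image
          fun x => Submodule.span F (insert x (T0 : Set V))).card : ℝ)) + 1 ≤ P := by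
        rw [hP]; exact_mod_cast hcount
      have e1 : D * 1 - 1 ^ 2 = 1 / (P - 2) := by rw [hD]; ring
      have e2 : D * 1 = 1 / (P - 2) * (P - 1) := by rw [hD]; field_simp; ring
      rw [e1, e2]
      refine mul_le_mul_of_nonneg_left ?_ (by positivity)
      refine le_trans (le_of_eq ?_) (le_sub_iff_add_le.2 hcR)
      congr!
    · have hle : c T0.card * c (T0.card + 2) ≤ c (T0.card + 1) ^ 2 := by
        have c1 : c T0.card = D := by simp only [hcdef]; rw [if_pos (by omega)]
        have c2 : c (T0.card + 1) = D := by simp only [hcdef]; rw [if_pos (by omega)]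
        have c3 : c (T0.card + 2) ≤ D := by simp only [hcdef]; split_ifs <;> linarith
        rw [c1, c2, sq]
        exact mul_le_mul_of_nonneg_left c3 (by linarith)
      refine le_trans (mul_nonpos_of_nonpos_of_nonneg (by linarith) (Nat.cast_nonneg _)) ?_
      exact (mul_pos (hc _) (hc _)).le
  · intro j
    simp only [hI]
    congr 2
    ext T
    simp only [Finset.mem_filter, Finset.mem_powerset, Finset.mem_univ, true_and, hInd]
    constructor
    · rintro ⟨h1, h2, h3⟩; exact ⟨⟨h1, h3⟩, h2⟩
    · rintro ⟨⟨h1, h3⟩, h2⟩; exact ⟨h1, h2, h3⟩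

/-- **Refined log-concavity for matroids over finite fields.**  If `X ⊆ F_q^m` spans `F_q^m`,
then the numbers `I(k)` of linearly independent `k`-subsets of `X` satisfy
`I(k)² ≥ (1 + 1/k)·(1 + 1/(q^{m-k+1} - 2))·I(k-1)·I(k+1)` for all `1 ≤ k < m`. -/
theorem finite_field_matroid_log_concavity
    (q : ℕ) (F : Type*) [Field F] [Fintype F] (hq : Fintype.card F = q)
    (m : ℕ) (hm : 1 ≤ m)
    (X : Finset (Fin m → F))
    (hspan : Submodule.span F (X : Set (Fin m → F)) = ⊤)
    (k : ℕ) (hk1 : 1 ≤ k) (hk2 : k < m) :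
    ((1 : ℝ) + 1 / (k : ℝ)) * (1 + 1 / ((q : ℝ) ^ (m - k + 1) - 2)) *
        (numLinIndepSets F X (k - 1) : ℝ) * (numLinIndepSets F X (k + 1) : ℝ) ≤
      (numLinIndepSets F X k : ℝ) ^ 2 := by
  exact log_concavity_general q F (Fin m → F) hq m (Module.finrank_fin_fun F) X k hk1 hk2
    (numLinIndepSets F X) (fun j => rfl)
end
end

section
/- Let D = ([n], J) be a discrete polymatroid, let ω : [n] → ℝ_{>0} be a positive weight function, let t ∈ [0,1], and let k be an integer with 1 ≤ k < rk(D); assume p(k−1) − 1 + t > 0 (which is automatic when t > 0). Then J_{ω,t}(k)² ≥ (1 + 1/k)·(1 + (1 − t)/(p(k−1) − 1 + t))·J_{ω,t}(k−1)·J_{ω,t}(k+1). -/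
open scoped Classical BigOperators

noncomputable section

variable {n : ℕ}

/-- The rank of a discrete polymatroid: the maximal size `|a| = a_1 + … + a_n` of an
independent multiset. -/
def polyRk (J : Finset (Fin n → ℕ)) : ℕ := J.sup (fun a => ∑ i, a i)

/-- The independent multisets of size `k`. -/
def polySize (J : Finset (Fin n → ℕ)) (k : ℕ) : Finset (Fin n → ℕ) :=
  J.filter (fun a => (∑ i, a i) = k)

/-- The set of continuations of `a`. -/
def pCont (J : Finset (Fin n → ℕ)) (a : Fin n → ℕ) : Finset (Fin n) :=
  Finset.univ.filter (fun i => a + Pi.single i 1 ∈ J)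

/-- The parallel class of `i ∈ Cnt(a)`:  the set of continuations `j` with `j ∼_a i`, i.e.
`j = i` or `a + e_i + e_j ∉ J`. -/
def pParClass (J : Finset (Fin n → ℕ)) (a : Fin n → ℕ) (i : Fin n) : Finset (Fin n) :=
  (pCont J a).filter (fun j => j = i ∨ a + Pi.single i 1 + Pi.single j 1 ∉ J)

/-- The set `Par(a)` of parallel classes of `a`. -/
def pParClasses (J : Finset (Fin n → ℕ)) (a : Fin n → ℕ) : Finset (Finset (Fin n)) :=
  (pCont J a).image (pParClass J a)

/-- The `k`-continuation number `p(k)` of a discrete polymatroid. -/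
def pContNum (J : Finset (Fin n → ℕ)) (k : ℕ) : ℕ :=
  (polySize J k).sup (fun a => (pParClasses J a).card)

/-- The weighted count `J_{ω,t}(k) = Σ_{a ∈ J_k} t^{π(a)}·ω(a)/a!`, where
`π(a) = Σ_i a_i (a_i - 1)/2`, `ω(a) = Π_i ω(i)^{a_i}` and `a! = Π_i a_i!`. -/
def Jwt (J : Finset (Fin n → ℕ)) (ω : Fin n → ℝ) (t : ℝ) (k : ℕ) : ℝ :=
  ∑ a ∈ polySize J k,
    t ^ (∑ i, Nat.choose (a i) 2) * (∏ i, ω i ^ a i) / (∏ i, ((a i).factorial : ℝ))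

/-- The weighted count `J_ω(k) = Σ_{a ∈ J_k} ω(a)/a!`. -/
def Jw (J : Finset (Fin n → ℕ)) (ω : Fin n → ℝ) (k : ℕ) : ℝ :=
  ∑ a ∈ polySize J k, (∏ i, ω i ^ a i) / (∏ i, ((a i).factorial : ℝ))



theorem aux_quad {A B C l : ℝ} (hC : 0 ≤ C) (h : A - 2*l*B + l^2*C ≤ 0) : A * C ≤ B^2 := by
  nlinarith [sq_nonneg (l*C - B), mul_nonneg hC (neg_nonneg.2 h)]

theorem perron_hyp {ι : Type*} [Fintype ι] (M : Matrix ι ι ℝ) (hsym : ∀ i j, M i j = M j i)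
    (hnn : ∀ i j, 0 ≤ M i j) (ω : ι → ℝ) (hω : ∀ i, 0 < ω i)
    (r : ι → ℝ) (hr : ∀ i, r i = ∑ j, M i j * ω j)
    (hconn : ∀ i j, 0 < r i → 0 < r j → ∃ l, 0 < M i l ∧ 0 < M l j)
    (hpull : ∀ u : ι → ℝ, ∑ i, u i * ∑ j, M i j * u j ≤
      ∑ i, ω i / r i * (∑ j, M i j * u j)^2) (u : ι → ℝ) :
    (∑ i, u i * ∑ j, M i j * u j) * (∑ i, ω i * r i) ≤ (∑ i, u i * r i)^2 := by
  have hr0 : ∀ i, 0 ≤ r i := fun i => by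
    rw [hr]; exact Finset.sum_nonneg fun j _ => mul_nonneg (hnn i j) (hω j).le
  have hrow : ∀ i, r i = 0 → ∀ j, M i j = 0 := by
    intro i hi j
    rw [hr, Finset.sum_eq_zero_iff_of_nonneg (fun j _ => mul_nonneg (hnn i j) (hω j).le)] at hi
    have := hi j (Finset.mem_univ _)
    rcases mul_eq_zero.1 this with h | h
    · exact h
    · exact absurd h (hω j).ne'
  set R := ∑ i, ω i * r i with hR
  have hR0 : 0 ≤ R := Finset.sum_nonneg fun i _ => mul_nonneg (hω i).le (hr0 i)
  rcases hR0.eq_or_lt with hRz | hRpos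
  · rw [← hRz]; simp; positivity
  set σ : ι → ℝ := fun i => Real.sqrt (ω i / r i) with hσ
  have hσ2 : ∀ i, σ i * σ i = ω i / r i := fun i =>
    Real.mul_self_sqrt (div_nonneg (hω i).le (hr0 i))
  -- q i = sqrt (r i * ω i)
  set q : ι → ℝ := fun i => σ i * r i with hq
  have hσq : ∀ i, r i ≠ 0 → σ i * q i = ω i := by
    intro i hi
    simp only [hq]
    rw [← mul_assoc, hσ2]; field_simp
  have hqq : ∀ i, q i * q i = ω i * r i := by
    intro i
    simp only [hq]
    by_cases hi : r i = 0
    · simp [hi]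
    · have := hσ2 i
      calc σ i * r i * (σ i * r i) = (σ i * σ i) * r i * r i := by ring
        _ = _ := by rw [this]; field_simp
  have hσM : ∀ i (v : ι → ℝ), (∑ j, M i j * (σ j * q j * v j)) = ∑ j, M i j * (ω j * v j) := by
    intro i v
    refine Finset.sum_congr rfl fun j _ => ?_
    by_cases hj : r j = 0
    · rw [hsym, hrow j hj i]; simp
    · rw [hσq j hj]
  set C : Matrix ι ι ℝ := Matrix.of (fun i j => q i * q j / R - σ i * M i j * σ j) with hC
  have hCv : ∀ v i, (C.mulVec v) i = q i * (∑ j, q j * v j) / R - σ i * ∑ j, M i j * (σ j * v j) := by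
    intro v i
    simp only [hC, Matrix.mulVec, dotProduct, Matrix.of_apply, sub_mul, Finset.sum_sub_distrib,
      Finset.mul_sum, Finset.sum_div]
    congr 1 <;> exact Finset.sum_congr rfl fun j _ => by ring
  have hherm : C.IsHermitian := by
    ext i j
    simp only [hC, Matrix.conjTranspose_apply, Matrix.of_apply, star_trivial]
    rw [hsym i j]; ring
  have hpsd : C.PosSemidef := by
    rw [hherm.posSemidef_iff_eigenvalues_nonneg]
    intro k
    by_contra hneg
    simp only [Pi.zero_apply, not_le] at hneg
    set lam := - hherm.eigenvalues k with hlam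
    have hlpos : 0 < lam := by linarith
    set v : ι → ℝ := ⇑(hherm.eigenvectorBasis k) with hv
    have hvne : ∃ i, v i ≠ 0 := by
      by_contra hall
      push Not at hall
      have h1 := hherm.eigenvectorBasis.orthonormal.ne_zero k
      apply h1
      ext i
      exact hall i
    have heig : ∀ i, q i * (∑ j, q j * v j) / R - σ i * ∑ j, M i j * (σ j * v j) = - lam * v i := by
      intro i
      rw [← hCv, hlam, neg_neg]
      have := congrFun (hherm.mulVec_eigenvectorBasis k) i
      simpa using this
    -- q·v = 0
    have hqM : ∑ i, q i * (σ i * ∑ j, M i j * (σ j * v j)) = ∑ j, q j * v j := by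
      have : ∀ i, q i * (σ i * ∑ j, M i j * (σ j * v j)) = ∑ j, (M j i * (σ i * q i * 1)) * (σ j * v j) := by
        intro i
        rw [Finset.mul_sum, Finset.mul_sum]
        exact Finset.sum_congr rfl fun j _ => by rw [hsym i j]; ring
      simp_rw [this]
      rw [Finset.sum_comm]
      refine Finset.sum_congr rfl fun j _ => ?_
      rw [← Finset.sum_mul, hσM]
      simp only [mul_one, ← hr, hq]; ring
    have hqv : ∑ j, q j * v j = 0 := by
      have h1 : ∑ i, q i * (q i * (∑ j, q j * v j) / R - σ i * ∑ j, M i j * (σ j * v j))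
          = ∑ i, q i * (- lam * v i) := Finset.sum_congr rfl fun i _ => by rw [heig]
      simp only [mul_sub, Finset.sum_sub_distrib] at h1
      rw [hqM] at h1
      have h2 : ∑ i, q i * (q i * (∑ j, q j * v j) / R) = ∑ j, q j * v j := by
        have : ∀ i, q i * (q i * (∑ j, q j * v j) / R) = (q i * q i) * ((∑ j, q j * v j) / R) := by
          intro i; ring
        simp_rw [this, ← Finset.sum_mul, hqq, ← hR]
        field_simp
      have h3 : ∑ i, q i * (- lam * v i) = - lam * ∑ j, q j * v j := by
        rw [Finset.mul_sum]; exact Finset.sum_congr rfl fun j _ => by ring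
      rw [h2, h3] at h1
      have : lam * ∑ j, q j * v j = 0 := by linarith
      rcases mul_eq_zero.1 this with h | h
      · exact absurd h hlpos.ne'
      · exact h
    have heig2 : ∀ i, σ i * ∑ j, M i j * (σ j * v j) = lam * v i := by
      intro i
      have := heig i
      rw [hqv] at this
      simp at this
      linarith
    have hvz : ∀ i, r i = 0 → v i = 0 := by
      intro i hi
      have := heig2 i
      simp [hσ, hi] at this
      rcases this with h | h
      · exact absurd h hlpos.ne'
      · exact h
    have hN : 0 < ∑ i, v i ^ 2 := by
      obtain ⟨i, hi⟩ := hvne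
      exact Finset.sum_pos' (fun i _ => sq_nonneg _) ⟨i, Finset.mem_univ _, by positivity⟩
    have hqf : ∑ i, (σ i * v i) * ∑ j, M i j * (σ j * v j) = lam * ∑ i, v i ^ 2 := by
      rw [Finset.mul_sum]
      refine Finset.sum_congr rfl fun i _ => ?_
      have := heig2 i
      calc _ = v i * (σ i * ∑ j, M i j * (σ j * v j)) := by ring
        _ = _ := by rw [this]; ring
    have hp := hpull (fun i => σ i * v i)
    have hsqf : ∑ i, ω i / r i * (∑ j, M i j * (σ j * v j))^2 = lam ^ 2 * ∑ i, v i ^ 2 := by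
      rw [Finset.mul_sum]
      refine Finset.sum_congr rfl fun i _ => ?_
      rw [← hσ2 i]
      have := heig2 i
      calc _ = (σ i * ∑ j, M i j * (σ j * v j))^2 := by ring
        _ = _ := by rw [this]; ring
    rw [hqf, hsqf] at hp
    have hl1 : 1 ≤ lam := by
      have := le_of_mul_le_mul_right hp hN
      nlinarith
    -- Perron
    set z : ι → ℝ := fun i => σ i * v i / ω i with hz
    have hzz : ∀ i, σ i * v i = ω i * z i := by
      intro i; simp only [hz]; have := (hω i).ne'; field_simp
    have hdir : ∑ i, ∑ j, M i j * ω i * ω j * (z i - z j)^2 = 2 * (1 - lam) * ∑ i, v i ^ 2 := by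
      have e1 : ∀ i j, M i j * ω i * ω j * (z i - z j)^2 =
          ω i * z i ^ 2 * (M i j * ω j) + ω j * z j ^ 2 * (M j i * ω i) -
          2 * ((σ i * v i) * (M i j * (σ j * v j))) := by
        intro i j; rw [hzz, hzz, hsym j i]; ring
      simp_rw [e1, Finset.sum_sub_distrib, Finset.sum_add_distrib]
      have e2 : ∑ i, ∑ j, ω i * z i ^ 2 * (M i j * ω j) = ∑ i, v i ^ 2 := by
        refine Finset.sum_congr rfl fun i _ => ?_
        rw [← Finset.mul_sum, ← hr]
        by_cases hi : r i = 0
        · rw [hvz i hi, hi]; simp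
        · have h1 := hσ2 i
          simp only [hz]
          have := (hω i).ne'
          calc ω i * (σ i * v i / ω i)^2 * r i = (σ i * σ i) * v i ^ 2 / ω i * r i := by
                field_simp
            _ = _ := by rw [h1]; field_simp
      have e3 : ∑ i, ∑ j, ω j * z j ^ 2 * (M j i * ω i) = ∑ i, v i ^ 2 := by
        rw [Finset.sum_comm]; exact e2
      rw [e2, e3]
      simp_rw [← Finset.mul_sum]
      rw [hqf]; ring
    have hnn2 : ∀ i j, 0 ≤ M i j * ω i * ω j * (z i - z j)^2 := fun i j =>
      mul_nonneg (mul_nonneg (mul_nonneg (hnn i j) (hω i).le) (hω j).le) (sq_nonneg _)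
    have hzero : ∑ i, ∑ j, M i j * ω i * ω j * (z i - z j)^2 = 0 := by
      apply le_antisymm
      · rw [hdir]; nlinarith
      · exact Finset.sum_nonneg fun i _ => Finset.sum_nonneg fun j _ => hnn2 i j
    have hadj : ∀ i j, 0 < M i j → z i = z j := by
      intro i j hij
      rw [Finset.sum_eq_zero_iff_of_nonneg
        (fun i _ => Finset.sum_nonneg fun j _ => hnn2 i j)] at hzero
      have h1 := hzero i (Finset.mem_univ _)
      rw [Finset.sum_eq_zero_iff_of_nonneg (fun j _ => hnn2 i j)] at h1
      have h2 := h1 j (Finset.mem_univ _)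
      have h3 : 0 < M i j * ω i * ω j := mul_pos (mul_pos hij (hω i)) (hω j)
      rcases mul_eq_zero.1 h2 with h | h
      · exact absurd h h3.ne'
      · have := pow_eq_zero_iff (two_ne_zero) |>.1 h
        linarith
    obtain ⟨i0, hi0⟩ := hvne
    have hri0 : 0 < r i0 := lt_of_le_of_ne (hr0 i0) (fun h => hi0 (hvz i0 h.symm))
    have hconst : ∀ i, 0 < r i → z i = z i0 := by
      intro i hi
      obtain ⟨l, h1, h2⟩ := hconn i i0 hi hri0
      rw [hadj _ _ h1, hadj _ _ h2]
    have hqv2 : ∑ j, q j * v j = z i0 * R := by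
      rw [hR, Finset.mul_sum]
      refine Finset.sum_congr rfl fun i _ => ?_
      rcases (hr0 i).eq_or_lt with h | h
      · simp [hq, ← h]
      · rw [← hconst i h]
        calc q i * v i = (σ i * v i) * r i := by simp only [hq]; ring
          _ = _ := by rw [hzz]; ring
    rw [hqv] at hqv2
    have hz0 : z i0 = 0 := by
      rcases mul_eq_zero.1 hqv2.symm with h | h
      · exact h
      · exact absurd h hRpos.ne'
    have : σ i0 * v i0 = 0 := by rw [hzz, hz0, mul_zero]
    rcases mul_eq_zero.1 this with h | h
    · have h1 := hσ2 i0
      rw [h] at h1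
      have : 0 < ω i0 / r i0 := div_pos (hω i0) hri0
      linarith
    · exact hi0 h
  -- conclusion
  have hfin := hpsd.dotProduct_mulVec_nonneg (fun i => q i * (u i / ω i))
  have hfin2 : 0 ≤ ∑ i, q i * (u i / ω i) * (q i * (∑ j, q j * (q j * (u j / ω j))) / R
      - σ i * ∑ j, M i j * (σ j * (q j * (u j / ω j)))) := by
    have : ∀ i, q i * (u i / ω i) * (q i * (∑ j, q j * (q j * (u j / ω j))) / R
      - σ i * ∑ j, M i j * (σ j * (q j * (u j / ω j)))) = (fun i => q i * (u i / ω i)) i *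
        (C.mulVec (fun i => q i * (u i / ω i))) i := fun i => by rw [hCv]
    simp_rw [this]
    simpa [dotProduct] using hfin
  have e0 : ∀ i, q i * (q i * (u i / ω i)) = u i * r i := by
    intro i
    rw [← mul_assoc, hqq]
    have := (hω i).ne'
    field_simp
  have e1 : ∀ i, ∑ j, M i j * (σ j * (q j * (u j / ω j))) = ∑ j, M i j * u j := by
    intro i
    have := hσM i (fun j => u j / ω j)
    simp only [← mul_assoc] at this ⊢
    rw [this]
    refine Finset.sum_congr rfl fun j _ => ?_
    have := (hω j).ne'
    field_simp
  simp only [e0, e1] at hfin2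
  have e2 : ∀ i, q i * (u i / ω i) * (q i * (∑ j, u j * r j) / R - σ i * ∑ j, M i j * u j) =
      u i * r i * ((∑ j, u j * r j) / R) - u i * ∑ j, M i j * u j := by
    intro i
    by_cases hi : r i = 0
    · simp [hq, hi, hrow i hi]
    · have h1 := e0 i
      have h2 := hσq i hi
      have := (hω i).ne'
      calc _ = (q i * (q i * (u i / ω i))) * ((∑ j, u j * r j) / R)
            - (σ i * q i) * (u i / ω i) * ∑ j, M i j * u j := by ring
        _ = _ := by rw [h1, h2]; field_simp
  simp only [e2, Finset.sum_sub_distrib, ← Finset.sum_mul] at hfin2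
  have : (∑ i, u i * ∑ j, M i j * u j) ≤ (∑ j, u j * r j) * ((∑ j, u j * r j) / R) := by linarith
  calc _ ≤ (∑ j, u j * r j) * ((∑ j, u j * r j) / R) * R := by gcongr
    _ = _ := by field_simp

theorem range_of_orth {ι : Type*} [Fintype ι] (M : Matrix ι ι ℝ) (hsym : ∀ i j, M i j = M j i)
    (q : ι → ℝ) (hq : ∀ z : ι → ℝ, (∀ i, ∑ j, M i j * z j = 0) → ∑ i, q i * z i = 0) :
    ∃ u : ι → ℝ, ∀ i, ∑ j, M i j * u j = q i := by
  have hs : M.IsHermitian := by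
    ext i j; simp [Matrix.conjTranspose_apply, hsym i j]
  have hT := Matrix.isSymmetric_toEuclideanLin_iff.2 hs
  have h1 := hT.orthogonal_range
  have h2 : LinearMap.range (Matrix.toEuclideanLin M) = (LinearMap.ker (Matrix.toEuclideanLin M))ᗮ := by
    rw [← h1, Submodule.orthogonal_orthogonal]
  have h3 : WithLp.toLp 2 q ∈ LinearMap.range (Matrix.toEuclideanLin M) := by
    rw [h2, Submodule.mem_orthogonal]
    intro z hz
    have hz' : ∀ i, ∑ j, M i j * z j = 0 := by
      intro i
      have := congrArg (fun x : EuclideanSpace ℝ ι => x i) (LinearMap.mem_ker.1 hz)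
      simpa [Matrix.toLpLin_apply, Matrix.mulVec, dotProduct] using this
    have := hq z hz'
    simpa [PiLp.inner_apply] using this
  obtain ⟨u, hu⟩ := h3
  refine ⟨u, fun i => ?_⟩
  have := congrArg (fun x : EuclideanSpace ℝ ι => x i) hu
  simpa [Matrix.toLpLin_apply, Matrix.mulVec, dotProduct] using this

theorem step_hyp {ι : Type*} [Fintype ι] (M : Matrix ι ι ℝ) (hsym : ∀ i j, M i j = M j i)
    (hnn : ∀ i j, 0 ≤ M i j) (ω : ι → ℝ) (hω : ∀ i, 0 < ω i)
    (r : ι → ℝ) (hr : ∀ i, r i = ∑ j, M i j * ω j)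
    (hconn : ∀ i j, 0 < r i → 0 < r j → ∃ l, 0 < M i l ∧ 0 < M l j)
    (q : ι → ℝ) (h : ℝ)
    (hpull : ∀ (u : ι → ℝ) (s : ℝ), (∑ i, u i * ∑ j, M i j * u j) + 2 * s * (∑ i, q i * u i) + h * s^2 ≤
      ∑ i, ω i / r i * ((∑ j, M i j * u j) + s * q i)^2) (u : ι → ℝ) (s : ℝ) :
    ((∑ i, u i * ∑ j, M i j * u j) + 2 * s * (∑ i, q i * u i) + h * s^2) * (∑ i, ω i * r i) ≤
      (∑ i, u i * r i + s * ∑ i, q i * ω i)^2 := by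
  have hM := perron_hyp M hsym hnn ω hω r hr hconn (fun u => by simpa using hpull u 0)
  have hbil : ∀ a b : ι → ℝ, ∑ i, a i * ∑ j, M i j * b j = ∑ i, b i * ∑ j, M i j * a j := by
    intro a b
    simp_rw [Finset.mul_sum]
    rw [Finset.sum_comm]
    exact Finset.sum_congr rfl fun i _ => Finset.sum_congr rfl fun j _ => by
      rw [hsym j i]; ring
  obtain ⟨x, hx⟩ := range_of_orth M hsym q (by
    intro z hz
    by_contra hne
    set Q := ∑ i, q i * z i with hQ
    set K := ∑ i, ω i / r i * (q i)^2 with hK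
    have h1 := hpull (fun i => ((K - h + 1) / (2 * Q)) * z i) 1
    have h2 : ∀ i, ∑ j, M i j * (((K - h + 1) / (2 * Q)) * z j) = 0 := by
      intro i
      have : ∀ j, M i j * (((K - h + 1) / (2 * Q)) * z j) = ((K - h + 1) / (2 * Q)) * (M i j * z j) :=
        fun j => by ring
      simp_rw [this, ← Finset.mul_sum, hz, mul_zero]
    have h3 : ∑ i, q i * (((K - h + 1) / (2 * Q)) * z i) = (K - h + 1) / 2 := by
      have : ∀ i, q i * (((K - h + 1) / (2 * Q)) * z i) = ((K - h + 1) / (2 * Q)) * (q i * z i) :=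
        fun i => by ring
      simp_rw [this, ← Finset.mul_sum, ← hQ]; field_simp
    simp only [h2, h3] at h1
    simp only [mul_zero, Finset.sum_const_zero, zero_add, one_mul, one_pow, mul_one, ← hK] at h1
    linarith)
  have h1 := hpull (fun i => - x i) 1
  have e1 : ∀ i, ∑ j, M i j * (- x j) = - q i := by
    intro i; simp only [mul_neg, Finset.sum_neg_distrib, hx]
  simp only [e1] at h1
  have e2 : ∑ i, ω i / r i * (- q i + 1 * q i)^2 = 0 :=
    Finset.sum_eq_zero fun i _ => by ring
  rw [e2] at h1
  have e3 : ∑ i, - x i * - q i = ∑ i, q i * x i :=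
    Finset.sum_congr rfl fun i _ => by ring
  have e4 : ∑ i, q i * - x i = - ∑ i, q i * x i := by
    simp only [mul_neg, Finset.sum_neg_distrib]
  rw [e3, e4] at h1
  have h2 := hM (fun i => u i + s * x i)
  have e5 : ∀ i, ∑ j, M i j * (u j + s * x j) = (∑ j, M i j * u j) + s * q i := by
    intro i
    rw [← hx i, Finset.mul_sum, ← Finset.sum_add_distrib]
    exact Finset.sum_congr rfl fun j _ => by ring
  have hxu : ∑ i, x i * ∑ j, M i j * u j = ∑ i, q i * u i := by
    rw [hbil]; exact Finset.sum_congr rfl fun i _ => by rw [hx]; ring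
  have e6 : ∑ i, (u i + s * x i) * ∑ j, M i j * (u j + s * x j) =
      (∑ i, u i * ∑ j, M i j * u j) + 2 * s * (∑ i, q i * u i) + s^2 * ∑ i, q i * x i := by
    simp_rw [e5]
    have : ∀ i, (u i + s * x i) * (∑ j, M i j * u j + s * q i) =
        u i * (∑ j, M i j * u j) + s * (q i * u i) + s * (x i * ∑ j, M i j * u j)
          + s^2 * (q i * x i) := fun i => by ring
    simp_rw [this, Finset.sum_add_distrib, ← Finset.mul_sum, hxu]
    ring
  have hxr : ∑ i, x i * r i = ∑ i, q i * ω i := by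
    simp_rw [hr]
    rw [hbil]; exact Finset.sum_congr rfl fun i _ => by rw [hx]; ring
  have e7 : ∑ i, (u i + s * x i) * r i = ∑ i, u i * r i + s * ∑ i, q i * ω i := by
    rw [← hxr, Finset.mul_sum, ← Finset.sum_add_distrib]
    exact Finset.sum_congr rfl fun j _ => by ring
  rw [e6, e7] at h2
  refine le_trans ?_ h2
  have hr0 : ∀ i, 0 ≤ r i := fun i => by
    rw [hr]; exact Finset.sum_nonneg fun j _ => mul_nonneg (hnn i j) (hω j).le
  have hR0 : 0 ≤ ∑ i, ω i * r i := Finset.sum_nonneg fun i _ => mul_nonneg (hω i).le (hr0 i)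
  refine mul_le_mul_of_nonneg_right ?_ hR0
  nlinarith [sq_nonneg s, mul_nonneg (sq_nonneg s) (neg_nonneg.2 h1)]

/-- The weight of a multiset, extended by zero outside `J`. -/
def pw (J : Finset (Fin n → ℕ)) (t : ℝ) (a : Fin n → ℕ) : ℝ :=
  if a ∈ J then t ^ (∑ i, Nat.choose (a i) 2) else 0

/-- Weighted sum over words of length `m` that extend `a`. -/
def pG (J : Finset (Fin n → ℕ)) (ω : Fin n → ℝ) (t : ℝ) : ℕ → (Fin n → ℕ) → ℝ
  | 0, a => pw J t a
  | m + 1, a => ∑ i, ω i * pG J ω t m (a + Pi.single i 1)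

theorem sum_add_single (a : Fin n → ℕ) (i : Fin n) :
    ∑ j, (a + Pi.single i 1 : Fin n → ℕ) j = (∑ j, a j) + 1 := by
  simp [Finset.sum_add_distrib]

theorem choose_add_single (a : Fin n → ℕ) (i : Fin n) :
    ∑ j, Nat.choose ((a + Pi.single i 1 : Fin n → ℕ) j) 2 = (∑ j, Nat.choose (a j) 2) + a i := by
  have : ∀ j, Nat.choose ((a + Pi.single i 1 : Fin n → ℕ) j) 2 =
      Nat.choose (a j) 2 + if j = i then a i else 0 := by
    intro j
    by_cases h : j = i
    · subst h
      simp [Nat.choose_succ_succ, add_comm]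
    · simp [h]
  simp_rw [this, Finset.sum_add_distrib]
  simp

section poly
variable (J : Finset (Fin n → ℕ)) (ω : Fin n → ℝ) (t : ℝ)

theorem exists_ext
    (h_exch : ∀ a ∈ J, ∀ b ∈ J, (∑ i, a i) < (∑ i, b i) →
      ∃ i : Fin n, a i < b i ∧ a + Pi.single i 1 ∈ J)
    (a : Fin n → ℕ) (ha : a ∈ J) (hlt : ∑ i, a i < polyRk J) :
    ∃ i, a + Pi.single i 1 ∈ J := by
  unfold polyRk at hlt
  rw [Finset.lt_sup_iff] at hlt
  obtain ⟨b, hb, hab⟩ := hlt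
  obtain ⟨i, _, hi⟩ := h_exch a ha b hb hab
  exact ⟨i, hi⟩

theorem mem_of_add (h_hered : ∀ a ∈ J, ∀ b : Fin n → ℕ, b ≤ a → b ∈ J)
    {a b : Fin n → ℕ} (h : a + b ∈ J) : a ∈ J :=
  h_hered _ h _ (fun i => by simp)

theorem pG_zero (h_hered : ∀ a ∈ J, ∀ b : Fin n → ℕ, b ≤ a → b ∈ J) (m : ℕ) :
    ∀ a, a ∉ J → pG J ω t m a = 0 := by
  induction m with
  | zero => intro a ha; simp [pG, pw, ha]
  | succ m ih =>
    intro a ha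
    simp only [pG]
    refine Finset.sum_eq_zero fun i _ => ?_
    rw [ih _ (fun h => ha (mem_of_add J h_hered h)), mul_zero]

theorem pG_nonneg (hω : ∀ i, 0 < ω i) (ht : 0 < t) (m : ℕ) : ∀ a, 0 ≤ pG J ω t m a := by
  induction m with
  | zero => intro a; simp only [pG, pw]; split_ifs <;> positivity
  | succ m ih =>
    intro a
    simp only [pG]
    exact Finset.sum_nonneg fun i _ => mul_nonneg (hω i).le (ih _)

theorem pG_pos
    (h_exch : ∀ a ∈ J, ∀ b ∈ J, (∑ i, a i) < (∑ i, b i) →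
      ∃ i : Fin n, a i < b i ∧ a + Pi.single i 1 ∈ J)
    (hω : ∀ i, 0 < ω i) (ht : 0 < t) (m : ℕ) :
    ∀ a ∈ J, ∑ i, a i + m ≤ polyRk J → 0 < pG J ω t m a := by
  induction m with
  | zero => intro a ha _; simp only [pG, pw, ha, if_true]; positivity
  | succ m ih =>
    intro a ha hle
    simp only [pG]
    obtain ⟨i, hi⟩ := exists_ext J h_exch a ha (by omega)
    refine Finset.sum_pos' (fun i _ => mul_nonneg (hω i).le (pG_nonneg J ω t hω ht _ _))
      ⟨i, Finset.mem_univ _, mul_pos (hω i) (ih _ hi ?_)⟩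
    rw [sum_add_single]; omega

theorem pG_eq_sum (hω : ∀ i, 0 < ω i) (m : ℕ) : ∀ a, pG J ω t m a = (m.factorial : ℝ) *
    ∑ b ∈ Finset.piAntidiag Finset.univ m, (∏ i, ω i ^ b i / ((b i).factorial : ℝ)) * pw J t (a + b) := by
  induction m with
  | zero => intro a; simp [pG]
  | succ m ih =>
    intro a
    simp only [pG, ih]
    have key : ∀ i, ω i * ∑ b ∈ Finset.piAntidiag Finset.univ m,
        (∏ j, ω j ^ b j / ((b j).factorial : ℝ)) * pw J t (a + Pi.single i 1 + b) =
        ∑ b ∈ Finset.piAntidiag Finset.univ (m+1), (b i : ℝ) *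
          ((∏ j, ω j ^ b j / ((b j).factorial : ℝ)) * pw J t (a + b)) := by
      intro i
      rw [Finset.mul_sum]
      refine Finset.sum_bij_ne_zero (fun b _ _ => b + Pi.single i 1) ?_ ?_ ?_ ?_
      · intro b hb _
        simp only [Finset.mem_piAntidiag] at hb ⊢
        exact ⟨by rw [sum_add_single, hb.1], by simp⟩
      · intro b _ _ b' _ _ h
        exact add_right_cancel h
      · intro b hb hne
        simp only [Finset.mem_piAntidiag] at hb
        have hbi : b i ≠ 0 := by
          intro h; apply hne; rw [h]; simp
        have heq : b - Pi.single i 1 + Pi.single i 1 = b := by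
          ext j
          by_cases h : j = i
          · subst h; simp; omega
          · simp [h]
        refine ⟨b - Pi.single i 1, ?_, ?_, heq⟩
        · simp only [Finset.mem_piAntidiag]
          refine ⟨?_, by simp⟩
          have := sum_add_single (b - Pi.single i 1) i
          rw [heq, hb.1] at this
          change ∑ j, (b - Pi.single i 1 : Fin n → ℕ) j = m
          omega
        · have h2 : a + Pi.single i 1 + (b - Pi.single i 1) = a + b := by
            rw [add_assoc, add_comm (Pi.single i 1), heq]
          rw [h2]
          have hpw : pw J t (a + b) ≠ 0 := fun h => hne (by rw [h]; simp)
          refine mul_ne_zero (hω i).ne' (mul_ne_zero ?_ hpw)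
          refine Finset.prod_ne_zero_iff.2 fun j _ => div_ne_zero (pow_ne_zero _ (hω j).ne') ?_
          exact_mod_cast Nat.factorial_ne_zero _
      · intro b _ _
        have h2 : a + Pi.single i 1 + b = a + (b + Pi.single i 1) := by
          rw [add_assoc, add_comm (Pi.single i 1)]
        rw [h2]
        have h3 : ∏ j, ω j ^ (b + Pi.single i 1 : Fin n → ℕ) j / (((b + Pi.single i 1 : Fin n → ℕ) j).factorial : ℝ) =
            (∏ j, ω j ^ b j / ((b j).factorial : ℝ)) * (ω i / (b i + 1)) := by
          rw [← Finset.mul_prod_erase _ _ (Finset.mem_univ i),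
            ← Finset.mul_prod_erase (a := i) Finset.univ
              (fun j => ω j ^ b j / ((b j).factorial : ℝ)) (Finset.mem_univ i)]
          have : ∏ j ∈ Finset.univ.erase i, ω j ^ (b + Pi.single i 1 : Fin n → ℕ) j / (((b + Pi.single i 1 : Fin n → ℕ) j).factorial : ℝ)
              = ∏ j ∈ Finset.univ.erase i, ω j ^ b j / ((b j).factorial : ℝ) := by
            refine Finset.prod_congr rfl fun j hj => ?_
            have := Finset.ne_of_mem_erase hj
            simp [this]
          rw [this]
          simp [Nat.factorial_succ, pow_succ]
          field_simp
        rw [h3]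
        simp
        field_simp
    have : ∀ i, ω i * ((m.factorial : ℝ) * ∑ b ∈ Finset.piAntidiag Finset.univ m,
        (∏ j, ω j ^ b j / ((b j).factorial : ℝ)) * pw J t (a + Pi.single i 1 + b)) =
        (m.factorial : ℝ) * ∑ b ∈ Finset.piAntidiag Finset.univ (m+1), (b i : ℝ) *
          ((∏ j, ω j ^ b j / ((b j).factorial : ℝ)) * pw J t (a + b)) := by
      intro i; rw [← key]; ring
    simp_rw [this, ← Finset.mul_sum]
    rw [Finset.sum_comm, Nat.factorial_succ]
    push_cast
    rw [mul_comm ((m:ℝ)+1), mul_assoc]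
    congr 1
    rw [Finset.mul_sum]
    refine Finset.sum_congr rfl fun b hb => ?_
    rw [← Finset.sum_mul]
    congr 1
    simp only [Finset.mem_piAntidiag] at hb
    exact_mod_cast hb.1

theorem pG_origin (hω : ∀ i, 0 < ω i) (m : ℕ) : pG J ω t m 0 = (m.factorial : ℝ) * Jwt J ω t m := by
  rw [pG_eq_sum J ω t hω]
  congr 1
  unfold Jwt polySize
  simp only [zero_add, pw, mul_ite, mul_zero]
  rw [← Finset.sum_filter]
  refine Finset.sum_congr ?_ ?_
  · ext b; simp [Finset.mem_piAntidiag, and_comm]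
  · intro b _
    rw [Finset.prod_div_distrib]; ring

theorem sum_same_class {ι κ : Type*} [DecidableEq κ] (C : Finset ι) (g : ι → κ) (z : ι → ℝ) :
    ∑ i ∈ C, ∑ j ∈ C, (if g i = g j then z i * z j else 0) =
      ∑ P ∈ C.image g, (∑ i ∈ C with g i = P, z i)^2 := by
  have h1 : ∀ P, (∑ i ∈ C with g i = P, z i)^2 =
      ∑ i ∈ C with g i = P, ∑ j ∈ C, (if g i = g j then z i * z j else 0) := by
    intro P
    rw [sq, Finset.sum_mul]
    refine Finset.sum_congr rfl fun i hi => ?_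
    rw [Finset.mul_sum, ← Finset.sum_filter]
    have := (Finset.mem_filter.1 hi).2
    subst this
    refine Finset.sum_congr ?_ fun _ _ => rfl
    ext j; simp [eq_comm]
  simp_rw [h1]
  rw [Finset.sum_fiberwise_of_maps_to (fun i hi => Finset.mem_image_of_mem g hi)]

/-- The quadratic form attached to `b`. -/
def pH (c : ℝ) (m : ℕ) (b : Fin n → ℕ) (u : Fin n → ℝ) (s : ℝ) : ℝ :=
  (∑ i, u i * ∑ j, pG J ω t m (b + Pi.single i 1 + Pi.single j 1) * u j) +
    2 * s * (∑ i, pG J ω t m (b + Pi.single i 1) * u i) + c * pG J ω t m b * s^2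

theorem par_trans
    (h_exch : ∀ a ∈ J, ∀ b ∈ J, (∑ i, a i) < (∑ i, b i) →
      ∃ i : Fin n, a i < b i ∧ a + Pi.single i 1 ∈ J)
    (b : Fin n → ℕ) (i j l : Fin n) (hj : b + Pi.single j 1 ∈ J)
    (hij : b + Pi.single i 1 + Pi.single j 1 ∉ J) (hil : b + Pi.single i 1 + Pi.single l 1 ∈ J) :
    b + Pi.single j 1 + Pi.single l 1 ∈ J := by
  obtain ⟨x, hx1, hx2⟩ := h_exch _ hj _ hil (by simp only [sum_add_single]; omega)
  have : x = i ∨ x = l := by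
    by_contra hc
    push Not at hc
    simp [hc.1, hc.2] at hx1
  rcases this with rfl | rfl
  · exact absurd (by rwa [add_right_comm] at hx2) hij
  · exact hx2

theorem base_ineq
    (h_hered : ∀ a ∈ J, ∀ b : Fin n → ℕ, b ≤ a → b ∈ J)
    (h_exch : ∀ a ∈ J, ∀ b ∈ J, (∑ i, a i) < (∑ i, b i) →
      ∃ i : Fin n, a i < b i ∧ a + Pi.single i 1 ∈ J)
    (ht : 0 < t) (ht1 : t ≤ 1) (b : Fin n → ℕ) (u : Fin n → ℝ) (p : ℕ)
    (hp : (pParClasses J b).card ≤ p) (hp0 : 0 < p) :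
    p * (∑ i, u i * ∑ j, pw J t (b + Pi.single i 1 + Pi.single j 1) * u j) * pw J t b ≤
    ((p : ℝ) - 1 + t) * (∑ i, pw J t (b + Pi.single i 1) * u i)^2 := by
  by_cases hb : b ∈ J
  swap
  · have : pw J t b = 0 := by simp [pw, hb]
    rw [this, mul_zero]
    have : (1:ℝ) ≤ p := by exact_mod_cast hp0
    exact mul_nonneg (by linarith) (sq_nonneg _)
  set C := pCont J b with hC
  have hmC : ∀ i, i ∈ C ↔ b + Pi.single i 1 ∈ J := by intro i; simp [hC, pCont]
  set z : Fin n → ℝ := fun i => t ^ (b i) * u i with hz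
  have hwb : pw J t b = t ^ (∑ i, Nat.choose (b i) 2) := by simp [pw, hb]
  set W := pw J t b with hW
  have h1 : ∑ i, pw J t (b + Pi.single i 1) * u i = W * ∑ i ∈ C, z i := by
    rw [Finset.mul_sum, ← Finset.sum_subset (Finset.subset_univ C)]
    · refine Finset.sum_congr rfl fun i hi => ?_
      rw [pw, if_pos ((hmC i).1 hi), choose_add_single, pow_add, hwb]; ring
    · intro i _ hi
      rw [pw, if_neg (fun h => hi ((hmC i).2 h)), zero_mul]
  set N : Fin n → Fin n → ℝ := fun i j =>
    if b + Pi.single i 1 + Pi.single j 1 ∈ J then (if i = j then t else 1) else 0 with hN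
  have h2 : ∑ i, u i * ∑ j, pw J t (b + Pi.single i 1 + Pi.single j 1) * u j =
      W * ∑ i ∈ C, ∑ j ∈ C, N i j * (z i * z j) := by
    rw [Finset.mul_sum, ← Finset.sum_subset (Finset.subset_univ C)]
    · refine Finset.sum_congr rfl fun i hi => ?_
      rw [Finset.mul_sum, Finset.mul_sum, ← Finset.sum_subset (Finset.subset_univ C)]
      · refine Finset.sum_congr rfl fun j hj => ?_
        simp only [hN, pw, hz]
        split_ifs with h h'
        · subst h'
          rw [choose_add_single, choose_add_single, pow_add, pow_add, hwb]
          simp only [Pi.add_apply, Pi.single_eq_same, pow_succ]; ring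
        · rw [choose_add_single, choose_add_single, pow_add, pow_add, hwb]
          have : (b + Pi.single i 1 : Fin n → ℕ) j = b j := by simp [Ne.symm h']
          rw [this]; ring
        · simp
      · intro j _ hj
        rw [pw, if_neg]
        · simp
        · intro h
          rw [add_right_comm] at h
          exact hj ((hmC j).2 (mem_of_add J h_hered h))
    · intro i _ hi
      rw [Finset.sum_eq_zero, mul_zero]
      intro j _
      rw [pw, if_neg, zero_mul]
      exact fun h => hi ((hmC i).2 (mem_of_add J h_hered h))
  set S := ∑ i ∈ C, z i with hS
  set g := pParClass J b with hg
  have hgi : ∀ i ∈ C, ∀ j ∈ C, (g i = g j ↔ (i = j ∨ b + Pi.single i 1 + Pi.single j 1 ∉ J)) := by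
    intro i hi j hj
    constructor
    · intro h
      have : j ∈ g i := by
        rw [h]; simp only [hg, pParClass, Finset.mem_filter]; exact ⟨hj, by simp⟩
      simp only [hg, pParClass, Finset.mem_filter] at this
      rcases this.2 with h | h
      · exact Or.inl h.symm
      · exact Or.inr h
    · rintro (h | h)
      · rw [h]
      · have h' : b + Pi.single j 1 + Pi.single i 1 ∉ J := by rwa [add_right_comm]
        by_cases hij : i = j
        · rw [hij]
        ext l
        simp only [hg, pParClass, Finset.mem_filter]
        refine and_congr_right fun hl => ?_
        have a1 := par_trans J h_exch b i j l ((hmC j).1 hj) h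
        have a2 := par_trans J h_exch b j i l ((hmC i).1 hi) h'
        constructor
        · rintro (rfl | h3)
          · exact Or.inr h'
          · exact Or.inr fun h4 => h3 (a2 h4)
        · rintro (rfl | h3)
          · exact Or.inr h
          · exact Or.inr fun h4 => h3 (a1 h4)
  -- non-doublable elements
  set y : Fin n → ℝ := fun i => if b + Pi.single i 1 + Pi.single i 1 ∈ J then 0 else z i with hy
  have h3 : ∀ i ∈ C, ∀ j ∈ C, N i j * (z i * z j) = z i * z j -
      (1 - t) * (if g i = g j then z i * z j else 0) - t * (if g i = g j then y i * y j else 0) := by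
    intro i hi j hj
    rw [if_congr (hgi i hi j hj) rfl rfl, if_congr (hgi i hi j hj) rfl rfl]
    by_cases hij : i = j
    · subst hij
      simp only [hN, hy, true_or, if_true]
      split_ifs <;> ring
    · by_cases hJ : b + Pi.single i 1 + Pi.single j 1 ∈ J
      · simp [hN, hij, hJ]
      · have k1 : b + Pi.single i 1 + Pi.single i 1 ∉ J := fun h => by
          have := par_trans J h_exch b i j i ((hmC j).1 hj) hJ h
          rw [add_right_comm] at this
          exact hJ this
        have k2 : b + Pi.single j 1 + Pi.single j 1 ∉ J := fun h => by
          have := par_trans J h_exch b j i j ((hmC i).1 hi) (by rwa [add_right_comm]) h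
          exact hJ this
        simp [hN, hy, hij, hJ, k1, k2]
        ring
  have h4 : ∑ i ∈ C, ∑ j ∈ C, N i j * (z i * z j) = S^2 -
      (1-t) * ∑ P ∈ C.image g, (∑ i ∈ C with g i = P, z i)^2 -
      t * ∑ P ∈ C.image g, (∑ i ∈ C with g i = P, y i)^2 := by
    rw [← sum_same_class, ← sum_same_class, sq, hS, Finset.sum_mul_sum]
    simp only [Finset.mul_sum, ← Finset.sum_sub_distrib]
    exact Finset.sum_congr rfl fun i hi => Finset.sum_congr rfl fun j hj => h3 i hi j hj
  have h5 : S^2 ≤ p * ∑ P ∈ C.image g, (∑ i ∈ C with g i = P, z i)^2 := by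
    have e : S = ∑ P ∈ C.image g, ∑ i ∈ C with g i = P, z i := by
      rw [Finset.sum_fiberwise_of_maps_to (fun i hi => Finset.mem_image_of_mem g hi)]
    rw [e]
    refine le_trans sq_sum_le_card_mul_sum_sq ?_
    have : ((C.image g).card : ℝ) ≤ p := by exact_mod_cast hp
    exact mul_le_mul_of_nonneg_right this (Finset.sum_nonneg fun _ _ => sq_nonneg _)
  have h6 : 0 ≤ ∑ P ∈ C.image g, (∑ i ∈ C with g i = P, y i)^2 :=
    Finset.sum_nonneg fun _ _ => sq_nonneg _
  rw [h1, h2, h4]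
  set X := ∑ P ∈ C.image g, (∑ i ∈ C with g i = P, z i)^2
  set Y := ∑ P ∈ C.image g, (∑ i ∈ C with g i = P, y i)^2
  have h7 : p * (S^2 - (1-t) * X - t * Y) ≤ ((p:ℝ) - 1 + t) * S^2 := by
    have q1 : (1 - t) * S^2 ≤ (1-t) * (p * X) := mul_le_mul_of_nonneg_left h5 (by linarith)
    have q2 : 0 ≤ (p:ℝ) * (t * Y) := by positivity
    nlinarith
  calc _ = W^2 * (p * (S^2 - (1-t) * X - t * Y)) := by ring
    _ ≤ W^2 * (((p:ℝ) - 1 + t) * S^2) := mul_le_mul_of_nonneg_left h7 (sq_nonneg _)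
    _ = _ := by ring

theorem base_hyp
    (h_hered : ∀ a ∈ J, ∀ b : Fin n → ℕ, b ≤ a → b ∈ J)
    (h_exch : ∀ a ∈ J, ∀ b ∈ J, (∑ i, a i) < (∑ i, b i) →
      ∃ i : Fin n, a i < b i ∧ a + Pi.single i 1 ∈ J)
    (hω : ∀ i, 0 < ω i)
    (ht : 0 < t) (ht1 : t ≤ 1) (p : ℕ) (hp0 : 0 < p) (b : Fin n → ℕ)
    (hp : (pParClasses J b).card ≤ p) (hb : ∑ i, b i < polyRk J)
    (u : Fin n → ℝ) (s : ℝ) :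
    pH J ω t (p / ((p : ℝ) - 1 + t)) 0 b u s * pG J ω t 2 b ≤
      (∑ i, u i * pG J ω t 1 (b + Pi.single i 1) + s * pG J ω t 1 b)^2 := by
  by_cases hbJ : b ∈ J
  swap
  · rw [pG_zero J ω t h_hered 2 b hbJ, mul_zero]; positivity
  have hp1 : (1:ℝ) ≤ p := by exact_mod_cast hp0
  have hd : 0 < (p : ℝ) - 1 + t := by linarith
  set c : ℝ := p / ((p : ℝ) - 1 + t) with hc
  have hcpos : 0 < c := by positivity
  have hW : 0 < pw J t b := by simp only [pw, hbJ, if_true]; positivity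
  have hneg : ∀ (u : Fin n → ℝ) (s : ℝ),
      c * pw J t b * s + ∑ i, pw J t (b + Pi.single i 1) * u i = 0 → pH J ω t c 0 b u s ≤ 0 := by
    intro u s h
    have h1 := base_ineq J t h_hered h_exch ht ht1 b u p hp hp0
    simp only [pH, pG]
    set A := ∑ i, u i * ∑ j, pw J t (b + Pi.single i 1 + Pi.single j 1) * u j
    set S := ∑ i, pw J t (b + Pi.single i 1) * u i
    have hS : S = - (c * pw J t b * s) := by linarith
    have h2 : c * A * pw J t b ≤ S^2 := by
      rw [hc, div_mul_eq_mul_div, div_mul_eq_mul_div, div_le_iff₀ hd]; linarith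
    rw [hS] at h2 ⊢
    have h3 : (c * pw J t b) * A ≤ (c * pw J t b) * (c * pw J t b * s^2) := by
      calc _ = c * A * pw J t b := by ring
        _ ≤ _ := h2
        _ = _ := by ring
    have h4 := le_of_mul_le_mul_left h3 (by positivity)
    nlinarith
  have hG1 : 0 < pG J ω t 1 b := pG_pos J ω t h_exch hω ht 1 b hbJ hb
  have hG1e : pG J ω t 1 b = ∑ i, pw J t (b + Pi.single i 1) * ω i := by
    simp only [pG]; exact Finset.sum_congr rfl fun i _ => by ring
  set l := (c * pw J t b * s + ∑ i, pw J t (b + Pi.single i 1) * u i) / pG J ω t 1 b with hl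
  refine aux_quad (l := l) (pG_nonneg J ω t hω ht 2 b) ?_
  have h1 := hneg (fun i => u i - l * ω i) s (by
    have : ∑ i, pw J t (b + Pi.single i 1) * (u i - l * ω i) =
        ∑ i, pw J t (b + Pi.single i 1) * u i - l * pG J ω t 1 b := by
      rw [hG1e, Finset.mul_sum, ← Finset.sum_sub_distrib]
      exact Finset.sum_congr rfl fun i _ => by ring
    rw [this, hl]; field_simp; ring)
  refine le_trans (le_of_eq ?_) h1
  simp only [pH]
  have hlin : ∑ i, pG J ω t 0 (b + Pi.single i 1) * (u i - l * ω i) =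
      ∑ i, pG J ω t 0 (b + Pi.single i 1) * u i - l * pG J ω t 1 b := by
    rw [hG1e, Finset.mul_sum, ← Finset.sum_sub_distrib]
    exact Finset.sum_congr rfl fun i _ => by simp only [pG]; ring
  have hin : ∀ i, ∑ j, pG J ω t 0 (b + Pi.single i 1 + Pi.single j 1) * (u j - l * ω j) =
      ∑ j, pG J ω t 0 (b + Pi.single i 1 + Pi.single j 1) * u j - l * pG J ω t 1 (b + Pi.single i 1) := by
    intro i
    rw [pG, Finset.mul_sum, ← Finset.sum_sub_distrib]
    exact Finset.sum_congr rfl fun i _ => by ring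
  have hsw : ∑ i, ω i * ∑ j, pG J ω t 0 (b + Pi.single i 1 + Pi.single j 1) * u j =
      ∑ i, u i * pG J ω t 1 (b + Pi.single i 1) := by
    simp only [pG, Finset.mul_sum]
    rw [Finset.sum_comm]
    exact Finset.sum_congr rfl fun i _ => Finset.sum_congr rfl fun j _ => by
      rw [add_right_comm]; ring
  have hquad : ∑ i, (u i - l * ω i) *
        ∑ j, pG J ω t 0 (b + Pi.single i 1 + Pi.single j 1) * (u j - l * ω j) =
      (∑ i, u i * ∑ j, pG J ω t 0 (b + Pi.single i 1 + Pi.single j 1) * u j) -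
        2 * l * (∑ i, u i * pG J ω t 1 (b + Pi.single i 1)) + l^2 * pG J ω t 2 b := by
    simp_rw [hin]
    have : ∀ i, (u i - l * ω i) *
      (∑ j, pG J ω t 0 (b + Pi.single i 1 + Pi.single j 1) * u j - l * pG J ω t 1 (b + Pi.single i 1)) =
      u i * (∑ j, pG J ω t 0 (b + Pi.single i 1 + Pi.single j 1) * u j)
      - l * (u i * pG J ω t 1 (b + Pi.single i 1))
      - l * (ω i * ∑ j, pG J ω t 0 (b + Pi.single i 1 + Pi.single j 1) * u j)
      + l^2 * (ω i * pG J ω t 1 (b + Pi.single i 1)) := fun i => by ring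
    simp_rw [this, Finset.sum_add_distrib, Finset.sum_sub_distrib, ← Finset.mul_sum, hsw]
    rw [show pG J ω t 2 b = ∑ i, ω i * pG J ω t 1 (b + Pi.single i 1) from rfl]
    ring
  rw [hlin, hquad]
  ring

theorem main_hyp
    (h_hered : ∀ a ∈ J, ∀ b : Fin n → ℕ, b ≤ a → b ∈ J)
    (h_exch : ∀ a ∈ J, ∀ b ∈ J, (∑ i, a i) < (∑ i, b i) →
      ∃ i : Fin n, a i < b i ∧ a + Pi.single i 1 ∈ J)
    (hω : ∀ i, 0 < ω i)
    (ht : 0 < t) (ht1 : t ≤ 1) (K : ℕ) (hK : K + 2 ≤ polyRk J)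
    (p : ℕ) (hp0 : 0 < p) (hp : ∀ b ∈ polySize J K, (pParClasses J b).card ≤ p) (m : ℕ) :
    ∀ (b : Fin n → ℕ) (_ : ∑ i, b i + m = K) (u : Fin n → ℝ) (s : ℝ),
    pH J ω t (p / ((p : ℝ) - 1 + t)) m b u s * pG J ω t (m + 2) b ≤
      (∑ i, u i * pG J ω t (m + 1) (b + Pi.single i 1) + s * pG J ω t (m + 1) b)^2 := by
  induction m with
  | zero =>
    intro b hb u s
    by_cases hbJ : b ∈ J
    · exact base_hyp J ω t h_hered h_exch hω ht ht1 p hp0 b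
        (hp b (by simp only [polySize, Finset.mem_filter]; exact ⟨hbJ, by omega⟩)) (by omega) u s
    · rw [pG_zero J ω t h_hered _ b hbJ, mul_zero]; positivity
  | succ m ih =>
    intro b hb u s
    by_cases hbJ : b ∈ J
    swap
    · rw [pG_zero J ω t h_hered _ b hbJ, mul_zero]; positivity
    set c : ℝ := p / ((p : ℝ) - 1 + t) with hc
    have hpos := pG_pos J ω t h_exch hω ht
    have hstep := step_hyp
      (Matrix.of fun i j => pG J ω t (m+1) (b + Pi.single i 1 + Pi.single j 1))
      (fun i j => by simp only [Matrix.of_apply]; rw [add_right_comm])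
      (fun i j => pG_nonneg J ω t hω ht _ _) ω hω
      (fun i => pG J ω t (m+2) (b + Pi.single i 1))
      (fun i => by
        simp only [Matrix.of_apply]; rw [pG]
        exact Finset.sum_congr rfl fun i _ => by ring)
      (by
        intro i j hi hj
        simp only [Matrix.of_apply]
        have hiJ : b + Pi.single i 1 ∈ J := by
          by_contra h; rw [pG_zero J ω t h_hered _ _ h] at hi; exact lt_irrefl _ hi
        have hjJ : b + Pi.single j 1 ∈ J := by
          by_contra h; rw [pG_zero J ω t h_hered _ _ h] at hj; exact lt_irrefl _ hj
        have hl : ∃ l, b + Pi.single i 1 + Pi.single l 1 ∈ J ∧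
            b + Pi.single j 1 + Pi.single l 1 ∈ J := by
          by_cases hij : b + Pi.single i 1 + Pi.single j 1 ∈ J
          · obtain ⟨l, hl⟩ := exists_ext J h_exch _ hij (by simp only [sum_add_single]; omega)
            refine ⟨l, ?_, ?_⟩
            · rw [add_right_comm] at hl; exact mem_of_add J h_hered hl
            · rw [add_right_comm b, add_right_comm] at hl; exact mem_of_add J h_hered hl
          · obtain ⟨l, hl⟩ := exists_ext J h_exch _ hiJ (by simp only [sum_add_single]; omega)
            exact ⟨l, hl, par_trans J h_exch b i j l hjJ hij hl⟩
        obtain ⟨l, h1, h2⟩ := hl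
        refine ⟨l, hpos _ _ h1 (by simp only [sum_add_single]; omega), ?_⟩
        rw [add_right_comm]
        exact hpos _ _ h2 (by simp only [sum_add_single]; omega))
      (fun i => pG J ω t (m+1) (b + Pi.single i 1))
      (c * pG J ω t (m+1) b)
      (by
        intro u s
        simp only [Matrix.of_apply]
        have hsum : (∑ i, u i * ∑ j, pG J ω t (m+1) (b + Pi.single i 1 + Pi.single j 1) * u j) +
            2 * s * (∑ i, pG J ω t (m+1) (b + Pi.single i 1) * u i) + c * pG J ω t (m+1) b * s^2 =
            ∑ l, ω l * pH J ω t c m (b + Pi.single l 1) u s := by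
          simp only [pH, pG, mul_add, Finset.sum_add_distrib]
          congr 1
          · congr 1
            · simp only [Finset.mul_sum, Finset.sum_mul]
              rw [Finset.sum_comm_cycle]
              refine Finset.sum_congr rfl fun l _ => Finset.sum_congr rfl fun i _ =>
                Finset.sum_congr rfl fun j _ => ?_
              rw [add_right_comm (b + Pi.single i 1) (Pi.single j 1), add_right_comm b (Pi.single i 1)]
              ring
            · simp only [Finset.mul_sum, Finset.sum_mul]
              rw [Finset.sum_comm]
              refine Finset.sum_congr rfl fun l _ => Finset.sum_congr rfl fun i _ => ?_
              rw [add_right_comm b (Pi.single l 1)]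
              ring
          · simp only [Finset.mul_sum, Finset.sum_mul]
            exact Finset.sum_congr rfl fun l _ => by ring
        rw [hsum]
        refine Finset.sum_le_sum fun l _ => ?_
        by_cases hl : b + Pi.single l 1 ∈ J
        · have hr := hpos (m+2) _ hl (by simp only [sum_add_single]; omega)
          have h1 := ih (b + Pi.single l 1) (by rw [sum_add_single]; omega) u s
          have h2 : ∑ i, u i * pG J ω t (m + 1) (b + Pi.single l 1 + Pi.single i 1) =
              ∑ j, pG J ω t (m + 1) (b + Pi.single l 1 + Pi.single j 1) * u j :=
            Finset.sum_congr rfl fun i _ => by ring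
          rw [h2, ← le_div_iff₀ hr] at h1
          rw [div_mul_eq_mul_div, mul_div_assoc]
          exact mul_le_mul_of_nonneg_left h1 (hω l).le
        · have hz := fun m x => pG_zero J ω t h_hered m (b + Pi.single l 1 + x)
            (fun h => hl (mem_of_add J h_hered h))
          have hz0 := fun m => pG_zero J ω t h_hered m (b + Pi.single l 1) hl
          simp only [pH, add_assoc] at hz hz0 ⊢
          simp only [add_assoc, hz, hz0]
          simp)
      u s
    simp only [Matrix.of_apply] at hstep
    have e1 : ∑ i, ω i * pG J ω t (m + 2) (b + Pi.single i 1) = pG J ω t (m + 1 + 2) b := rfl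
    have e2 : ∑ i, pG J ω t (m + 1) (b + Pi.single i 1) * ω i = pG J ω t (m + 1 + 1) b := by
      rw [pG]; exact Finset.sum_congr rfl fun i _ => by ring
    rw [e1, e2] at hstep
    exact hstep

theorem pos_case
    (h_hered : ∀ a ∈ J, ∀ b : Fin n → ℕ, b ≤ a → b ∈ J)
    (h_exch : ∀ a ∈ J, ∀ b ∈ J, (∑ i, a i) < (∑ i, b i) →
      ∃ i : Fin n, a i < b i ∧ a + Pi.single i 1 ∈ J)
    (hω : ∀ i, 0 < ω i) (ht : 0 < t) (ht1 : t ≤ 1)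
    (K : ℕ) (hK : K + 2 ≤ polyRk J) (hp0 : 0 < pContNum J K) :
    ((1 : ℝ) + 1 / ((K + 1 : ℕ) : ℝ)) *
        (1 + (1 - t) / ((pContNum J K : ℝ) - 1 + t)) *
        Jwt J ω t K * Jwt J ω t (K + 2) ≤ (Jwt J ω t (K + 1)) ^ 2 := by
  have h := main_hyp J ω t h_hered h_exch hω ht ht1 K hK (pContNum J K) hp0
    (fun b hb => Finset.le_sup (f := fun a => (pParClasses J a).card) hb) K 0 (by simp)
    (fun _ => 0) 1
  have hp1 : (1:ℝ) ≤ pContNum J K := by exact_mod_cast hp0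
  have hd : 0 < (pContNum J K : ℝ) - 1 + t := by linarith
  simp only [pH, zero_mul, mul_zero, Finset.sum_const_zero, one_pow, mul_one, zero_add, one_mul,
    pG_origin J ω t hω] at h
  have e : 1 + (1 - t) / ((pContNum J K : ℝ) - 1 + t) =
      pContNum J K / ((pContNum J K : ℝ) - 1 + t) := by
    field_simp; ring
  rw [e]
  set c := (pContNum J K : ℝ) / ((pContNum J K : ℝ) - 1 + t)
  have f1 : ((K+1).factorial : ℝ) = (K+1) * K.factorial := by
    rw [Nat.factorial_succ]; push_cast; ring
  have f2 : ((K+2).factorial : ℝ) = (K+2) * ((K+1) * K.factorial) := by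
    rw [Nat.factorial_succ, Nat.cast_mul, f1]; push_cast; ring
  rw [f1, f2] at h
  have hf : (0:ℝ) < (((K:ℝ)+1) * K.factorial)^2 := by positivity
  refine le_of_mul_le_mul_left ?_ hf
  have hk : ((K:ℝ)+1) ≠ 0 := by positivity
  calc _ = c * (K.factorial * Jwt J ω t K) * ((K+2) * ((K+1) * K.factorial) * Jwt J ω t (K+2)) := by
        push_cast; field_simp; ring
    _ ≤ _ := h
    _ = _ := by ring

end poly

/-- **Refined log-concavity for discrete polymatroids.** -/
theorem polymatroid_refined_log_concavity
    (J : Finset (Fin n → ℕ)) (h_ne : J.Nonempty)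
    (h_hered : ∀ a ∈ J, ∀ b : Fin n → ℕ, b ≤ a → b ∈ J)
    (h_exch : ∀ a ∈ J, ∀ b ∈ J, (∑ i, a i) < (∑ i, b i) →
      ∃ i : Fin n, a i < b i ∧ a + Pi.single i 1 ∈ J)
    (ω : Fin n → ℝ) (hω : ∀ i, 0 < ω i)
    (t : ℝ) (ht0 : 0 ≤ t) (ht1 : t ≤ 1)
    (k : ℕ) (hk1 : 1 ≤ k) (hk2 : k < polyRk J)
    (hpt : 0 < (pContNum J (k - 1) : ℝ) - 1 + t) :
    ((1 : ℝ) + 1 / (k : ℝ)) *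
        (1 + (1 - t) / ((pContNum J (k - 1) : ℝ) - 1 + t)) *
        Jwt J ω t (k - 1) * Jwt J ω t (k + 1) ≤
      (Jwt J ω t k) ^ 2 := by
  obtain ⟨K, rfl⟩ : ∃ K, k = K + 1 := ⟨k - 1, by omega⟩
  simp only [Nat.add_sub_cancel] at hpt ⊢
  have hp0 : 0 < pContNum J K := by
    by_contra h
    have : pContNum J K = 0 := by omega
    rw [this] at hpt
    norm_num at hpt
    linarith
  have main : ∀ t : ℝ, 0 < t → t ≤ 1 → _ := fun t ht ht1 =>
    pos_case J ω t h_hered h_exch hω ht ht1 K (by omega) hp0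
  rcases ht0.eq_or_lt with h0 | h0
  swap
  · exact main t h0 ht1
  subst h0
  have hJ : ∀ m, Continuous fun t : ℝ => Jwt J ω t m := by
    intro m; unfold Jwt; fun_prop
  have hc : ContinuousAt (fun t : ℝ => ((1 : ℝ) + 1 / ((K + 1 : ℕ) : ℝ)) *
        (1 + (1 - t) / ((pContNum J K : ℝ) - 1 + t)) *
        Jwt J ω t K * Jwt J ω t (K + 2)) 0 := by
    have h1 : ContinuousAt (fun t : ℝ => (1 - t) / ((pContNum J K : ℝ) - 1 + t)) 0 :=
      ContinuousAt.div (by fun_prop) (by fun_prop) hpt.ne'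
    exact ((continuousAt_const.mul (continuousAt_const.add h1)).mul (hJ K).continuousAt).mul
      (hJ (K+2)).continuousAt
  have hc2 : ContinuousAt (fun t : ℝ => (Jwt J ω t (K + 1)) ^ 2) 0 :=
    ((hJ (K+1)).pow 2).continuousAt
  refine le_of_tendsto_of_tendsto (b := nhdsWithin (0:ℝ) (Set.Ioi 0))
    (hc.tendsto.mono_left nhdsWithin_le_nhds) (hc2.tendsto.mono_left nhdsWithin_le_nhds) ?_
  filter_upwards [Ioc_mem_nhdsGT (zero_lt_one' ℝ)] with t ht
  exact main t ht.1 ht.2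
end
end
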